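/- arXiv:2211.00965 — 8 statements merged into one kernel-verified Lean document; each statement's English description precedes it below -/
import Mathlib

section
/- Let ρ, M, M̃ be as in the model context and let T be the unique contraction on L²(ρ) with T∘M = M̃. Then: (a) if J is a self-adjoint unitary operator on L²(ρ) commuting with M, the operator T∘J is asymptotically stable; (b) if J̃ is a self-adjoint unitary operator on L²(ρ) commuting with M̃, the operator J̃∘T is asymptotically stable. (This corresponds to spectral data with real-valued unimodular functions Ψ, Ψ̃, one of which is identically 1, i.e. to self-adjoint Hankel operators Γ, Γ̃ one of which is positive semi-definite.) -/
open MeasureTheory Filter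
open scoped InnerProductSpace ENNReal

/-!
Since `T∘M = M̃` and `M̃² = M² - ⟨·, 𝟙⟩𝟙`, the operator `T` is a contraction with
`‖T x‖² = ‖x‖² - |⟨p, x⟩|²`, where `p = M⁻¹𝟙` is the function `s⁻¹`. In both cases the operator
`A` in question (`A = T∘J` or `A = J̃∘T`) satisfies `A P = P A*` for a positive operator `P`
(`P = M̃`, respectively `P = M`), i.e. `A*` is symmetric for the semi-inner product `⟨P ·, ·⟩`. Then
the Gram matrix of the orbit `P^{1/2} A*ⁿ x` depends only on the sum of the indices, so its squared
norms form a bounded convex, hence decreasing, sequence, and the even terms of the orbit converge.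
Consequently `A²ⁿ P x` converges to a fixed point of `A²`. Such a fixed point `y` is also fixed by
`A*²`; the relation `A K = K A*` for a self-adjoint `K` with `K² = M²` propagates this to all
`Kⁿ y`, where no norm is lost, so that `y` (or `J y`) is orthogonal to all `M²ⁿ p`.
By the Weierstrass theorem only `0` is.
-/

open scoped Topology

section ConvexSequence

lemma antitone_of_convex_of_bddAbove {b : ℕ → ℝ}
    (hconv : ∀ n, 2 * b (n + 1) ≤ b n + b (n + 2)) (hbdd : BddAbove (Set.range b)) :
    Antitone b := by
  have increment_mono : Monotone fun n => b (n + 1) - b n :=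
    monotone_nat_of_le_succ fun n => by linarith [hconv n]
  refine antitone_nat_of_succ_le fun n => ?_
  by_contra! hlt
  have linear_growth (k : ℕ) : b n + k * (b (n + 1) - b n) ≤ b (n + k) := by
    induction k with
    | zero => simp
    | succ k ih =>
      have hincr := increment_mono (Nat.le_add_right n k)
      push_cast
      simp only [← add_assoc] at hincr ⊢
      linarith
  obtain ⟨B, hB⟩ := hbdd
  obtain ⟨k, hk⟩ := exists_nat_gt ((B - b n) / (b (n + 1) - b n))
  rw [div_lt_iff₀ (sub_pos.2 hlt)] at hk
  linarith [linear_growth k, hB ⟨n + k, rfl⟩]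

end ConvexSequence

section HankelGram

variable {𝕜 E : Type*} [RCLike 𝕜] [NormedAddCommGroup E] [InnerProductSpace 𝕜 E]

variable (𝕜) in
/-- The Gram matrix `⟪u m, u n⟫` of the sequence `u` is a Hankel matrix, i.e. it depends only on
`m + n`. The orbits of a symmetric operator are the model case. -/
def IsHankelGram (u : ℕ → E) : Prop :=
  ∀ m n, ⟪u (m + 1), u n⟫_𝕜 = ⟪u m, u (n + 1)⟫_𝕜

namespace IsHankelGram

variable {u : ℕ → E}

lemma inner_add_left (hu : IsHankelGram 𝕜 u) (m n k : ℕ) :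
    ⟪u (m + k), u n⟫_𝕜 = ⟪u m, u (n + k)⟫_𝕜 := by
  induction k generalizing n with
  | zero => rfl
  | succ k ih => rw [← add_assoc, hu, ih, add_right_comm, add_assoc]

lemma norm_sub_sq (hu : IsHankelGram 𝕜 u) (n m : ℕ) :
    ‖u (n + m + m) - u n‖ ^ 2 = ‖u (n + m + m)‖ ^ 2 + ‖u n‖ ^ 2 - 2 * ‖u (n + m)‖ ^ 2 := by
  rw [_root_.norm_sub_sq (𝕜 := 𝕜), hu.inner_add_left, inner_self_eq_norm_sq]
  ring

lemma antitone_norm_sq (hu : IsHankelGram 𝕜 u) (hbdd : BddAbove (Set.range fun n => ‖u n‖)) :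
    Antitone fun n => ‖u n‖ ^ 2 := by
  refine antitone_of_convex_of_bddAbove (fun n => ?_) ?_
  · have hnonneg := sq_nonneg ‖u (n + 1 + 1) - u n‖
    rw [hu.norm_sub_sq] at hnonneg
    linarith
  · obtain ⟨B, hB⟩ := hbdd
    refine ⟨B ^ 2, ?_⟩
    rintro _ ⟨n, rfl⟩
    exact pow_le_pow_left₀ (norm_nonneg _) (hB ⟨n, rfl⟩) 2

lemma cauchySeq_even (hu : IsHankelGram 𝕜 u) (hbdd : BddAbove (Set.range fun n => ‖u n‖)) :
    CauchySeq fun k => u (2 * k) := by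
  have hanti := hu.antitone_norm_sq hbdd
  obtain ⟨L, hL⟩ : ∃ L, Tendsto (fun n => ‖u n‖ ^ 2) atTop (𝓝 L) :=
    ⟨_, tendsto_atTop_ciInf hanti ⟨0, by rintro _ ⟨n, rfl⟩; positivity⟩⟩
  have hdist (n m : ℕ) (hnm : n ≤ m) :
      dist (u (2 * n)) (u (2 * m)) ≤ √(2 * (‖u (2 * n)‖ ^ 2 - L)) := by
    obtain ⟨k, rfl⟩ := Nat.exists_eq_add_of_le hnm
    refine Real.le_sqrt_of_sq_le ?_
    rw [dist_comm, dist_eq_norm, show 2 * (n + k) = 2 * n + k + k by ring, hu.norm_sub_sq]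
    have hle : ‖u (2 * n + k + k)‖ ^ 2 ≤ ‖u (2 * n)‖ ^ 2 := hanti (by omega)
    linarith [hanti.le_of_tendsto hL (2 * n + k)]
  refine cauchySeq_of_le_tendsto_0' _ hdist ?_
  have heven : Tendsto (fun n : ℕ => ‖u (2 * n)‖ ^ 2) atTop (𝓝 L) :=
    hL.comp (tendsto_id.const_mul_atTop' two_pos)
  simpa using ((heven.sub_const L).const_mul 2).sqrt

end IsHankelGram

end HankelGram

section Contraction

variable {𝕜 E : Type*} [RCLike 𝕜] [NormedAddCommGroup E]

/-- Asymptotic stability of a bounded operator `A`: its powers tend to `0` in the strong operator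
topology. -/
def AsymptoticallyStable [NormedSpace 𝕜 E] (A : E →L[𝕜] E) : Prop :=
  ∀ x, Tendsto (fun n : ℕ => (A ^ n) x) atTop (𝓝 0)

section Powers

variable [NormedSpace 𝕜 E] {A : E →L[𝕜] E}

lemma norm_pow_apply_le_of_norm_le_one (hA : ‖A‖ ≤ 1) (n : ℕ) (x : E) : ‖(A ^ n) x‖ ≤ ‖x‖ := by
  induction n with
  | zero => simp
  | succ n ih =>
    rw [pow_succ', mul_apply_eq_comp]
    exact (A.le_of_opNorm_le hA _).trans (by rwa [one_mul])

lemma isClosed_setOf_tendsto_pow_apply_zero (hA : ‖A‖ ≤ 1) :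
    IsClosed {x | Tendsto (fun n : ℕ => (A ^ n) x) atTop (𝓝 0)} := by
  have hlip (n : ℕ) : LipschitzWith 1 (A ^ n) :=
    AddMonoidHomClass.lipschitz_of_bound_nnnorm (A ^ n) 1 fun x => by
      simpa using! norm_pow_apply_le_of_norm_le_one hA n x
  exact (LipschitzWith.uniformEquicontinuous _ 1 hlip).equicontinuous.isClosed_setOfPred_tendsto
    continuous_const

lemma tendsto_pow_apply_zero_of_even (hA : ‖A‖ ≤ 1) {x : E}
    (h : Tendsto (fun k : ℕ => (A ^ (2 * k)) x) atTop (𝓝 0)) :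
    Tendsto (fun n : ℕ => (A ^ n) x) atTop (𝓝 0) := by
  have hanti : Antitone fun n : ℕ => ‖(A ^ n) x‖ := antitone_nat_of_succ_le fun n => by
    simpa [pow_succ'] using norm_pow_apply_le_of_norm_le_one hA 1 ((A ^ n) x)
  rw [tendsto_zero_iff_norm_tendsto_zero] at h ⊢
  exact (tendsto_iff_tendsto_subseq_of_antitone hanti (tendsto_id.const_mul_atTop' two_pos)).2 h

lemma sq_apply_eq_self_of_tendsto_even_pow {x z : E}
    (h : Tendsto (fun k : ℕ => (A ^ (2 * k)) x) atTop (𝓝 z)) : (A ^ 2) z = z := by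
  simp_rw [pow_mul, FunLike.coe_pow_eq_iterate (A ^ 2)] at h
  exact isFixedPt_of_tendsto_iterate h (A ^ 2).continuous.continuousAt

end Powers

variable [InnerProductSpace 𝕜 E]

lemma norm_le_one_of_norm_sq_eq_sub {T : E →L[𝕜] E} {p : E}
    (hT : ∀ x, ‖T x‖ ^ 2 = ‖x‖ ^ 2 - ‖⟪p, x⟫_𝕜‖ ^ 2) : ‖T‖ ≤ 1 := by
  refine T.opNorm_le_bound zero_le_one fun x => ?_
  rw [one_mul]
  refine le_of_sq_le_sq ?_ (norm_nonneg x)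
  linarith [hT x, sq_nonneg ‖⟪p, x⟫_𝕜‖]

variable [CompleteSpace E] {A K : E →L[𝕜] E}

lemma star_apply_eq_self_of_apply_eq_self (hA : ‖A‖ ≤ 1) {y : E} (hy : A y = y) :
    star A y = y := by
  refine eq_of_norm_le_re_inner_eq_norm_sq (𝕜 := 𝕜) ?_ ?_
  · simpa using (star A).le_of_opNorm_le ((norm_star A).trans_le hA) y
  · rw [ContinuousLinearMap.star_eq_adjoint, ContinuousLinearMap.adjoint_inner_left, hy,
      inner_self_eq_norm_sq]

lemma sq_apply_pow_eq_self_of_semiconjBy_star (hA : ‖A‖ ≤ 1) (hK : SemiconjBy K (star A) A) {y : E}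
    (hy : (A ^ 2) y = y) (n : ℕ) : (A ^ 2) ((K ^ n) y) = (K ^ n) y := by
  have hAsq : ‖A ^ 2‖ ≤ 1 := (norm_pow_le' A two_pos).trans (pow_le_one₀ (norm_nonneg A) hA)
  induction n with
  | zero => simpa using hy
  | succ n ih =>
    have hstar : (star A ^ 2) ((K ^ n) y) = (K ^ n) y := by
      rw [← star_pow]
      exact star_apply_eq_self_of_apply_eq_self hAsq ih
    calc (A ^ 2) ((K ^ (n + 1)) y) = (A ^ 2 * K) ((K ^ n) y) := by
          rw [pow_succ' K]; rfl
      _ = (K * star A ^ 2) ((K ^ n) y) := by rw [(hK.pow_right 2).eq]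
      _ = K ((K ^ n) y) := by rw [mul_apply_eq_comp, hstar]
      _ = (K ^ (n + 1)) y := by rw [pow_succ']; rfl

lemma eq_zero_of_sq_apply_eq_self_of_semiconjBy_star {q : E}
    (hdefect : ∀ x, ‖A x‖ ^ 2 = ‖x‖ ^ 2 - ‖⟪q, x⟫_𝕜‖ ^ 2) (hK : SemiconjBy K (star A) A)
    (hcyclic : ∀ y, (∀ n : ℕ, ⟪q, (K ^ n) y⟫_𝕜 = 0) → y = 0) {y : E} (hy : (A ^ 2) y = y) :
    y = 0 := by
  have hA := norm_le_one_of_norm_sq_eq_sub hdefect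
  refine hcyclic y fun n => ?_
  set v := (K ^ n) y
  have hAv : ‖v‖ ≤ ‖A v‖ := calc
    ‖v‖ = ‖A (A v)‖ := by
      rw [← mul_apply_eq_comp, ← sq, sq_apply_pow_eq_self_of_semiconjBy_star hA hK hy n]
    _ ≤ ‖A v‖ := by simpa using A.le_of_opNorm_le hA (A v)
  have hsq : ‖⟪q, v⟫_𝕜‖ ^ 2 ≤ 0 := by
    linarith [hdefect v, pow_le_pow_left₀ (norm_nonneg v) hAv 2]
  exact norm_eq_zero.1 (pow_eq_zero_iff two_ne_zero |>.1 (hsq.antisymm (sq_nonneg _)))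

end Contraction

section Symmetrizable

variable {H : Type*} [NormedAddCommGroup H] [InnerProductSpace ℂ H] [CompleteSpace H]
  {A P : H →L[ℂ] H}

lemma isHankelGram_sqrt_star_pow (hP : 0 ≤ P) (hPA : SemiconjBy P (star A) A) (x : H) :
    IsHankelGram ℂ fun n => CFC.sqrt P ((star A ^ n) x) := by
  have inner_sqrt (v w : H) : ⟪CFC.sqrt P v, CFC.sqrt P w⟫_ℂ = ⟪P v, w⟫_ℂ := by
    have hsqrt := (ContinuousLinearMap.nonneg_iff_isPositive _).1 (CFC.sqrt_nonneg P)
    rw [← hsqrt.inner_left_eq_inner_right, ← mul_apply_eq_comp, CFC.sqrt_mul_sqrt_self P hP]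
  intro m n
  simp only [inner_sqrt, pow_succ', mul_apply_eq_comp]
  rw [← mul_apply_eq_comp P, hPA.eq, mul_apply_eq_comp, ContinuousLinearMap.star_eq_adjoint,
    ContinuousLinearMap.adjoint_inner_right]

lemma exists_tendsto_even_pow_apply (hP : 0 ≤ P) (hA : ‖A‖ ≤ 1) (hPA : SemiconjBy P (star A) A)
    (x : H) : ∃ z, Tendsto (fun k : ℕ => (A ^ (2 * k)) (P x)) atTop (𝓝 z) := by
  have hbdd : BddAbove (Set.range fun n => ‖CFC.sqrt P ((star A ^ n) x)‖) := by
    refine ⟨‖CFC.sqrt P‖ * ‖x‖, ?_⟩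
    rintro _ ⟨n, rfl⟩
    exact (CFC.sqrt P).le_opNorm_of_le
      (norm_pow_apply_le_of_norm_le_one ((norm_star A).trans_le hA) n x)
  obtain ⟨z, hz⟩ := cauchySeq_tendsto_of_complete
    ((isHankelGram_sqrt_star_pow hP hPA x).cauchySeq_even hbdd)
  refine ⟨CFC.sqrt P z, ((CFC.sqrt P).continuous.tendsto z).comp hz |>.congr fun k => ?_⟩
  calc CFC.sqrt P (CFC.sqrt P ((star A ^ (2 * k)) x))
      = (P * star A ^ (2 * k)) x := by
        rw [← mul_apply_eq_comp, CFC.sqrt_mul_sqrt_self P hP, mul_apply_eq_comp]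
    _ = (A ^ (2 * k)) (P x) := by rw [(hPA.pow_right _).eq, mul_apply_eq_comp]

theorem asymptoticallyStable_of_semiconjBy_star (hP : 0 ≤ P) (hA : ‖A‖ ≤ 1)
    (hPA : SemiconjBy P (star A) A) (hrange : ∀ x, A x ∈ closure (Set.range P))
    (hfix : ∀ y, (A ^ 2) y = y → y = 0) : AsymptoticallyStable A := by
  have hstable : closure (Set.range P) ⊆ {x | Tendsto (fun n : ℕ => (A ^ n) x) atTop (𝓝 0)} := by
    refine closure_minimal ?_ (isClosed_setOf_tendsto_pow_apply_zero hA)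
    rintro _ ⟨x, rfl⟩
    obtain ⟨z, hz⟩ := exists_tendsto_even_pow_apply hP hA hPA x
    rw [hfix z (sq_apply_eq_self_of_tendsto_even_pow hz)] at hz
    exact tendsto_pow_apply_zero_of_even hA hz
  exact fun x => (tendsto_add_atTop_iff_nat 1).1 (hstable (hrange x))

end Symmetrizable

section RankOnePerturbation

variable {𝕜 H : Type*} [RCLike 𝕜] [NormedAddCommGroup H] [InnerProductSpace 𝕜 H]

lemma norm_sq_eq_sub_of_mul_eq {M N T : H →L[𝕜] H} {p : H} (hM : M.IsSymmetric)
    (hMdense : DenseRange M) (hN : N.IsSymmetric)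
    (hNsq : ∀ f, N (N f) = M (M f) - ⟪M p, f⟫_𝕜 • M p) (hT : T * M = N) (x : H) :
    ‖T x‖ ^ 2 = ‖x‖ ^ 2 - ‖⟪p, x⟫_𝕜‖ ^ 2 := by
  refine congrFun (f := fun x => ‖T x‖ ^ 2) (g := fun x => ‖x‖ ^ 2 - ‖⟪p, x⟫_𝕜‖ ^ 2)
    (hMdense.equalizer (by fun_prop) (by fun_prop) (funext fun f => ?_)) x
  have hNf : ⟪N f, N f⟫_𝕜 = ⟪M f, M f⟫_𝕜 - ⟪M p, f⟫_𝕜 * ⟪f, M p⟫_𝕜 := by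
    have hNf_inner : ⟪N f, N f⟫_𝕜 = ⟪f, N (N f)⟫_𝕜 := hN f (N f)
    have hMf_inner : ⟪M f, M f⟫_𝕜 = ⟪f, M (M f)⟫_𝕜 := hM f (M f)
    rw [hNf_inner, hNsq, inner_sub_right, inner_smul_right, hMf_inner]
  have hMp : ⟪M p, f⟫_𝕜 = ⟪p, M f⟫_𝕜 := hM p f
  calc ‖T (M f)‖ ^ 2 = RCLike.re ⟪N f, N f⟫_𝕜 := by
        rw [← mul_apply_eq_comp, hT, inner_self_eq_norm_sq]
    _ = ‖M f‖ ^ 2 - ‖⟪p, M f⟫_𝕜‖ ^ 2 := by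
        rw [hNf, map_sub, inner_self_eq_norm_sq, inner_mul_symm_re_eq_norm, norm_mul,
          norm_inner_symm f, hMp, sq ‖⟪p, M f⟫_𝕜‖]

lemma mul_star_eq_of_mul_eq [CompleteSpace H] {M N T : H →L[𝕜] H} (hM : IsSelfAdjoint M)
    (hN : IsSelfAdjoint N) (hT : T * M = N) : M * star T = N := by
  rw [← hN.star_eq, ← hT, star_mul, hM.star_eq]

end RankOnePerturbation

section Symmetry

variable {𝕜 H : Type*} [RCLike 𝕜] [NormedAddCommGroup H] [InnerProductSpace 𝕜 H] [CompleteSpace H]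
  {M J : H →L[𝕜] H} {p : H}

lemma norm_apply_of_isSelfAdjoint_of_mul_self_eq_one (hJ : IsSelfAdjoint J) (hJJ : J * J = 1)
    (x : H) : ‖J x‖ = ‖x‖ :=
  (ContinuousLinearMap.norm_map_iff_adjoint_comp_self J).2 (by rwa [hJ.adjoint_eq]) x

lemma eq_zero_of_forall_inner_mul_pow_eq_zero
    (hcyclic : ∀ y, (∀ n : ℕ, ⟪p, (M ^ (2 * n)) y⟫_𝕜 = 0) → y = 0)
    (hJ : IsSelfAdjoint J) (hJJ : J * J = 1) (hJM : Commute J M) {y : H}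
    (hy : ∀ n : ℕ, ⟪J p, ((M * J) ^ n) y⟫_𝕜 = 0) : y = 0 := by
  have hpow (n : ℕ) : (M * J) ^ (2 * n) = M ^ (2 * n) := by
    rw [hJM.symm.mul_pow, pow_mul J, sq, hJJ, one_pow, mul_one]
  have hJy : J y = 0 := hcyclic _ fun n => calc
    ⟪p, (M ^ (2 * n)) (J y)⟫_𝕜 = ⟪p, J ((M ^ (2 * n)) y)⟫_𝕜 := by
      rw [← mul_apply_eq_comp, ← (hJM.pow_right _).eq, mul_apply_eq_comp]
    _ = ⟪J p, (M ^ (2 * n)) y⟫_𝕜 := (hJ.isSymmetric _ _).symm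
    _ = 0 := by rw [← hpow, hy]
  rw [← norm_eq_zero, ← norm_apply_of_isSelfAdjoint_of_mul_self_eq_one hJ hJJ, hJy, norm_zero]

end Symmetry

section Stability

variable {H : Type*} [NormedAddCommGroup H] [InnerProductSpace ℂ H] [CompleteSpace H]
  {M N T J : H →L[ℂ] H} {p : H}

theorem asymptoticallyStable_mul_selfAdjointUnitary (hM : IsSelfAdjoint M) (hMdense : DenseRange M)
    (hN : 0 ≤ N) (hT : T * M = N) (hdefect : ∀ x, ‖T x‖ ^ 2 = ‖x‖ ^ 2 - ‖⟪p, x⟫_ℂ‖ ^ 2)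
    (hcyclic : ∀ y, (∀ n : ℕ, ⟪p, (M ^ (2 * n)) y⟫_ℂ = 0) → y = 0)
    (hJ : IsSelfAdjoint J) (hJJ : J * J = 1) (hJM : Commute J M) :
    AsymptoticallyStable (T * J) := by
  have hMT : M * star T = N := mul_star_eq_of_mul_eq hM (IsSelfAdjoint.of_nonneg hN) hT
  have hstar : star (T * J) = J * star T := by rw [star_mul, hJ.star_eq]
  have hNA : N * star (T * J) = T * J * N := calc
    N * star (T * J) = T * (M * J) * star T := by rw [hstar, ← hT]; simp only [mul_assoc]
    _ = T * J * (M * star T) := by rw [← hJM.eq]; simp only [mul_assoc]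
    _ = T * J * N := by rw [hMT]
  have hKA : M * J * star (T * J) = T * J * (M * J) := calc
    M * J * star (T * J) = M * (J * J) * star T := by rw [hstar]; simp only [mul_assoc]
    _ = T * (J * J) * M := by rw [hJJ, mul_one, mul_one, hMT, hT]
    _ = T * J * (M * J) := by rw [← hJM.eq]; simp only [mul_assoc]
  have hdefectA (x : H) : ‖(T * J) x‖ ^ 2 = ‖x‖ ^ 2 - ‖⟪J p, x⟫_ℂ‖ ^ 2 := by
    have hJp : ⟪J p, x⟫_ℂ = ⟪p, J x⟫_ℂ := hJ.isSymmetric p x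
    rw [mul_apply_eq_comp, hdefect, norm_apply_of_isSelfAdjoint_of_mul_self_eq_one hJ hJJ, hJp]
  have hrange (x : H) : T x ∈ closure (Set.range N) := by
    refine map_mem_closure T.continuous (hMdense x) ?_
    rintro _ ⟨f, rfl⟩
    exact ⟨f, by rw [← hT, mul_apply_eq_comp]⟩
  exact asymptoticallyStable_of_semiconjBy_star hN (norm_le_one_of_norm_sq_eq_sub hdefectA) hNA
    (fun x => hrange (J x)) fun y => eq_zero_of_sq_apply_eq_self_of_semiconjBy_star hdefectA hKA
      fun y => eq_zero_of_forall_inner_mul_pow_eq_zero hcyclic hJ hJJ hJM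

theorem asymptoticallyStable_selfAdjointUnitary_mul (hM : 0 ≤ M) (hMdense : DenseRange M)
    (hN : IsSelfAdjoint N) (hT : T * M = N)
    (hdefect : ∀ x, ‖T x‖ ^ 2 = ‖x‖ ^ 2 - ‖⟪p, x⟫_ℂ‖ ^ 2)
    (hcyclic : ∀ y, (∀ n : ℕ, ⟪p, (M ^ n) y⟫_ℂ = 0) → y = 0)
    (hJ : IsSelfAdjoint J) (hJJ : J * J = 1) (hJN : Commute J N) :
    AsymptoticallyStable (J * T) := by
  have hMT : M * star T = N := mul_star_eq_of_mul_eq (IsSelfAdjoint.of_nonneg hM) hN hT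
  have hMA : M * star (J * T) = J * T * M := calc
    M * star (J * T) = N * J := by rw [star_mul, hJ.star_eq, ← mul_assoc, hMT]
    _ = J * T * M := by rw [← hJN.eq, mul_assoc, hT]
  have hdefectA (x : H) : ‖(J * T) x‖ ^ 2 = ‖x‖ ^ 2 - ‖⟪p, x⟫_ℂ‖ ^ 2 := by
    rw [mul_apply_eq_comp, norm_apply_of_isSelfAdjoint_of_mul_self_eq_one hJ hJJ, hdefect]
  exact asymptoticallyStable_of_semiconjBy_star hM (norm_le_one_of_norm_sq_eq_sub hdefectA) hMA
    (fun _ => hMdense _)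
    fun _ => eq_zero_of_sq_apply_eq_self_of_semiconjBy_star hdefectA hMA hcyclic

end Stability

section EvenMoments

lemma exists_polynomial_eval_sq_near {φ : ℝ → ℝ} {b : ℝ} (hφ : ContinuousOn φ (Set.Icc 0 b))
    {ε : ℝ} (hε : 0 < ε) :
    ∃ P : Polynomial ℝ, ∀ s ∈ Set.Icc 0 b, |P.eval (s ^ 2) - φ s| < ε := by
  rcases lt_or_ge b 0 with hb | hb
  · exact ⟨0, fun s hs => absurd (hs.1.trans hs.2) hb.not_ge⟩
  obtain ⟨P, hP⟩ := exists_polynomial_near_of_continuousOn 0 (b ^ 2) (fun t => φ √t)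
    (hφ.comp Real.continuous_sqrt.continuousOn fun t ht =>
      ⟨Real.sqrt_nonneg t, (Real.sqrt_le_left hb).2 ht.2⟩) ε hε
  refine ⟨P, fun s hs => ?_⟩
  simpa only [Real.sqrt_sq hs.1] using hP (s ^ 2) ⟨sq_nonneg s, pow_le_pow_left₀ hs.1 hs.2 2⟩

variable {F : Type*} [NormedAddCommGroup F] [NormedSpace ℝ F]

lemma integrable_smul_of_ae_mem_isCompact {X : Type*} [TopologicalSpace X] [MeasurableSpace X]
    [OpensMeasurableSpace X] {μ : Measure X} {K : Set X} (hK : IsCompact K) (hμ : ∀ᵐ x ∂μ, x ∈ K)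
    {g : X → F} (hg : Integrable g μ) {φ : X → ℝ} (hφ : Continuous φ) :
    Integrable (fun x => φ x • g x) μ := by
  obtain ⟨C, hC⟩ := hK.exists_bound_of_continuousOn hφ.continuousOn
  exact hg.bdd_smul C hφ.aestronglyMeasurable (hμ.mono hC)

variable {ρ : Measure ℝ} {b : ℝ} {g : ℝ → F}

lemma integral_polynomial_eval_sq_smul_eq_zero (hρ : ∀ᵐ s ∂ρ, s ∈ Set.Icc 0 b)
    (hg : Integrable g ρ) (hmoment : ∀ n : ℕ, ∫ s, s ^ (2 * n) • g s ∂ρ = 0) (P : Polynomial ℝ) :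
    ∫ s, P.eval (s ^ 2) • g s ∂ρ = 0 := by
  simp_rw [Polynomial.eval_eq_sum_range, Finset.sum_smul, mul_smul, ← pow_mul]
  have hint (i : ℕ) : Integrable (fun s => P.coeff i • s ^ (2 * i) • g s) ρ :=
    (integrable_smul_of_ae_mem_isCompact isCompact_Icc hρ hg (continuous_pow (2 * i))).smul _
  rw [integral_finsetSum _ fun i _ => hint i]
  simp_rw [integral_smul, hmoment, smul_zero, Finset.sum_const_zero]

lemma integral_smul_eq_zero_of_even_moments (hρ : ∀ᵐ s ∂ρ, s ∈ Set.Icc 0 b)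
    (hg : Integrable g ρ) (hmoment : ∀ n : ℕ, ∫ s, s ^ (2 * n) • g s ∂ρ = 0)
    {φ : ℝ → ℝ} (hφ : Continuous φ) : ∫ s, φ s • g s ∂ρ = 0 := by
  have hbound (ε : ℝ) (hε : 0 < ε) : ‖∫ s, φ s • g s ∂ρ‖ ≤ ε * ∫ s, ‖g s‖ ∂ρ := by
    obtain ⟨P, hP⟩ := exists_polynomial_eval_sq_near (b := b) hφ.continuousOn hε
    have hPφ : ∫ s, (P.eval (s ^ 2) - φ s) • g s ∂ρ = -∫ s, φ s • g s ∂ρ := by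
      simp_rw [sub_smul]
      rw [integral_sub (integrable_smul_of_ae_mem_isCompact isCompact_Icc hρ hg (by fun_prop))
        (integrable_smul_of_ae_mem_isCompact isCompact_Icc hρ hg hφ),
        integral_polynomial_eval_sq_smul_eq_zero hρ hg hmoment, zero_sub]
    rw [← norm_neg, ← hPφ, ← integral_const_mul]
    refine norm_integral_le_of_norm_le (hg.norm.const_mul ε) (hρ.mono fun s hs => ?_)
    rw [norm_smul]
    exact mul_le_mul_of_nonneg_right (hP s hs).le (norm_nonneg _)
  have hlim : Tendsto (fun ε : ℝ => ε * ∫ s, ‖g s‖ ∂ρ) (𝓝[>] 0) (𝓝 0) := by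
    simpa using (tendsto_id.mul_const (∫ s, ‖g s‖ ∂ρ)).mono_left (nhdsWithin_le_nhds (a := 0))
  exact norm_le_zero_iff.1 (ge_of_tendsto hlim (eventually_mem_nhdsWithin.mono hbound))

lemma ae_eq_zero_of_even_moments [CompleteSpace F] (hρ : ∀ᵐ s ∂ρ, s ∈ Set.Icc 0 b)
    (hg : Integrable g ρ) (hmoment : ∀ n : ℕ, ∫ s, s ^ (2 * n) • g s ∂ρ = 0) :
    ∀ᵐ s ∂ρ, g s = 0 :=
  ae_eq_zero_of_integral_contDiff_smul_eq_zero hg.locallyIntegrable fun _ hφ _ =>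
    integral_smul_eq_zero_of_even_moments hρ hg hmoment hφ.continuous

end EvenMoments

section MulOperator

variable {𝕜 X : Type*} [RCLike 𝕜] [MeasurableSpace X] {μ : Measure X}

/-- `M` is the operator of multiplication by the real-valued function `m` on `L²(μ)`. As a bounded
operator `M` is given, `m` need not be assumed essentially bounded. -/
def IsMulOperator (m : X → ℝ) (M : Lp 𝕜 2 μ →L[𝕜] Lp 𝕜 2 μ) : Prop :=
  ∀ f : Lp 𝕜 2 μ, ∀ᵐ x ∂μ, M f x = (m x : 𝕜) * f x

namespace IsMulOperator

variable {m : X → ℝ} {M : Lp 𝕜 2 μ →L[𝕜] Lp 𝕜 2 μ}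

lemma isSymmetric (hM : IsMulOperator m M) : M.IsSymmetric := by
  intro f g
  change ⟪M f, g⟫_𝕜 = ⟪f, M g⟫_𝕜
  rw [L2.inner_def, L2.inner_def]
  refine integral_congr_ae ?_
  filter_upwards [hM f, hM g] with x hMf hMg
  simp only [hMf, hMg, RCLike.inner_apply, map_mul, RCLike.conj_ofReal]
  ring

lemma isPositive (hM : IsMulOperator m M) (hm : ∀ᵐ x ∂μ, 0 ≤ m x) : M.IsPositive := by
  refine ⟨hM.isSymmetric, fun f => ?_⟩
  change 0 ≤ RCLike.re ⟪M f, f⟫_𝕜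
  rw [L2.inner_def, ← integral_re (L2.integrable_inner _ _)]
  refine integral_nonneg_of_ae ?_
  filter_upwards [hM f, hm] with x hMf hmx
  rw [hMf, ← smul_eq_mul, inner_smul_left, RCLike.conj_ofReal, RCLike.re_ofReal_mul]
  exact mul_nonneg hmx inner_self_nonneg

lemma eq_zero_of_apply_eq_zero (hM : IsMulOperator m M) (hm : ∀ᵐ x ∂μ, m x ≠ 0) {f : Lp 𝕜 2 μ}
    (hf : M f = 0) : f = 0 := by
  rw [Lp.eq_zero_iff_ae_eq_zero] at hf ⊢
  filter_upwards [hM f, hm, hf] with x hMf hmx hzero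
  simpa [hmx] using hMf.symm.trans hzero

lemma denseRange (hM : IsMulOperator m M) (hm : ∀ᵐ x ∂μ, m x ≠ 0) : DenseRange M := by
  change Dense (M.range : Set (Lp 𝕜 2 μ))
  rw [Submodule.dense_iff_topologicalClosure_eq_top, Submodule.topologicalClosure_eq_top_iff,
    hM.isSymmetric.orthogonal_range, LinearMap.ker_eq_bot']
  exact fun f => hM.eq_zero_of_apply_eq_zero hm

lemma pow (hM : IsMulOperator m M) (n : ℕ) : IsMulOperator (fun x => m x ^ n) (M ^ n) := by
  intro f
  induction n with
  | zero => simp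
  | succ n ih =>
    filter_upwards [ih, hM ((M ^ n) f)] with x hpow hstep
    rw [pow_succ', mul_apply_eq_comp, hstep, hpow, pow_succ', RCLike.ofReal_mul, mul_assoc]

lemma exists_apply_eq_of_memLp_inv (hM : IsMulOperator m M) (hm : ∀ᵐ x ∂μ, m x ≠ 0)
    (hinv : MemLp (fun x => (m x)⁻¹) 2 μ) {one : Lp 𝕜 2 μ} (hone : ∀ᵐ x ∂μ, one x = 1) :
    ∃ p : Lp 𝕜 2 μ, (∀ᵐ x ∂μ, p x ≠ 0) ∧ M p = one := by
  have hp := (hinv.ofReal (K := 𝕜)).coeFn_toLp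
  refine ⟨(hinv.ofReal (K := 𝕜)).toLp, ?_, Lp.ext ?_⟩
  · filter_upwards [hp, hm] with x hpx hmx
    rw [hpx]
    exact RCLike.ofReal_ne_zero.2 (inv_ne_zero hmx)
  · filter_upwards [hM ((hinv.ofReal (K := 𝕜)).toLp), hp, hone, hm] with x hMp hpx honex hmx
    rw [hMp, hpx, honex, ← RCLike.ofReal_mul, mul_inv_cancel₀ hmx, RCLike.ofReal_one]

lemma eq_zero_of_forall_inner_even_pow_eq_zero {ρ : Measure ℝ} {M : Lp 𝕜 2 ρ →L[𝕜] Lp 𝕜 2 ρ}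
    {b : ℝ} (hM : IsMulOperator id M) (hρ : ∀ᵐ s ∂ρ, s ∈ Set.Icc 0 b) {p : Lp 𝕜 2 ρ}
    (hp : ∀ᵐ s ∂ρ, p s ≠ 0) {y : Lp 𝕜 2 ρ} (hy : ∀ n : ℕ, ⟪p, (M ^ (2 * n)) y⟫_𝕜 = 0) :
    y = 0 := by
  have hmoment (n : ℕ) : ∫ s, s ^ (2 * n) • ⟪p s, y s⟫_𝕜 ∂ρ = 0 := by
    rw [← hy n, L2.inner_def]
    refine integral_congr_ae ?_
    filter_upwards [hM.pow (2 * n) y] with s hpow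
    rw [hpow, ← smul_eq_mul (_ : 𝕜), inner_smul_right, RCLike.real_smul_eq_coe_mul, id]
  rw [Lp.eq_zero_iff_ae_eq_zero]
  filter_upwards [ae_eq_zero_of_even_moments hρ (L2.integrable_inner p y) hmoment, hp]
    with s hinner hps
  simpa [hps] using hinner

end IsMulOperator

end MulOperator

/-- **Asymptotic stability for real spectral data with one trivial phase.** In the model
`L²(ρ)` with `T` the unique contraction satisfying `T∘M = M̃`: (a) for any self-adjoint
unitary `J` commuting with `M`, the operator `T∘J` is asymptotically stable; (b) for any
self-adjoint unitary `J̃` commuting with `M̃`, the operator `J̃∘T` is asymptotically stable.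
(This corresponds to spectral data with real-valued `Ψ, Ψ̃`, one of which is `≡ 1`.) -/
theorem selfadjoint_one_positive_asymptotically_stable
    (ρ : Measure ℝ) [IsFiniteMeasure ρ]
    (hcarr : ρ {s : ℝ | s ≤ 0} = 0)
    (hbddsupp : ∃ b : ℝ, ρ {s : ℝ | b < s} = 0)
    (hnorm : ∫⁻ s, ENNReal.ofReal (s⁻¹ ^ 2) ∂ρ ≤ 1)
    (one : Lp ℂ 2 ρ)
    (hone : ∀ᵐ s ∂ρ, (one : ℝ → ℂ) s = 1)
    (M Mt : Lp ℂ 2 ρ →L[ℂ] Lp ℂ 2 ρ)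
    (hM : ∀ f : Lp ℂ 2 ρ, ∀ᵐ s ∂ρ, (M f : ℝ → ℂ) s = (s : ℂ) * (f : ℝ → ℂ) s)
    (hMt_pos : Mt.IsPositive)
    (hMt_sq : ∀ f, Mt (Mt f) = M (M f) - ⟪one, f⟫_ℂ • one)
    (T : Lp ℂ 2 ρ →L[ℂ] Lp ℂ 2 ρ) (hT : T.comp M = Mt) :
    (∀ J : Lp ℂ 2 ρ →L[ℂ] Lp ℂ 2 ρ, IsSelfAdjoint J → J.comp J = 1 →
      J.comp M = M.comp J →
      ∀ x : Lp ℂ 2 ρ, Tendsto (fun n : ℕ => ((T.comp J) ^ n) x) atTop (nhds 0)) ∧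
    (∀ Jt : Lp ℂ 2 ρ →L[ℂ] Lp ℂ 2 ρ, IsSelfAdjoint Jt → Jt.comp Jt = 1 →
      Jt.comp Mt = Mt.comp Jt →
      ∀ x : Lp ℂ 2 ρ, Tendsto (fun n : ℕ => ((Jt.comp T) ^ n) x) atTop (nhds 0)) := by
  have hpos : ∀ᵐ s ∂ρ, 0 < s := by simpa [ae_iff] using hcarr
  have hne : ∀ᵐ s ∂ρ, s ≠ 0 := hpos.mono fun _ => ne_of_gt
  obtain ⟨b, hb⟩ := hbddsupp
  have hmem : ∀ᵐ s ∂ρ, s ∈ Set.Icc 0 b := by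
    have hle : ∀ᵐ s ∂ρ, s ≤ b := by simpa [ae_iff] using hb
    exact (hpos.and hle).mono fun _ hs => ⟨hs.1.le, hs.2⟩
  have hinv : MemLp (fun s : ℝ => s⁻¹) 2 ρ := by
    rw [memLp_two_iff_integrable_sq (by fun_prop)]
    exact (lintegral_ofReal_ne_top_iff_integrable (by fun_prop)
      (ae_of_all _ fun _ => sq_nonneg _)).1 (hnorm.trans_lt ENNReal.one_lt_top).ne
  have hmul : IsMulOperator id M := hM
  have hMpos := hmul.isPositive (hpos.mono fun _ => le_of_lt)
  have hMdense := hmul.denseRange hne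
  obtain ⟨p, hp, rfl⟩ := hmul.exists_apply_eq_of_memLp_inv hne hinv hone
  have hdefect := norm_sq_eq_sub_of_mul_eq hMpos.isSymmetric hMdense hMt_pos.isSymmetric hMt_sq hT
  have hcyclic (y : Lp ℂ 2 ρ) (hy : ∀ n : ℕ, ⟪p, (M ^ (2 * n)) y⟫_ℂ = 0) : y = 0 :=
    hmul.eq_zero_of_forall_inner_even_pow_eq_zero hmem hp hy
  rw [← ContinuousLinearMap.nonneg_iff_isPositive] at hMpos hMt_pos
  exact ⟨
    fun J hJ hJJ hJM => asymptoticallyStable_mul_selfAdjointUnitary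
      (.of_nonneg hMpos) hMdense hMt_pos hT hdefect hcyclic hJ hJJ hJM,
    fun Jt hJ hJJ hJM => asymptoticallyStable_selfAdjointUnitary_mul
      hMpos hMdense (.of_nonneg hMt_pos) hT hdefect
      (fun y hy => hcyclic y fun n => hy (2 * n)) hJ hJJ hJM⟩
end

section
/- Let X be a complex Hilbert space, q ∈ X, and let T be a bounded linear operator on X satisfying T*∘T = I − ⟨·, q⟩q (in particular ‖T‖ ≤ 1). Assume T is asymptotically stable: Tⁿ f → 0 for every f ∈ X. Then the map U : X → ℓ²(ℕ, ℂ) defined by (Uf)ₖ := ⟨Tᵏ f, q⟩ for k ≥ 0 is a well-defined linear isometry (in particular Σ_{k≥0} |⟨Tᵏ f, q⟩|² = ‖f‖² for every f ∈ X), and it intertwines T with the backward shift: U∘T = S*∘U, where (S*y)ₙ = yₙ₊₁ on ℓ²(ℕ, ℂ). -/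
open Filter
open scoped InnerProductSpace

/-!
The identity `T*T = I − ⟨·, q⟩q` says exactly that `‖T f‖² + |⟨f, q⟩|² = ‖f‖²`. Along the orbit of
`f` this energy balance telescopes to `∑_{k < n} |⟨Tᵏ f, q⟩|² = ‖f‖² − ‖Tⁿ f‖²`, and asymptotic
stability makes the remainder vanish. Only the balance between the dynamics `T` and the output
`C = ⟨·, q⟩` matters, so the argument works for any output map and any finite exponent.
-/

theorem norm_sq_add_norm_inner_sq_of_adjoint_apply_eq_sub
    {𝕜 X Y : Type*} [RCLike 𝕜] [NormedAddCommGroup X] [InnerProductSpace 𝕜 X] [CompleteSpace X]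
    [NormedAddCommGroup Y] [InnerProductSpace 𝕜 Y] [CompleteSpace Y] {T : X →L[𝕜] Y} {q f : X}
    (hT : ContinuousLinearMap.adjoint T (T f) = f - ⟪q, f⟫_𝕜 • q) :
    ‖T f‖ ^ 2 + ‖⟪q, f⟫_𝕜‖ ^ 2 = ‖f‖ ^ 2 := by
  have norm_sq_sub : (‖T f‖ : 𝕜) ^ 2 = (‖f‖ : 𝕜) ^ 2 - (‖⟪q, f⟫_𝕜‖ : 𝕜) ^ 2 :=
    calc (‖T f‖ : 𝕜) ^ 2
      _ = ⟪ContinuousLinearMap.adjoint T (T f), f⟫_𝕜 := by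
        rw [ContinuousLinearMap.adjoint_inner_left, inner_self_eq_norm_sq_to_K]
      _ = (‖f‖ : 𝕜) ^ 2 - (‖⟪q, f⟫_𝕜‖ : 𝕜) ^ 2 := by
        rw [hT, inner_sub_left, inner_smul_left, inner_self_eq_norm_sq_to_K, RCLike.conj_mul]
  exact eq_sub_iff_add_eq.mp (mod_cast norm_sq_sub)

section EnergyBalance

variable {𝕜 X E : Type*} [Semiring 𝕜] [SeminormedAddCommGroup X] [Module 𝕜 X]
  [SeminormedAddCommGroup E] [Module 𝕜 E] {T : Module.End 𝕜 X} {C : X →ₗ[𝕜] E} {r : ℝ}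

theorem sum_range_norm_rpow_output (hTC : ∀ f, ‖T f‖ ^ r + ‖C f‖ ^ r = ‖f‖ ^ r) (f : X) (n : ℕ) :
    ∑ k ∈ Finset.range n, ‖C ((T ^ k) f)‖ ^ r = ‖f‖ ^ r - ‖(T ^ n) f‖ ^ r := by
  have output_eq_sub (k : ℕ) :
      ‖C ((T ^ k) f)‖ ^ r = ‖(T ^ k) f‖ ^ r - ‖(T ^ (k + 1)) f‖ ^ r := by
    rw [pow_succ', Module.End.mul_apply, ← hTC ((T ^ k) f), add_sub_cancel_left]
  simp_rw [output_eq_sub]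
  exact Finset.sum_range_sub' (fun k ↦ ‖(T ^ k) f‖ ^ r) n

theorem hasSum_norm_rpow_output (hr : 0 < r) (hTC : ∀ f, ‖T f‖ ^ r + ‖C f‖ ^ r = ‖f‖ ^ r)
    {f : X} (hstab : Tendsto (fun n : ℕ ↦ (T ^ n) f) atTop (nhds 0)) :
    HasSum (fun k : ℕ ↦ ‖C ((T ^ k) f)‖ ^ r) (‖f‖ ^ r) := by
  have remainder_tendsto : Tendsto (fun n : ℕ ↦ ‖(T ^ n) f‖ ^ r) atTop (nhds 0) := by
    simpa [hr.ne'] using hstab.norm.rpow_const (Or.inr hr.le)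
  rw [hasSum_iff_tendsto_nat_of_nonneg fun _ ↦ by positivity]
  simpa [sum_range_norm_rpow_output hTC] using remainder_tendsto.const_sub (‖f‖ ^ r)

end EnergyBalance

section ObservabilityMap

variable {𝕜 X E : Type*} [NormedRing 𝕜] [AddCommGroup X] [Module 𝕜 X]
  [NormedAddCommGroup E] [Module 𝕜 E] [IsBoundedSMul 𝕜 E] {p : ENNReal}

/-- The observability map of the discrete-time linear system `x_{k+1} = T x_k`, `y_k = C x_k`,
sending an initial state to its output sequence `(C (Tᵏ f))ₖ` in `ℓᵖ`. That all output sequences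
are in `ℓᵖ` is taken as an argument. -/
def observabilityMap (T : Module.End 𝕜 X) (C : X →ₗ[𝕜] E)
    (hmem : ∀ f, Memℓp (fun k : ℕ ↦ C ((T ^ k) f)) p) : X →ₗ[𝕜] lp (fun _ : ℕ ↦ E) p where
  toFun f := ⟨fun k ↦ C ((T ^ k) f), hmem f⟩
  map_add' f g := by
    ext k
    exact map_add (C ∘ₗ T ^ k) f g
  map_smul' c f := by
    ext k
    exact map_smul (C ∘ₗ T ^ k) c f

variable {T : Module.End 𝕜 X} {C : X →ₗ[𝕜] E}

@[simp]
theorem observabilityMap_apply (hmem : ∀ f, Memℓp (fun k : ℕ ↦ C ((T ^ k) f)) p) (f : X) (k : ℕ) :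
    observabilityMap T C hmem f k = C ((T ^ k) f) :=
  rfl

theorem observabilityMap_map_apply (hmem : ∀ f, Memℓp (fun k : ℕ ↦ C ((T ^ k) f)) p) (f : X)
    (n : ℕ) : observabilityMap T C hmem (T f) n = observabilityMap T C hmem f (n + 1) := by
  simp only [observabilityMap_apply, pow_succ, Module.End.mul_apply]

theorem norm_observabilityMap_rpow (hp : 0 < p.toReal)
    (hmem : ∀ f, Memℓp (fun k : ℕ ↦ C ((T ^ k) f)) p) (f : X) :
    ‖observabilityMap T C hmem f‖ ^ p.toReal = ∑' k : ℕ, ‖C ((T ^ k) f)‖ ^ p.toReal :=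
  lp.norm_rpow_eq_tsum hp _

end ObservabilityMap

theorem isometry_into_l2_of_asymptotically_stable_general
    {𝕜 X E : Type*} [NormedRing 𝕜] [SeminormedAddCommGroup X] [Module 𝕜 X]
    [NormedAddCommGroup E] [Module 𝕜 E] [IsBoundedSMul 𝕜 E]
    {p : ENNReal} [Fact (1 ≤ p)] (hp : p ≠ ⊤) (T : Module.End 𝕜 X) (C : X →ₗ[𝕜] E)
    (hTC : ∀ f, ‖T f‖ ^ p.toReal + ‖C f‖ ^ p.toReal = ‖f‖ ^ p.toReal)
    (hstab : ∀ f, Tendsto (fun n : ℕ ↦ (T ^ n) f) atTop (nhds 0)) :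
    ∃ U : X →ₗᵢ[𝕜] lp (fun _ : ℕ ↦ E) p,
      (∀ (f : X) (k : ℕ), U f k = C ((T ^ k) f)) ∧
      (∀ f : X, HasSum (fun k : ℕ ↦ ‖C ((T ^ k) f)‖ ^ p.toReal) (‖f‖ ^ p.toReal)) ∧
      (∀ (f : X) (n : ℕ), U (T f) n = U f (n + 1)) := by
  have hp_pos : 0 < p.toReal := ENNReal.toReal_pos (zero_lt_one.trans_le Fact.out).ne' hp
  have hsum (f : X) : HasSum (fun k : ℕ ↦ ‖C ((T ^ k) f)‖ ^ p.toReal) (‖f‖ ^ p.toReal) :=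
    hasSum_norm_rpow_output hp_pos hTC (hstab f)
  have hmem (f : X) : Memℓp (fun k : ℕ ↦ C ((T ^ k) f)) p := memℓp_gen (hsum f).summable
  have norm_map (f : X) : ‖observabilityMap T C hmem f‖ = ‖f‖ := by
    rw [← Real.rpow_left_inj (norm_nonneg _) (norm_nonneg _) hp_pos.ne',
      norm_observabilityMap_rpow hp_pos, (hsum f).tsum_eq]
  exact ⟨⟨observabilityMap T C hmem, norm_map⟩, observabilityMap_apply hmem, hsum,
    observabilityMap_map_apply hmem⟩

/-- **The spectral isometry into `ℓ²`.** Let `T` be a bounded operator on a complex Hilbert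
space with `T*T = I − ⟨·,q⟩q`, and assume `T` is asymptotically stable. Then
`U f := (⟨Tᵏf, q⟩)_{k≥0}` is a well-defined linear isometry from `X` into `ℓ²(ℕ, ℂ)`
(in particular `Σₖ |⟨Tᵏf, q⟩|² = ‖f‖²`), and `U` intertwines `T` with the backward
shift: `(U(Tf))ₙ = (Uf)ₙ₊₁`. -/
theorem isometry_into_l2_of_asymptotically_stable
    {X : Type*} [NormedAddCommGroup X] [InnerProductSpace ℂ X] [CompleteSpace X]
    (q : X) (T : X →L[ℂ] X)
    (hT : ∀ f : X, (ContinuousLinearMap.adjoint T) (T f) = f - ⟪q, f⟫_ℂ • q)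
    (hstab : ∀ f : X, Tendsto (fun n : ℕ => (T ^ n) f) atTop (nhds 0)) :
    ∃ U : X →ₗᵢ[ℂ] lp (fun _ : ℕ => ℂ) 2,
      (∀ (f : X) (k : ℕ), U f k = ⟪q, (T ^ k) f⟫_ℂ) ∧
      (∀ f : X, HasSum (fun k : ℕ => ‖⟪q, (T ^ k) f⟫_ℂ‖ ^ 2) (‖f‖ ^ 2)) ∧
      (∀ (f : X) (n : ℕ), U (T f) n = U f (n + 1)) := by
  have energy_balance (f : X) : ‖T f‖ ^ 2 + ‖⟪q, f⟫_ℂ‖ ^ 2 = ‖f‖ ^ 2 :=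
    norm_sq_add_norm_inner_sq_of_adjoint_apply_eq_sub (hT f)
  simpa [← ContinuousLinearMap.toLinearMap_pow] using
    isometry_into_l2_of_asymptotically_stable_general (p := 2) ENNReal.ofNat_ne_top
      (T : Module.End ℂ X) (innerₛₗ ℂ q) (by simpa using energy_balance)
      (by simpa [← ContinuousLinearMap.toLinearMap_pow] using hstab)
end

section
/- Let X be a complex Hilbert space, q ∈ X, and let T be a bounded linear operator on X with T*∘T = I − ⟨·, q⟩q and with T asymptotically stable, and let U : X → ℓ²(ℕ, ℂ), (Uf)ₖ = ⟨Tᵏ f, q⟩, be the associated isometry (so U∘T = S*∘U). Suppose in addition that H is a bounded conjugate-linear map on X satisfying the symmetry ⟨Hf, g⟩ = ⟨Hg, f⟩ and the commutation relation T∘H = H∘T*. Let U* : ℓ²(ℕ, ℂ) → X denote the adjoint of U (determined by ⟨Ux, y⟩ = ⟨x, U*y⟩). Then the bounded conjugate-linear map A := U∘H∘U* on ℓ²(ℕ, ℂ) satisfies A∘S = S*∘A; that is, A is a bounded anti-linear Hankel operator on ℓ²(ℕ, ℂ). -/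
open Filter
open scoped InnerProductSpace ComplexConjugate

/-!
If `U` intertwines `T` with `R`, then taking adjoints shows that `U†` intertwines `R†` with `T†`.
Hence `T ∘ H = H ∘ T†` is carried by `U` to `R ∘ A = A ∘ R†` for `A = U ∘ H ∘ U†`. For any `C`
on `X`, such as `⟪q, ·⟫`, the map `f ↦ (C (Tᵏ f))ₖ` intertwines `T` with the backward shift, whose
adjoint is the forward shift.
-/

open ContinuousLinearMap (adjoint)

section Intertwining

variable {𝕜 X Y : Type*} [RCLike 𝕜]
  [NormedAddCommGroup X] [InnerProductSpace 𝕜 X] [CompleteSpace X]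
  [NormedAddCommGroup Y] [InnerProductSpace 𝕜 Y] [CompleteSpace Y]
  {U : X →L[𝕜] Y} {T : X →L[𝕜] X} {R : Y →L[𝕜] Y}

theorem adjoint_comp_adjoint_eq_of_comp_eq (hUT : U ∘L T = R ∘L U) :
    adjoint U ∘L adjoint R = adjoint T ∘L adjoint U := by
  rw [← ContinuousLinearMap.adjoint_comp, ← hUT, ContinuousLinearMap.adjoint_comp]

theorem transplant_adjoint_apply_eq (hUT : U ∘L T = R ∘L U) {H : X → X}
    (hTH : ∀ f, T (H f) = H (adjoint T f)) (y : Y) :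
    U (H (adjoint U (adjoint R y))) = R (U (H (adjoint U y))) :=
  calc
    U (H (adjoint U (adjoint R y))) = U (H (adjoint T (adjoint U y))) :=
      congrArg (U ∘ H) (DFunLike.congr_fun (adjoint_comp_adjoint_eq_of_comp_eq hUT) y)
    _ = U (T (H (adjoint U y))) := by rw [hTH]
    _ = R (U (H (adjoint U y))) := DFunLike.congr_fun hUT _

end Intertwining

section Shift

variable {𝕜 E : Type*} [RCLike 𝕜] [NormedAddCommGroup E] [InnerProductSpace 𝕜 E]
  {S Sstar : lp (fun _ : ℕ => E) 2 →L[𝕜] lp (fun _ : ℕ => E) 2}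

theorem inner_forwardShift_right
    (hS0 : ∀ x, S x 0 = 0) (hSsucc : ∀ x n, S x (n + 1) = x n)
    (hSstar : ∀ x n, Sstar x n = x (n + 1)) (x y : lp (fun _ : ℕ => E) 2) :
    ⟪x, S y⟫_𝕜 = ⟪Sstar x, y⟫_𝕜 :=
  calc
    ⟪x, S y⟫_𝕜 = ⟪x 0, S y 0⟫_𝕜 + ∑' n, ⟪x (n + 1), S y (n + 1)⟫_𝕜 := by
      rw [lp.inner_eq_tsum, (lp.summable_inner (𝕜 := 𝕜) x (S y)).tsum_eq_zero_add]
    _ = ∑' n, ⟪Sstar x n, y n⟫_𝕜 := by simp only [hS0, hSsucc, hSstar, inner_zero_right, zero_add]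
    _ = ⟪Sstar x, y⟫_𝕜 := (lp.inner_eq_tsum _ _).symm

theorem adjoint_backwardShift_eq_forwardShift [CompleteSpace E]
    (hS0 : ∀ x, S x 0 = 0) (hSsucc : ∀ x n, S x (n + 1) = x n)
    (hSstar : ∀ x n, Sstar x n = x (n + 1)) :
    adjoint Sstar = S :=
  ContinuousLinearMap.ext fun y => ext_inner_left 𝕜 fun x => by
    rw [ContinuousLinearMap.adjoint_inner_right, inner_forwardShift_right hS0 hSsucc hSstar]

end Shift

theorem comp_eq_backwardShift_comp_of_apply_eq_pow
    {𝕜 X E : Type*} [NormedField 𝕜]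
    [NormedAddCommGroup X] [NormedSpace 𝕜 X] [NormedAddCommGroup E] [NormedSpace 𝕜 E]
    {p : ENNReal} [Fact (1 ≤ p)] {C : X → E} {T : X →L[𝕜] X}
    {U : X →L[𝕜] lp (fun _ : ℕ => E) p} (hU : ∀ f k, U f k = C ((T ^ k) f))
    {Sstar : lp (fun _ : ℕ => E) p →L[𝕜] lp (fun _ : ℕ => E) p}
    (hSstar : ∀ x n, Sstar x n = x (n + 1)) :
    U ∘L T = Sstar ∘L U := by
  ext f k
  calc
    U (T f) k = C ((T ^ (k + 1)) f) := by rw [hU, pow_succ, mul_apply_eq_comp]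
    _ = Sstar (U f) k := by rw [hSstar, hU]

theorem transplanted_operator_is_hankel_general
    {𝕜 X E : Type*} [RCLike 𝕜]
    [NormedAddCommGroup X] [InnerProductSpace 𝕜 X] [CompleteSpace X]
    [NormedAddCommGroup E] [InnerProductSpace 𝕜 E] [CompleteSpace E]
    (C : X → E) (T : X →L[𝕜] X) (H : X → X)
    (hadd : ∀ f g, H (f + g) = H f + H g)
    (hsmul : ∀ (c : 𝕜) f, H (c • f) = conj c • H f)
    (hbdd : ∃ Cb : ℝ, ∀ f, ‖H f‖ ≤ Cb * ‖f‖)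
    (hTH : ∀ f, T (H f) = H (adjoint T f))
    (U : X →L[𝕜] lp (fun _ : ℕ => E) 2)
    (hU : ∀ f k, U f k = C ((T ^ k) f))
    (S Sstar : lp (fun _ : ℕ => E) 2 →L[𝕜] lp (fun _ : ℕ => E) 2)
    (hS0 : ∀ x, S x 0 = 0)
    (hSsucc : ∀ x n, S x (n + 1) = x n)
    (hSstar : ∀ x n, Sstar x n = x (n + 1))
    (A : lp (fun _ : ℕ => E) 2 → lp (fun _ : ℕ => E) 2)
    (hA : ∀ y, A y = U (H (adjoint U y))) :
    (∀ y z, A (y + z) = A y + A z) ∧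
    (∀ (c : 𝕜) y, A (c • y) = conj c • A y) ∧
    (∃ Cb : ℝ, ∀ y, ‖A y‖ ≤ Cb * ‖y‖) ∧
    (∀ y, A (S y) = Sstar (A y)) := by
  let antilinearH : X →L⋆[𝕜] X :=
    LinearMap.mkContinuousOfExistsBound ⟨⟨H, hadd⟩, hsmul⟩ hbdd
  let transplant : lp (fun _ : ℕ => E) 2 →L⋆[𝕜] lp (fun _ : ℕ => E) 2 :=
    U.comp (antilinearH.comp (adjoint U))
  obtain rfl : A = transplant := funext hA
  refine ⟨map_add transplant, map_smulₛₗ transplant, ⟨‖transplant‖, transplant.le_opNorm⟩,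
    fun y => ?_⟩
  rw [← adjoint_backwardShift_eq_forwardShift hS0 hSsucc hSstar]
  exact transplant_adjoint_apply_eq (comp_eq_backwardShift_comp_of_apply_eq_pow hU hSstar) hTH y

/-- **Transplanting a symmetric anti-linear operator to a Hankel operator on `ℓ²`.**
With `T`, `q`, and the isometry `U` (given by `(Uf)ₖ = ⟨Tᵏf, q⟩`) as in the construction,
suppose `H` is a bounded symmetric conjugate-linear map on `X` with `T∘H = H∘T*`. Then
`A := U∘H∘U*` is a bounded conjugate-linear map on `ℓ²(ℕ, ℂ)` satisfying `A∘S = S*∘A`,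
i.e. `A` is an anti-linear Hankel operator. -/
theorem transplanted_operator_is_hankel
    {X : Type*} [NormedAddCommGroup X] [InnerProductSpace ℂ X] [CompleteSpace X]
    (q : X) (T : X →L[ℂ] X)
    (hT : ∀ f : X, (ContinuousLinearMap.adjoint T) (T f) = f - ⟪q, f⟫_ℂ • q)
    (hstab : ∀ f : X, Tendsto (fun n : ℕ => (T ^ n) f) atTop (nhds 0))
    (H : X → X)
    (hadd : ∀ f g : X, H (f + g) = H f + H g)
    (hsmul : ∀ (c : ℂ) (f : X), H (c • f) = conj c • H f)
    (hbdd : ∃ Cb : ℝ, ∀ f : X, ‖H f‖ ≤ Cb * ‖f‖)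
    (hsym : ∀ f g : X, ⟪H f, g⟫_ℂ = ⟪H g, f⟫_ℂ)
    (hTH : ∀ f : X, T (H f) = H ((ContinuousLinearMap.adjoint T) f))
    (U : X →ₗᵢ[ℂ] lp (fun _ : ℕ => ℂ) 2)
    (hU : ∀ (f : X) (k : ℕ), U f k = ⟪q, (T ^ k) f⟫_ℂ)
    (S Sstar : lp (fun _ : ℕ => ℂ) 2 →L[ℂ] lp (fun _ : ℕ => ℂ) 2)
    (hS0 : ∀ x : lp (fun _ : ℕ => ℂ) 2, S x 0 = 0)
    (hSsucc : ∀ (x : lp (fun _ : ℕ => ℂ) 2) (n : ℕ), S x (n + 1) = x n)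
    (hSstar : ∀ (x : lp (fun _ : ℕ => ℂ) 2) (n : ℕ), Sstar x n = x (n + 1))
    (A : lp (fun _ : ℕ => ℂ) 2 → lp (fun _ : ℕ => ℂ) 2)
    (hA : ∀ y : lp (fun _ : ℕ => ℂ) 2,
      A y = U (H ((ContinuousLinearMap.adjoint U.toContinuousLinearMap) y))) :
    (∀ y z : lp (fun _ : ℕ => ℂ) 2, A (y + z) = A y + A z) ∧
    (∀ (c : ℂ) (y : lp (fun _ : ℕ => ℂ) 2), A (c • y) = conj c • A y) ∧
    (∃ Cb : ℝ, ∀ y : lp (fun _ : ℕ => ℂ) 2, ‖A y‖ ≤ Cb * ‖y‖) ∧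
    (∀ y : lp (fun _ : ℕ => ℂ) 2, A (S y) = Sstar (A y)) :=
  transplanted_operator_is_hankel_general (fun f => ⟪q, f⟫_ℂ) T H hadd hsmul hbdd hTH
    U.toContinuousLinearMap hU S Sstar hS0 hSsucc hSstar A hA
end

section
/- Let ν be a finite positive regular Borel measure on the unit circle 𝕋 = {z ∈ ℂ : |z| = 1} that is singular with respect to the Haar (arc-length/Lebesgue) measure on 𝕋. Then there exist a constant c > 0 and a sequence of polynomials φₙ ∈ ℂ[X] (analytic polynomials in z) such that: (1) sup_{z∈𝕋} |φₙ(z)| ≤ 1 for all n; (2) φₙ(z) → 0 as n → ∞ for Haar-almost every z ∈ 𝕋; (3) liminf_{n→∞} |φₙ(z)| ≥ c for ν-almost every z ∈ 𝕋. -/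
open MeasureTheory Filter
open scoped Real

/-!
Since `z̄ = z⁻¹` on the circle, every trigonometric polynomial is `p + q̄` for analytic polynomials
`p` and `q`, so the real parts of analytic polynomials are uniformly dense in the real continuous
functions. As `|exp f| = exp (Re f)` and `exp f` is a uniform limit of polynomials in `f`, the
moduli of analytic polynomials are dense in the positive continuous functions. The singular measure
`ν` is exhausted by closed sets `Kₙ` which have open neighbourhoods `Uₙ` of summable Haar measure;
one takes `|φₙ|` close to an Urysohn function for `Kₙ ⊆ Uₙ` and concludes with Borel–Cantelli.
-/

section Dirichlet

variable {X : Type*} [TopologicalSpace X]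

/-- The real parts `Re f` of the functions `f ∈ A`, whose density defines Dirichlet algebras. -/
def realParts (A : Subalgebra ℂ C(X, ℂ)) : Set C(X, ℝ) :=
  ContinuousMap.comp ⟨Complex.re, Complex.continuous_re⟩ '' A

/-- The moduli `|f|` of the functions `f ∈ A`, to be shown dense in the positive functions. -/
def moduli (A : Subalgebra ℂ C(X, ℂ)) : Set C(X, ℝ) :=
  ContinuousMap.comp (⟨norm, continuous_norm⟩ : C(ℂ, ℝ)) '' A

/-- Dirichlet algebras: subalgebras of `C(X, ℂ)`, for `X` compact, whose real parts are uniformly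
dense in `C(X, ℝ)`. The algebra is not required to be closed, so that polynomials qualify. -/
def IsDirichlet (A : Subalgebra ℂ C(X, ℂ)) : Prop :=
  Dense (realParts A)

theorem exp_comp_mem_closure_moduli [CompactSpace X] {A : Subalgebra ℂ C(X, ℂ)} {u : C(X, ℝ)}
    (hu : u ∈ realParts A) :
    ContinuousMap.comp ⟨Real.exp, Real.continuous_exp⟩ u ∈ closure (moduli A) := by
  obtain ⟨f, hf, rfl⟩ := hu
  have hexp : NormedSpace.exp f ∈ closure (A : Set C(X, ℂ)) :=
    NormedSpace.exp_mem (R := ℂ) A.isClosed_topologicalClosure (A.le_topologicalClosure hf)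
  refine image_closure_subset_closure_image (ContinuousMap.continuous_postcomp _)
    ⟨NormedSpace.exp f, hexp, ?_⟩
  ext x
  simp [NormedSpace.exp_continuousMap_eq, ← Complex.exp_eq_exp_ℂ, Complex.norm_exp]

namespace IsDirichlet

variable [CompactSpace X] {A : Subalgebra ℂ C(X, ℂ)}

theorem mem_closure_moduli_of_pos (hA : IsDirichlet A) {v : C(X, ℝ)} (hv : ∀ x, 0 < v x) :
    v ∈ closure (moduli A) := by
  let logv : C(X, ℝ) := ⟨fun x => Real.log (v x), v.continuous.log fun x => (hv x).ne'⟩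
  have hlogv : ContinuousMap.comp ⟨Real.exp, Real.continuous_exp⟩ logv = v := by
    ext x
    exact Real.exp_log (hv x)
  rw [← hlogv, ← closure_closure (s := moduli A)]
  exact map_mem_closure (ContinuousMap.continuous_postcomp _) (hA logv)
    fun _ => exp_comp_mem_closure_moduli

theorem exists_norm_le_one_abs_norm_sub_lt (hA : IsDirichlet A) {v : C(X, ℝ)}
    (hv : ∀ x, v x ∈ Set.Icc 0 1) {ε : ℝ} (hε : 0 < ε) :
    ∃ f ∈ A, ∀ x, ‖f x‖ ≤ 1 ∧ |‖f x‖ - v x| < ε := by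
  obtain ⟨δ, hδ, hδε⟩ : ∃ δ, 0 < δ ∧ δ < min (ε / 2) (1 / 2) := exists_between (by positivity)
  obtain ⟨hδε, hδ2⟩ := lt_min_iff.1 hδε
  -- Squeezing `v` into `[δ, 1 - δ]` leaves room for an approximation error of `δ`.
  let w : C(X, ℝ) := ⟨fun x => δ + (1 - 2 * δ) * v x, by fun_prop⟩
  have hw : ∀ x, 0 < w x := fun x =>
    add_pos_of_pos_of_nonneg hδ (mul_nonneg (by linarith) (hv x).1)
  obtain ⟨_, ⟨f, hfA, rfl⟩, hf⟩ := Metric.mem_closure_iff.1 (hA.mem_closure_moduli_of_pos hw) δ hδ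
  refine ⟨f, hfA, fun x => ?_⟩
  have hfx : |δ + (1 - 2 * δ) * v x - ‖f x‖| < δ :=
    (ContinuousMap.dist_apply_le_dist x).trans_lt hf
  obtain ⟨hlower, hupper⟩ := abs_lt.1 hfx
  have hv0 : 0 ≤ δ * v x := mul_nonneg hδ.le (hv x).1
  have hv1 : δ * v x ≤ δ := mul_le_of_le_one_right hδ.le (hv x).2
  have hscaled : (1 - 2 * δ) * v x ≤ 1 - 2 * δ := mul_le_of_le_one_right (by linarith) (hv x).2
  exact ⟨by linarith, abs_lt.2 ⟨by linarith, by linarith⟩⟩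

theorem exists_norm_separating [NormalSpace X] (hA : IsDirichlet A) {K U : Set X}
    (hK : IsClosed K) (hU : IsOpen U) (hKU : K ⊆ U) {ε : ℝ} (hε : 0 < ε) :
    ∃ f ∈ A, (∀ x, ‖f x‖ ≤ 1) ∧ (∀ x ∈ K, 1 - ε < ‖f x‖) ∧ ∀ x ∉ U, ‖f x‖ < ε := by
  obtain ⟨u, hu0, hu1, hu⟩ := exists_continuous_zero_one_of_isClosed hU.isClosed_compl hK
    (Set.disjoint_compl_left_iff_subset.2 hKU)
  obtain ⟨f, hfA, hf⟩ := hA.exists_norm_le_one_abs_norm_sub_lt hu hε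
  refine ⟨f, hfA, fun x => (hf x).1, fun x hx => ?_, fun x hx => ?_⟩
  · have hfx := (abs_lt.1 (hf x).2).1
    rw [hu1 hx, Pi.one_apply] at hfx
    linarith
  · simpa [hu0 hx] using (hf x).2

end IsDirichlet

end Dirichlet

section MutuallySingular

theorem exists_isClosed_subset_isOpen_of_mutuallySingular {X : Type*} [TopologicalSpace X]
    [MeasurableSpace X] [OpensMeasurableSpace X] {ν μ : Measure X} [IsFiniteMeasure ν]
    [ν.WeaklyRegular] [μ.OuterRegular] (hsing : ν ⟂ₘ μ) :
    ∃ K U : ℕ → Set X, (∀ n, IsClosed (K n)) ∧ (∀ n, IsOpen (U n)) ∧ (∀ n, K n ⊆ U n) ∧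
      (∀ᵐ x ∂ν, ∀ᶠ n in atTop, x ∈ K n) ∧ ∀ᵐ x ∂μ, ∀ᶠ n in atTop, x ∉ U n := by
  obtain ⟨E, hE, hνE, hμE⟩ := hsing
  obtain ⟨δ, hδ, hδsum⟩ := ENNReal.exists_pos_sum_of_countable' one_ne_zero ℕ
  have summable_of_lt {a : ℕ → ENNReal} (ha : ∀ n, a n < δ n) : ∑' n, a n ≠ ⊤ :=
    ((ENNReal.tsum_le_tsum fun n => (ha n).le).trans_lt (hδsum.trans ENNReal.one_lt_top)).ne
  choose K hKE hKclosed hνK using fun n =>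
    hE.compl.exists_isClosed_sdiff_lt (measure_ne_top ν _) (hδ n).ne'
  choose U hKU hUopen hμU using fun n =>
    (K n).exists_isOpen_lt_of_lt (δ n) ((measure_mono_null (hKE n) hμE).trans_lt (hδ n))
  refine ⟨K, U, hKclosed, hUopen, hKU, ?_, ae_eventually_notMem (summable_of_lt hμU)⟩
  filter_upwards [measure_eq_zero_iff_ae_notMem.1 hνE, ae_eventually_notMem (summable_of_lt hνK)]
    with x hxE hxK
  exact hxK.mono fun n hn => not_not.1 fun hxKn => hn ⟨hxE, hxKn⟩

theorem mutuallySingular_comap {α β : Type*} [MeasurableSpace α] [MeasurableSpace β] {f : α → β}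
    (hf : MeasurableEmbedding f) {ν μ : Measure β} (hsing : ν ⟂ₘ μ) :
    ν.comap f ⟂ₘ μ.comap f := by
  obtain ⟨E, hE, hνE, hμE⟩ := hsing
  refine ⟨f ⁻¹' E, hf.measurable hE, ?_, ?_⟩
  · exact hf.comap_preimage ν E ▸ measure_inter_null_of_null_left _ hνE
  · exact hf.comap_preimage μ Eᶜ ▸ measure_inter_null_of_null_left _ hμE

theorem IsDirichlet.exists_seq_of_mutuallySingular {X : Type*} [TopologicalSpace X]
    [CompactSpace X] [NormalSpace X] [MeasurableSpace X] [OpensMeasurableSpace X]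
    {A : Subalgebra ℂ C(X, ℂ)} (hA : IsDirichlet A) {ν μ : Measure X} [IsFiniteMeasure ν]
    [ν.WeaklyRegular] [μ.OuterRegular] (hsing : ν ⟂ₘ μ) :
    ∃ f : ℕ → C(X, ℂ), (∀ n, f n ∈ A) ∧ (∀ n x, ‖f n x‖ ≤ 1) ∧
      (∀ᵐ x ∂μ, Tendsto (fun n => f n x) atTop (nhds 0)) ∧
      ∀ᵐ x ∂ν, Tendsto (fun n => ‖f n x‖) atTop (nhds 1) := by
  obtain ⟨K, U, hK, hU, hKU, hνK, hμU⟩ := exists_isClosed_subset_isOpen_of_mutuallySingular hsing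
  choose f hfA hf1 hfK hfU using fun n : ℕ =>
    hA.exists_norm_separating (hK n) (hU n) (hKU n) (Nat.one_div_pos_of_nat (α := ℝ) (n := n))
  have hε := tendsto_one_div_add_atTop_nhds_zero_nat (𝕜 := ℝ)
  refine ⟨f, hfA, hf1, hμU.mono fun x hx => ?_, hνK.mono fun x hx => ?_⟩
  · exact squeeze_zero_norm' (hx.mono fun n hn => (hfU n x hn).le) hε
  · refine tendsto_of_tendsto_of_tendsto_of_le_of_le' (by simpa using hε.const_sub 1)
      tendsto_const_nhds (hx.mono fun n hn => (hfK n x hn).le) (.of_forall fun n => hf1 n x)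

end MutuallySingular

section Circle

theorem exists_eval_add_conj_eval_of_mem_span_fourier {T : ℝ} {g : C(AddCircle T, ℂ)}
    (hg : g ∈ Submodule.span ℂ (Set.range (fourier (T := T)))) :
    ∃ p q : Polynomial ℂ, ∀ x : AddCircle T,
      g x = p.eval (x.toCircle : ℂ) + star (q.eval (x.toCircle : ℂ)) := by
  induction hg using Submodule.span_induction with
  | mem g hg =>
    obtain ⟨n, rfl⟩ := hg
    obtain ⟨k, rfl | rfl⟩ := n.eq_nat_or_neg
    · exact ⟨.X ^ k, 0, fun x => by simp [AddCircle.toCircle_nsmul]⟩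
    · exact ⟨0, .X ^ k, fun x => by rw [fourier_neg]; simp [AddCircle.toCircle_nsmul]⟩
  | zero => exact ⟨0, 0, by simp⟩
  | add g₁ g₂ _ _ h₁ h₂ =>
    obtain ⟨p₁, q₁, h₁⟩ := h₁
    obtain ⟨p₂, q₂, h₂⟩ := h₂
    refine ⟨p₁ + p₂, q₁ + q₂, fun x => ?_⟩
    rw [ContinuousMap.add_apply, h₁, h₂, Polynomial.eval_add, Polynomial.eval_add, star_add]
    ring
  | smul a g _ h =>
    obtain ⟨p, q, h⟩ := h
    exact ⟨.C a * p, .C (star a) * q, fun x => by simp [h, mul_add]⟩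

theorem exists_toCircle_coe_eq {z : ℂ} (hz : ‖z‖ = 1) :
    ∃ x : UnitAddCircle, (x.toCircle : ℂ) = z := by
  obtain ⟨x, hx⟩ := (AddCircle.homeomorphCircle one_ne_zero).surjective
    (⟨z, mem_sphere_zero_iff_norm.2 hz⟩ : Circle)
  exact ⟨x, by rw [← AddCircle.homeomorphCircle_apply one_ne_zero, hx]⟩

theorem isDirichlet_polynomialFunctions_sphere :
    IsDirichlet (polynomialFunctions (Metric.sphere (0 : ℂ) 1)) := by
  refine Metric.dense_iff.2 fun u ε hε => ?_
  let pullback : C(UnitAddCircle, ℂ) :=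
    ⟨fun x => u ⟨x.toCircle, x.toCircle.2⟩, by
      have := AddCircle.continuous_toCircle (T := 1)
      fun_prop⟩
  obtain ⟨g, hdist, hg⟩ := Metric.dense_iff.1
    (Submodule.dense_iff_topologicalClosure_eq_top.2 span_fourier_closure_eq_top) pullback ε hε
  obtain ⟨p, q, hpq⟩ := exists_eval_add_conj_eval_of_mem_span_fourier hg
  refine ⟨_, ?_, _, ⟨p + q, trivial, rfl⟩, rfl⟩
  refine (ContinuousMap.dist_lt_iff hε).2 fun z => ?_
  obtain ⟨x, hx⟩ := exists_toCircle_coe_eq (mem_sphere_zero_iff_norm.1 z.2)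
  have hre : (g x - pullback x).re = ((p + q).eval (z : ℂ)).re - u z := by
    simp [hpq, pullback, hx]
  calc |((p + q).eval (z : ℂ)).re - u z|
      = |(g x - pullback x).re| := by rw [hre]
    _ ≤ dist (g x) (pullback x) := (Complex.abs_re_le_norm _).trans_eq (dist_eq_norm _ _).symm
    _ ≤ dist g pullback := ContinuousMap.dist_apply_le_dist x
    _ < ε := hdist

end Circle

theorem ae_map_exp_mul_I_norm_eq_one (μ : Measure ℝ) :
    ∀ᵐ z ∂μ.map fun t : ℝ => Complex.exp (t * Complex.I), ‖z‖ = 1 := by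
  rw [ae_map_iff (by fun_prop) (measurableSet_eq_fun (by fun_prop) (by fun_prop))]
  exact .of_forall Complex.norm_exp_ofReal_mul_I

theorem ae_of_ae_comap_toFinite {α : Type*} [MeasurableSpace α] {μ : Measure α} [SFinite μ]
    {s : Set α} (hs : MeasurableSet s) (hμs : ∀ᵐ x ∂μ, x ∈ s) {p : α → Prop}
    (hp : ∀ᵐ x : s ∂μ.toFinite.comap (↑), p x) : ∀ᵐ x ∂μ, p x := by
  rw [← ae_toFinite] at hμs ⊢
  rw [← Measure.restrict_eq_self_of_ae_mem hμs]
  exact (ae_restrict_iff_subtype hs).2 hp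

theorem singular_measure_polynomials_general {ν μ : Measure ℂ} [SFinite ν] [SFinite μ]
    (hν : ∀ᵐ z ∂ν, ‖z‖ = 1) (hμ : ∀ᵐ z ∂μ, ‖z‖ = 1) (hsing : ν ⟂ₘ μ) :
    ∃ φ : ℕ → Polynomial ℂ,
      (∀ (n : ℕ) (z : ℂ), ‖z‖ = 1 → ‖(φ n).eval z‖ ≤ 1) ∧
      (∀ᵐ z ∂μ, Tendsto (fun n => (φ n).eval z) atTop (nhds 0)) ∧
      ∀ᵐ z ∂ν, Tendsto (fun n => ‖(φ n).eval z‖) atTop (nhds 1) := by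
  have hS : MeasurableSet (Metric.sphere (0 : ℂ) 1) := Metric.isClosed_sphere.measurableSet
  have hcomap := mutuallySingular_comap (.subtype_coe hS)
    (hsing.mono_ac (toFinite_absolutelyContinuous ν) (toFinite_absolutelyContinuous μ))
  obtain ⟨f, hfA, hf1, hfμ, hfν⟩ :=
    isDirichlet_polynomialFunctions_sphere.exists_seq_of_mutuallySingular hcomap
  choose φ _ hφ using hfA
  obtain rfl : (fun n => (φ n).toContinuousMapOn _) = f := funext hφ
  refine ⟨φ, fun n z hz => hf1 n ⟨z, mem_sphere_zero_iff_norm.2 hz⟩, ?_, ?_⟩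
  · exact ae_of_ae_comap_toFinite hS (hμ.mono fun _ => mem_sphere_zero_iff_norm.2) hfμ
  · exact ae_of_ae_comap_toFinite hS (hν.mono fun _ => mem_sphere_zero_iff_norm.2) hfν

/-- **Analytic polynomials separating a singular measure from Haar measure on the circle.**
Let `ν` be a finite Borel measure on `ℂ` carried by the unit circle and mutually singular
with respect to the Haar (arc-length) measure `haar` on the circle (realized as the image
of Lebesgue measure on `(0, 2π]` under `t ↦ e^{it}`). Then there are `c > 0` and analytic
polynomials `φₙ` with `|φₙ| ≤ 1` on the circle, `φₙ(z) → 0` for Haar-a.e. `z`, and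
`liminf |φₙ(z)| ≥ c` for `ν`-a.e. `z`. -/
theorem singular_measure_polynomials
    (ν : Measure ℂ) [IsFiniteMeasure ν]
    (hcircle : ν {z : ℂ | ‖z‖ ≠ 1} = 0)
    (haar : Measure ℂ)
    (hhaar : haar = Measure.map (fun t : ℝ => Complex.exp (t * Complex.I))
        (volume.restrict (Set.Ioc 0 (2 * π))))
    (hsing : ν.MutuallySingular haar) :
    ∃ c : ℝ, 0 < c ∧ ∃ φ : ℕ → Polynomial ℂ,
      (∀ (n : ℕ) (z : ℂ), ‖z‖ = 1 → ‖(φ n).eval z‖ ≤ 1) ∧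
      (∀ᵐ z ∂haar, Tendsto (fun n : ℕ => (φ n).eval z) atTop (nhds 0)) ∧
      (∀ᵐ z ∂ν, c ≤ Filter.liminf (fun n : ℕ => ‖(φ n).eval z‖) atTop) := by
  subst hhaar
  obtain ⟨φ, hle, hhaar, hν⟩ :=
    singular_measure_polynomials_general hcircle (ae_map_exp_mul_I_norm_eq_one _) hsing
  exact ⟨1, one_pos, φ, hle, hhaar, hν.mono fun z hz => hz.liminf_eq.ge⟩
end

section
/- Let ν be a finite positive Borel measure on ℝ and let g : ℝ → ℂ be ν-integrable (so that dμ = g dν is a complex Borel measure of bounded variation). Define the Fourier transform μ̂(t) := ∫_ℝ e^{−itλ} g(λ) dν(λ) for t ∈ ℝ. Assume μ̂ is (Bohr) almost periodic: for every ε > 0 there exist finitely many frequencies λ₁, …, λ_m ∈ ℝ and coefficients c₁, …, c_m ∈ ℂ such that sup_{t∈ℝ} |μ̂(t) − Σ_{j=1}^m c_j e^{−iλ_j t}| ≤ ε. Then μ is pure point: there exists a countable set D ⊆ ℝ such that ∫_{ℝ∖D} |g(λ)| dν(λ) = 0. -/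
open MeasureTheory Filter
open scoped BigOperators

/-!
The atoms of `ν` form a countable set `D`, and the transform of the part of `g dν` carried by `D`
is a uniformly convergent series of exponentials. So the transform `f` of the atomless part is
again almost periodic. By Wiener's lemma the averages `N⁻¹ ∑_{k < N} |f(s + k)|²` tend to `0` for
each `s`, so any finitely many translates of `f` are simultaneously small at some point. The
translates of an almost periodic function are totally bounded in the uniform norm, hence such an
`f` vanishes identically, and uniqueness of Fourier transforms kills the atomless part.
-/

section Generic

open scoped Topology

theorem tendsto_inv_mul_geom_sum_nhds_zero {𝕜 : Type*} [RCLike 𝕜] {w : 𝕜} (hw : ‖w‖ ≤ 1)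
    (hw1 : w ≠ 1) :
    Tendsto (fun N : ℕ => (N : 𝕜)⁻¹ * ∑ k ∈ Finset.range N, w ^ k) atTop (𝓝 0) := by
  have hbound : Tendsto (fun N : ℕ => (N : ℝ)⁻¹ * (2 / ‖w - 1‖)) atTop (𝓝 0) := by
    simpa using (tendsto_inv_atTop_nhds_zero_nat (𝕜 := ℝ)).mul_const (2 / ‖w - 1‖)
  refine squeeze_zero_norm (fun N => ?_) hbound
  rw [geom_sum_eq hw1, norm_mul, norm_inv, RCLike.norm_natCast, norm_div]
  gcongr
  calc ‖w ^ N - 1‖ ≤ ‖w‖ ^ N + 1 := by simpa using norm_sub_le (w ^ N) 1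
    _ ≤ 2 := by linarith [pow_le_one₀ (n := N) (norm_nonneg w) hw]

theorem norm_inv_mul_geom_sum_le_one {𝕜 : Type*} [RCLike 𝕜] {w : 𝕜} (hw : ‖w‖ ≤ 1) (N : ℕ) :
    ‖(N : 𝕜)⁻¹ * ∑ k ∈ Finset.range N, w ^ k‖ ≤ 1 := by
  have hsum : ‖∑ k ∈ Finset.range N, w ^ k‖ ≤ N := by
    refine (norm_sum_le_of_le _ fun k _ => ?_).trans_eq (b := ∑ _k ∈ Finset.range N, (1 : ℝ))
      (by simp)
    simpa using pow_le_one₀ (norm_nonneg w) hw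
  rw [norm_mul, norm_inv, RCLike.norm_natCast]
  exact inv_mul_le_one_of_le₀ hsum N.cast_nonneg

theorem exists_finset_forall_dist_lt_of_totallyBounded_range {α β : Type*} [PseudoMetricSpace β]
    {f : α → β} (hf : TotallyBounded (Set.range f)) {ε : ℝ} (hε : 0 < ε) :
    ∃ S : Finset α, ∀ a, ∃ b ∈ S, dist (f a) (f b) < ε := by
  rw [← Set.image_univ] at hf
  obtain ⟨s, -, hs, hcover⟩ := Set.exists_subset_image_finite_and.1
    (Metric.finite_approx_of_totallyBounded hf ε hε)
  refine ⟨hs.toFinset, fun a => ?_⟩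
  simpa using hcover ⟨a, trivial, rfl⟩

variable {α : Type*} [MeasurableSpace α]

theorem exists_measurableSet_sigmaFinite_restrict_ae_compl_eq_zero {E : Type*}
    [NormedAddCommGroup E] {μ : Measure α} {g : α → E} (hg : Integrable g μ) :
    ∃ A, MeasurableSet A ∧ SigmaFinite (μ.restrict A) ∧ ∀ᵐ x ∂μ, x ∉ A → g x = 0 :=
  have hfin := hg.aefinStronglyMeasurable
  ⟨hfin.sigmaFiniteSet, hfin.measurableSet, hfin.sigmaFinite_restrict,
    (ae_restrict_iff' hfin.measurableSet.compl).1 hfin.ae_eq_zero_compl⟩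

theorem integrable_prod_mul_conj {𝕜 : Type*} [RCLike 𝕜] {μ : Measure α} {g : α → 𝕜}
    (hg : Integrable g μ) :
    Integrable (fun z : α × α => g z.1 * starRingEnd 𝕜 (g z.2)) (μ.prod μ) :=
  hg.mul_prod ((RCLike.conjLIE (K := 𝕜)).integrable_comp_iff.2 hg)

variable [MeasurableSingletonClass α]

theorem countable_setOf_measure_singleton_ne_zero (μ : Measure α) [SFinite μ] :
    {x | μ {x} ≠ 0}.Countable := by
  simpa only [pos_iff_ne_zero] using Measure.countable_meas_pos_of_disjoint_iUnion (μ := μ)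
    (As := fun x : α => {x}) measurableSet_singleton
    fun x y hxy => Set.disjoint_singleton.2 hxy

theorem nullSingletonClass_restrict_compl_setOf_measure_singleton_ne_zero (μ : Measure α) :
    NullSingletonClass (μ.restrict {x | μ {x} ≠ 0}ᶜ) where
  measure_singleton x := by
    rw [Measure.restrict_apply (measurableSet_singleton x)]
    by_cases hx : μ {x} = 0
    · exact measure_mono_null Set.inter_subset_left hx
    · simp [hx]

theorem summable_measureReal_singleton_mul_norm {E : Type*} [NormedAddCommGroup E]
    {μ : Measure α} {g : α → E} (hg : Integrable g μ) {D : Set α} (hD : D.Countable) :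
    Summable fun x : D => μ.real {(x : α)} * ‖g x‖ := by
  have := hD.to_subtype
  have hsum := hasSum_integral_iUnion (μ := μ) (f := fun x => ‖g x‖)
    (s := fun x : D => {(x : α)}) (fun x => measurableSet_singleton _)
    (fun x y hxy => by simpa [Function.onFun, Subtype.ext_iff] using hxy) hg.norm.integrableOn
  simpa only [integral_singleton, smul_eq_mul] using hsum.summable

end Generic

section AlmostPeriodic

open Real (probChar)

variable {E F : Type*} [NormedAddCommGroup E] [NormedSpace ℂ E]
  [NormedAddCommGroup F] [NormedSpace ℂ F]

/-- The trigonometric polynomial `t ↦ ∑ e^{-iλt} c(λ)`, encoded by its finitely supported family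
of coefficients `c`. -/
noncomputable def trigPolynomial (c : ℝ →₀ E) (t : ℝ) : E :=
  c.sum fun lam a => probChar (-(lam * t)) • a

theorem trigPolynomial_single (lam : ℝ) (a : E) (t : ℝ) :
    trigPolynomial (Finsupp.single lam a) t = probChar (-(lam * t)) • a :=
  Finsupp.sum_single_index (smul_zero _)

theorem trigPolynomial_sub (c d : ℝ →₀ E) (t : ℝ) :
    trigPolynomial (c - d) t = trigPolynomial c t - trigPolynomial d t :=
  Finsupp.sum_sub_index fun _ _ _ => smul_sub _ _ _

theorem trigPolynomial_finsetSum {ι : Type*} (s : Finset ι) (c : ι → ℝ →₀ E) (t : ℝ) :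
    trigPolynomial (∑ i ∈ s, c i) t = ∑ i ∈ s, trigPolynomial (c i) t :=
  (Finsupp.sum_finsetSum_index (fun _ => smul_zero _) fun _ _ _ => smul_add _ _ _).symm

theorem trigPolynomial_mapRange (L : E →L[ℂ] F) (c : ℝ →₀ E) (t : ℝ) :
    trigPolynomial (c.mapRange L (map_zero L)) t = L (trigPolynomial c t) := by
  rw [trigPolynomial, Finsupp.sum_mapRange_index fun _ => smul_zero _, trigPolynomial,
    map_finsuppSum]
  simp only [Circle.smul_def, map_smul]

theorem trigPolynomial_add_right (c : ℝ →₀ E) (x t : ℝ) :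
    trigPolynomial c (x + t) =
      ∑ lam : c.support, probChar (-(lam * x)) • probChar (-(lam * t)) • c lam := by
  rw [Finset.sum_coe_sort c.support
    fun lam => probChar (-(lam * x)) • probChar (-(lam * t)) • c lam]
  refine Finset.sum_congr rfl fun lam _ => ?_
  rw [smul_smul, ← AddChar.map_add_eq_mul, ← neg_add, ← mul_add]

theorem exists_finset_norm_trigPolynomial_translate_sub_le (c : ℝ →₀ E) {η : ℝ} (hη : 0 < η) :
    ∃ S : Finset ℝ, ∀ t, ∃ τ ∈ S, ∀ x,
      ‖trigPolynomial c (x + t) - trigPolynomial c (x + τ)‖ ≤ η := by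
  let orbit : ℝ → c.support → E := fun t lam => probChar (-(lam * t)) • c lam
  have horbit : TotallyBounded (Set.range orbit) := by
    have hcompact : IsCompact (Set.univ.pi fun lam : c.support =>
        Set.range fun z : Circle => z • c lam) :=
      isCompact_univ_pi fun lam => isCompact_range (by fun_prop)
    refine hcompact.totallyBounded.subset ?_
    rintro _ ⟨t, rfl⟩ lam -
    exact ⟨probChar (-(lam * t)), rfl⟩
  obtain ⟨S, hS⟩ := exists_finset_forall_dist_lt_of_totallyBounded_range horbit
    (show 0 < η / (c.support.card + 1) by positivity)
  refine ⟨S, fun t => ?_⟩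
  obtain ⟨τ, hτ, hdist⟩ := hS t
  refine ⟨τ, hτ, fun x => ?_⟩
  calc ‖trigPolynomial c (x + t) - trigPolynomial c (x + τ)‖
      = ‖∑ lam : c.support, probChar (-(lam * x)) • (orbit t lam - orbit τ lam)‖ := by
        simp only [trigPolynomial_add_right, ← Finset.sum_sub_distrib, ← smul_sub, orbit]
    _ ≤ ∑ _lam : c.support, η / (c.support.card + 1) := by
        refine norm_sum_le_of_le _ fun lam _ => ?_
        rw [Circle.norm_smul, ← dist_eq_norm]
        exact (dist_le_pi_dist _ _ lam).trans hdist.le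
    _ ≤ η := by
        rw [Finset.sum_const, Finset.card_univ, Fintype.card_coe, nsmul_eq_mul, mul_div_left_comm]
        refine mul_le_of_le_one_right hη.le ((div_le_one (by positivity)).2 ?_)
        linarith

/-- Bohr almost periodicity, as uniform approximability by trigonometric polynomials. -/
def IsAlmostPeriodic (f : ℝ → E) : Prop :=
  ∀ ε : ℝ, 0 < ε → ∃ c : ℝ →₀ E, ∀ t, ‖f t - trigPolynomial c t‖ ≤ ε

namespace IsAlmostPeriodic

theorem sub {f g : ℝ → E} (hf : IsAlmostPeriodic f) (hg : IsAlmostPeriodic g) :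
    IsAlmostPeriodic (f - g) := by
  intro ε hε
  obtain ⟨c, hc⟩ := hf (ε / 2) (half_pos hε)
  obtain ⟨d, hd⟩ := hg (ε / 2) (half_pos hε)
  refine ⟨c - d, fun t => ?_⟩
  rw [Pi.sub_apply, trigPolynomial_sub, sub_sub_sub_comm]
  exact (norm_sub_le _ _).trans ((add_le_add (hc t) (hd t)).trans_eq (add_halves ε))

theorem continuousLinearMap_comp {f : ℝ → E} (hf : IsAlmostPeriodic f) (L : E →L[ℂ] F) :
    IsAlmostPeriodic fun t => L (f t) := by
  intro ε hε
  obtain ⟨c, hc⟩ := hf (ε / (‖L‖ + 1)) (by positivity)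
  refine ⟨c.mapRange L (map_zero L), fun t => ?_⟩
  calc ‖L (f t) - trigPolynomial (c.mapRange L (map_zero L)) t‖
      = ‖L (f t - trigPolynomial c t)‖ := by rw [trigPolynomial_mapRange, map_sub]
    _ ≤ (‖L‖ + 1) * (ε / (‖L‖ + 1)) :=
        L.le_of_opNorm_le_of_le (by linarith) (hc t)
    _ = ε := mul_div_cancel₀ _ (by positivity)

theorem exists_finset_norm_translate_sub_le {f : ℝ → E} (hf : IsAlmostPeriodic f) {η : ℝ}
    (hη : 0 < η) :
    ∃ S : Finset ℝ, ∀ t, ∃ τ ∈ S, ∀ x, ‖f (x + t) - f (x + τ)‖ ≤ η := by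
  obtain ⟨c, hc⟩ := hf (η / 3) (by positivity)
  obtain ⟨S, hS⟩ := exists_finset_norm_trigPolynomial_translate_sub_le c
    (show 0 < η / 3 by positivity)
  refine ⟨S, fun t => ?_⟩
  obtain ⟨τ, hτ, htranslate⟩ := hS t
  refine ⟨τ, hτ, fun x => ?_⟩
  calc ‖f (x + t) - f (x + τ)‖
      = ‖(f (x + t) - trigPolynomial c (x + t))
          + (trigPolynomial c (x + t) - trigPolynomial c (x + τ))
          + (trigPolynomial c (x + τ) - f (x + τ))‖ := by congr 1; abel
    _ ≤ η / 3 + η / 3 + η / 3 := by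
        refine norm_add₃_le.trans (add_le_add_three (hc _) (htranslate x) ?_)
        rw [norm_sub_rev]
        exact hc _
    _ = η := add_thirds η

theorem eq_zero_of_forall_finset_exists_norm_translate_le {f : ℝ → E} (hf : IsAlmostPeriodic f)
    (hsmall : ∀ (S : Finset ℝ) (η : ℝ), 0 < η → ∃ t, ∀ s ∈ S, ‖f (s + t)‖ ≤ η) : f = 0 := by
  ext s
  refine norm_le_zero_iff.1 (le_of_forall_pos_le_add fun η hη => ?_)
  obtain ⟨S, hS⟩ := hf.exists_finset_norm_translate_sub_le (half_pos hη)
  obtain ⟨t, ht⟩ := hsmall (S.image fun τ => s - τ) (η / 2) (half_pos hη)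
  obtain ⟨τ, hτ, hclose⟩ := hS t
  have hvalue : ‖f (s - τ + t)‖ ≤ η / 2 := ht _ (Finset.mem_image_of_mem _ hτ)
  have hdiff : ‖f (s - τ + t) - f s‖ ≤ η / 2 := by simpa using hclose (s - τ)
  calc ‖f s‖ ≤ ‖f (s - τ + t)‖ + ‖f (s - τ + t) - f s‖ := norm_le_norm_add_norm_sub _ _
    _ ≤ 0 + η := by linarith

end IsAlmostPeriodic

theorem probChar_neg_mul_smul_eq_exp_mul (l t : ℝ) (a : ℂ) :
    probChar (-(l * t)) • a = Complex.exp (-(Complex.I * ((t * l : ℝ) : ℂ))) * a := by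
  rw [Circle.smul_def, smul_eq_mul, Real.probChar_apply]
  push_cast
  ring_nf

theorem isAlmostPeriodic_of_forall_exists_exp_sum {f : ℝ → ℂ}
    (hf : ∀ ε : ℝ, 0 < ε → ∃ (m : ℕ) (lam : Fin m → ℝ) (c : Fin m → ℂ), ∀ t : ℝ,
      ‖f t - ∑ j : Fin m, c j * Complex.exp (-(Complex.I * ((lam j * t : ℝ) : ℂ)))‖ ≤ ε) :
    IsAlmostPeriodic f := by
  intro ε hε
  obtain ⟨m, lam, c, hc⟩ := hf ε hε
  refine ⟨∑ j, Finsupp.single (lam j) (c j), fun t => ?_⟩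
  simpa only [trigPolynomial_finsetSum, trigPolynomial_single, probChar_neg_mul_smul_eq_exp_mul,
    mul_comm] using hc t

end AlmostPeriodic

section FourierStieltjes

open Fourier (fourierIntegral)
open Real (probChar)
open scoped ContDiff FourierTransform Topology

variable {E : Type*} [NormedAddCommGroup E] [NormedSpace ℂ E]

-- Every test function is the Fourier transform of a Schwartz function, and the transform can be
-- moved onto `g`.
theorem ae_eq_zero_of_forall_vectorFourierIntegral_eq_zero {V : Type*} [NormedAddCommGroup V]
    [InnerProductSpace ℝ V] [FiniteDimensional ℝ V] [MeasurableSpace V] [BorelSpace V]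
    [CompleteSpace E] {ν : Measure V} [SigmaFinite ν] {g : V → E} (hg : Integrable g ν)
    (hzero : ∀ w, VectorFourier.fourierIntegral 𝐞 ν (innerₗ V) g w = 0) : g =ᵐ[ν] 0 := by
  refine ae_eq_zero_of_integral_contDiff_smul_eq_zero hg.locallyIntegrable fun ψ hψ hψc => ?_
  have hψc' : HasCompactSupport (Complex.ofRealCLM ∘ ψ) := hψc.comp_left rfl
  let φ : SchwartzMap V ℂ := hψc'.toSchwartzMap (by fun_prop)
  let χ : SchwartzMap V ℂ := 𝓕⁻ φ
  have hχ : VectorFourier.fourierIntegral 𝐞 volume (innerₗ V) χ = φ := by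
    change 𝓕 (χ : V → ℂ) = φ
    rw [← SchwartzMap.fourier_coe, FourierTransform.fourier_fourierInv_eq]
  calc ∫ x, ψ x • g x ∂ν = ∫ x, φ x • g x ∂ν := rfl
    _ = ∫ w, χ w • VectorFourier.fourierIntegral 𝐞 ν (innerₗ V) g w := by
        simpa only [flip_innerₗ, hχ] using
          VectorFourier.integral_fourierIntegral_smul_eq_flip (L := innerₗ V)
            Real.continuous_fourierChar continuous_inner (χ.integrable (μ := volume)) hg
    _ = 0 := by simp [hzero]

theorem ae_eq_zero_of_forall_fourierIntegral_probChar_eq_zero [CompleteSpace E] {ν : Measure ℝ}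
    [SigmaFinite ν] {g : ℝ → E} (hg : Integrable g ν)
    (hzero : ∀ t, fourierIntegral probChar ν g t = 0) : g =ᵐ[ν] 0 := by
  refine ae_eq_zero_of_forall_vectorFourierIntegral_eq_zero hg fun w => ?_
  rw [← hzero (2 * Real.pi * w)]
  refine integral_congr_ae (.of_forall fun l => ?_)
  simp only [Circle.smul_def, Real.fourierChar_apply, Real.probChar_apply]
  congr 4
  simp only [innerₗ_apply_apply, RCLike.inner_apply, conj_trivial, LinearMap.mul_apply']
  ring

variable {ν : Measure ℝ}

theorem integrable_probChar_smul {g : ℝ → E} (hg : Integrable g ν) (t : ℝ) :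
    Integrable (fun l => probChar (-(l * t)) • g l) ν :=
  (VectorFourier.fourierIntegral_convergent_iff (L := LinearMap.mul ℝ ℝ)
    Real.continuous_probChar continuous_mul t).2 hg

theorem fourierIntegral_probChar_add (ν : Measure ℝ) (g : ℝ → E) (s t : ℝ) :
    fourierIntegral probChar ν g (s + t) =
      fourierIntegral probChar ν (fun l => probChar (-(l * s)) • g l) t := by
  simp only [Fourier.fourierIntegral_def, smul_smul, ← AddChar.map_add_eq_mul, mul_add, neg_add,
    add_comm]

theorem fourierIntegral_probChar_restrict_compl {g : ℝ → E} (hg : Integrable g ν) {D : Set ℝ}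
    (hD : MeasurableSet D) :
    fourierIntegral probChar (ν.restrict Dᶜ) g =
      fourierIntegral probChar ν g - fourierIntegral probChar (ν.restrict D) g := by
  ext t
  exact eq_sub_of_add_eq' (integral_add_compl hD (integrable_probChar_smul hg t))

theorem continuousLinearMap_fourierIntegral_probChar {F : Type*} [NormedAddCommGroup F]
    [NormedSpace ℂ F] [CompleteSpace E] [CompleteSpace F] {g : ℝ → E} (hg : Integrable g ν)
    (L : E →L[ℂ] F) (t : ℝ) :
    L (fourierIntegral probChar ν g t) = fourierIntegral probChar ν (fun l => L (g l)) t := by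
  rw [Fourier.fourierIntegral_def, ← L.integral_comp_comm (integrable_probChar_smul hg t)]
  simp only [Fourier.fourierIntegral_def, Circle.smul_def, map_smul]

theorem isAlmostPeriodic_fourierIntegral_restrict_of_countable [CompleteSpace E] {g : ℝ → E}
    (hg : Integrable g ν) {D : Set ℝ} (hD : D.Countable) :
    IsAlmostPeriodic (fourierIntegral probChar (ν.restrict D) g) := by
  intro ε hε
  have hseries (t : ℝ) : fourierIntegral probChar (ν.restrict D) g t =
      ∑' x : D, probChar (-(x * t)) • ν.real {(x : ℝ)} • g x := by
    rw [Fourier.fourierIntegral_def,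
      setIntegral_countable _ hD (integrable_probChar_smul hg t).integrableOn]
    exact tsum_congr fun x => smul_comm _ _ _
  have huniform := tendstoUniformly_tsum (summable_measureReal_singleton_mul_norm hg hD)
    (f := fun (x : D) (t : ℝ) => probChar (-(x * t)) • ν.real {(x : ℝ)} • g x)
    fun x t => by simp [norm_smul, abs_of_nonneg]
  obtain ⟨S, hS⟩ := (Metric.tendstoUniformly_iff.1 huniform ε hε).exists
  refine ⟨∑ x ∈ S, Finsupp.single (x : ℝ) (ν.real {(x : ℝ)} • g x), fun t => ?_⟩
  simp only [hseries, trigPolynomial_finsetSum, trigPolynomial_single]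
  simpa only [dist_eq_norm] using (hS t).le

theorem ae_prod_probChar_sub_ne_one (μ ν : Measure ℝ) [NullSingletonClass ν] :
    ∀ᵐ z ∂μ.prod ν, probChar (z.2 - z.1) ≠ 1 := by
  have hperiods : {x | probChar x = 1}.Countable := by
    refine (Set.countable_range fun n : ℤ => (n : ℝ) * (2 * Real.pi)).mono fun x hx => ?_
    obtain ⟨n, hn⟩ := Circle.exp_eq_one.1 hx
    exact ⟨n, hn.symm⟩
  have hmeas : MeasurableSet {z : ℝ × ℝ | probChar (z.2 - z.1) = 1} :=
    (isClosed_eq (Real.continuous_probChar.comp (by fun_prop)) continuous_const).measurableSet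
  simp only [ae_iff, not_not]
  refine Measure.measure_prod_null_of_ae_null hmeas (.of_forall fun x => ?_)
  exact (hperiods.preimage (sub_left_injective (b := x))).measure_zero ν

theorem normSq_fourierIntegral_probChar_eq_integral_prod [SFinite ν] (g : ℝ → ℂ) (t : ℝ) :
    ((‖fourierIntegral probChar ν g t‖ ^ 2 : ℝ) : ℂ) =
      ∫ z, (probChar ((z.2 - z.1) * t) : ℂ) * (g z.1 * starRingEnd ℂ (g z.2)) ∂ν.prod ν := by
  rw [Complex.ofReal_pow, ← Complex.mul_conj', Fourier.fourierIntegral_def, ← integral_conj,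
    ← integral_prod_mul]
  refine integral_congr_ae (.of_forall fun z => ?_)
  simp only [Circle.smul_def, smul_eq_mul, map_mul, ← Circle.coe_inv_eq_conj,
    ← AddChar.map_neg_eq_inv, neg_neg]
  rw [sub_mul, sub_eq_neg_add, AddChar.map_add_eq_mul, Circle.coe_mul]
  ring

theorem average_normSq_fourierIntegral_probChar_eq_integral_prod [SFinite ν] {g : ℝ → ℂ}
    (hg : Integrable g ν) (N : ℕ) :
    (((N : ℝ)⁻¹ * ∑ k ∈ Finset.range N, ‖fourierIntegral probChar ν g k‖ ^ 2 : ℝ) : ℂ) =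
      ∫ z, ((N : ℂ)⁻¹ * ∑ k ∈ Finset.range N, (probChar (z.2 - z.1) : ℂ) ^ k) *
        (g z.1 * starRingEnd ℂ (g z.2)) ∂ν.prod ν := by
  have hpow (k : ℕ) (x : ℝ) : (probChar (x * k) : ℂ) = (probChar x : ℂ) ^ k := by
    rw [mul_comm, ← nsmul_eq_mul, AddChar.map_nsmul_eq_pow, Circle.coe_pow]
  have hint (k : ℕ) : Integrable (fun z : ℝ × ℝ => (probChar (z.2 - z.1) : ℂ) ^ k *
      (g z.1 * starRingEnd ℂ (g z.2))) (ν.prod ν) := by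
    refine (integrable_prod_mul_conj hg).bdd_mul (c := 1) ?_
      (.of_forall fun z => by rw [norm_pow, Circle.norm_coe, one_pow])
    have := Real.continuous_probChar
    exact Continuous.aestronglyMeasurable (by fun_prop)
  rw [Complex.ofReal_mul, Complex.ofReal_sum, Complex.ofReal_inv, Complex.ofReal_natCast]
  simp only [normSq_fourierIntegral_probChar_eq_integral_prod, hpow, mul_assoc, Finset.sum_mul]
  rw [integral_const_mul, integral_finsetSum _ fun k _ => hint k]

theorem tendsto_average_normSq_fourierIntegral_probChar [SFinite ν] [NullSingletonClass ν]
    {g : ℝ → ℂ} (hg : Integrable g ν) :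
    Tendsto (fun N : ℕ => (N : ℝ)⁻¹ *
      ∑ k ∈ Finset.range N, ‖fourierIntegral probChar ν g k‖ ^ 2) atTop (𝓝 0) := by
  have hprod := integrable_prod_mul_conj hg
  have := Real.continuous_probChar
  rw [← tendsto_ofReal_iff, Complex.ofReal_zero, ← integral_zero (ℝ × ℝ) ℂ (μ := ν.prod ν)]
  simp only [average_normSq_fourierIntegral_probChar_eq_integral_prod hg]
  refine tendsto_integral_of_dominated_convergence _ (fun N => ?_) hprod.norm
    (fun N => .of_forall fun z => ?_) ?_
  · exact (Continuous.aestronglyMeasurable (by fun_prop)).mul hprod.aestronglyMeasurable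
  · rw [norm_mul]
    exact mul_le_of_le_one_left (norm_nonneg _)
      (norm_inv_mul_geom_sum_le_one (Circle.norm_coe _).le N)
  · filter_upwards [ae_prod_probChar_sub_ne_one ν ν] with z hz
    simpa only [zero_mul] using (tendsto_inv_mul_geom_sum_nhds_zero (Circle.norm_coe _).le
      (Circle.coe_eq_one.not.2 hz)).mul_const (g z.1 * starRingEnd ℂ (g z.2))

theorem exists_norm_fourierIntegral_translate_le [SFinite ν] [NullSingletonClass ν]
    {g : ℝ → ℂ} (hg : Integrable g ν) (S : Finset ℝ) {η : ℝ} (hη : 0 < η) :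
    ∃ t, ∀ s ∈ S, ‖fourierIntegral probChar ν g (s + t)‖ ≤ η := by
  have haverage : Tendsto (fun N : ℕ => ∑ s ∈ S, (N : ℝ)⁻¹ *
      ∑ k ∈ Finset.range N, ‖fourierIntegral probChar ν g (s + k)‖ ^ 2) atTop (𝓝 0) := by
    simp only [fourierIntegral_probChar_add]
    simpa only [Finset.sum_const_zero] using tendsto_finsetSum S fun s _ =>
      tendsto_average_normSq_fourierIntegral_probChar (integrable_probChar_smul hg s)
  by_contra! hlarge
  have hsum (k : ℕ) : η ^ 2 ≤ ∑ s ∈ S, ‖fourierIntegral probChar ν g (s + k)‖ ^ 2 := by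
    obtain ⟨s, hs, hlt⟩ := hlarge k
    exact (pow_le_pow_left₀ hη.le hlt.le 2).trans
      (Finset.single_le_sum (f := fun s => ‖fourierIntegral probChar ν g (s + k)‖ ^ 2)
        (fun _ _ => sq_nonneg _) hs)
  refine (pow_pos hη 2).not_ge (ge_of_tendsto haverage ?_)
  filter_upwards [eventually_gt_atTop 0] with N hN
  rw [← Finset.mul_sum, Finset.sum_comm, ← div_eq_inv_mul, le_div_iff₀ (by positivity), mul_comm]
  simpa using Finset.card_nsmul_le_sum (Finset.range N) _ _ fun k _ => hsum k

theorem fourierIntegral_eq_zero_of_isAlmostPeriodic [CompleteSpace E] [SFinite ν]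
    [NullSingletonClass ν] {g : ℝ → E} (hg : Integrable g ν)
    (hap : IsAlmostPeriodic (fourierIntegral probChar ν g)) :
    fourierIntegral probChar ν g = 0 := by
  ext t
  refine SeparatingDual.eq_zero_of_forall_dual_eq_zero (R := ℂ) fun L => ?_
  have hzero : (fun t => L (fourierIntegral probChar ν g t)) = 0 := by
    refine (hap.continuousLinearMap_comp L).eq_zero_of_forall_finset_exists_norm_translate_le ?_
    intro S η hη
    simpa only [continuousLinearMap_fourierIntegral_probChar hg] using
      exists_norm_fourierIntegral_translate_le (L.integrable_comp hg) S hη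
  exact congrFun hzero t

theorem ae_restrict_compl_eq_zero_of_isAlmostPeriodic_fourierIntegral [CompleteSpace E]
    [SigmaFinite ν] {g : ℝ → E} (hg : Integrable g ν)
    (hap : IsAlmostPeriodic (fourierIntegral probChar ν g)) :
    g =ᵐ[ν.restrict {x | ν {x} ≠ 0}ᶜ] 0 := by
  have hD := countable_setOf_measure_singleton_ne_zero ν
  have := nullSingletonClass_restrict_compl_setOf_measure_singleton_ne_zero ν
  have hap_compl : IsAlmostPeriodic (fourierIntegral probChar (ν.restrict {x | ν {x} ≠ 0}ᶜ) g) := by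
    rw [fourierIntegral_probChar_restrict_compl hg hD.measurableSet]
    exact hap.sub (isAlmostPeriodic_fourierIntegral_restrict_of_countable hg hD)
  exact ae_eq_zero_of_forall_fourierIntegral_probChar_eq_zero hg.restrict
    (congrFun (fourierIntegral_eq_zero_of_isAlmostPeriodic hg.restrict hap_compl))

theorem fourierIntegral_probChar_restrict_of_ae_compl_eq_zero {g : ℝ → E} {A : Set ℝ}
    (hA : ∀ᵐ l ∂ν, l ∉ A → g l = 0) :
    fourierIntegral probChar (ν.restrict A) g = fourierIntegral probChar ν g := by
  ext t
  refine setIntegral_eq_integral_of_ae_compl_eq_zero ?_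
  filter_upwards [hA] with l hl hlA
  rw [hl hlA, smul_zero]

theorem pure_point_of_almost_periodic_fourier_general [CompleteSpace E] {g : ℝ → E}
    (hg : Integrable g ν) (hap : IsAlmostPeriodic (fourierIntegral probChar ν g)) :
    ∃ D : Set ℝ, D.Countable ∧ ∫ l in Dᶜ, ‖g l‖ ∂ν = 0 := by
  obtain ⟨A, hA, hσ, hgA⟩ := exists_measurableSet_sigmaFinite_restrict_ae_compl_eq_zero hg
  rw [← fourierIntegral_probChar_restrict_of_ae_compl_eq_zero hgA] at hap
  refine ⟨{x | ν.restrict A {x} ≠ 0}, countable_setOf_measure_singleton_ne_zero _, ?_⟩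
  set D := {x | ν.restrict A {x} ≠ 0}
  have hzero : g =ᵐ[(ν.restrict A).restrict Dᶜ] 0 :=
    ae_restrict_compl_eq_zero_of_isAlmostPeriodic_fourierIntegral hg.restrict hap
  calc ∫ l in Dᶜ, ‖g l‖ ∂ν = ∫ l in A, ‖g l‖ ∂ν.restrict Dᶜ :=
        (setIntegral_eq_integral_of_ae_compl_eq_zero <| ae_restrict_of_ae <|
          hgA.mono fun l hl hlA => by rw [hl hlA, norm_zero]).symm
    _ = ∫ l in Dᶜ, ‖g l‖ ∂ν.restrict A := by rw [Measure.restrict_comm hA]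
    _ = 0 := integral_eq_zero_of_ae (hzero.mono fun l hl => by simp [hl])

end FourierStieltjes

/-- **A complex measure with almost periodic Fourier transform is pure point.**
Let `dμ = g dν` be a complex Borel measure of bounded variation on `ℝ` (with `ν` a finite
positive measure and `g ∈ L¹(ν)`), and suppose its Fourier transform
`μ̂(t) = ∫ e^{−itλ} g(λ) dν(λ)` is Bohr almost periodic (a uniform limit of finite
trigonometric sums). Then `μ` is pure point: there is a countable set `D ⊆ ℝ` with
`∫_{ℝ∖D} |g| dν = 0`. -/
theorem pure_point_of_almost_periodic_fourier
    (ν : Measure ℝ) [IsFiniteMeasure ν]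
    (g : ℝ → ℂ) (hg : Integrable g ν)
    (hap : ∀ ε : ℝ, 0 < ε →
      ∃ (m : ℕ) (lam : Fin m → ℝ) (c : Fin m → ℂ),
        ∀ t : ℝ,
          ‖(∫ l : ℝ, Complex.exp (-(Complex.I * ((t * l : ℝ) : ℂ))) * g l ∂ν)
            - ∑ j : Fin m, c j * Complex.exp (-(Complex.I * ((lam j * t : ℝ) : ℂ)))‖ ≤ ε) :
    ∃ D : Set ℝ, D.Countable ∧ (∫ l in Dᶜ, ‖g l‖ ∂ν) = 0 := by
  refine pure_point_of_almost_periodic_fourier_general hg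
    (isAlmostPeriodic_of_forall_exists_exp_sum ?_)
  simpa only [Fourier.fourierIntegral_def, probChar_neg_mul_smul_eq_exp_mul] using hap
end

section
/- Let ρ, M, M̃ be as in the model context and let T be the unique contraction on L²(ρ) with T∘M = M̃. Assume that for some ε > 0 one of the following holds: either ∫ s⁻² dρ(s) = 1 and ∫ s⁻⁴⁻ᵉ dρ(s) < ∞, or ∫ s⁻² dρ(s) < 1 and ∫ s⁻²⁻ᵉ dρ(s) < ∞. Then I − T (and hence also I − T*) is a trace class operator. -/
open MeasureTheory Filter
open scoped InnerProductSpace ENNReal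

/-- A bounded operator on a complex inner product space is *trace class (nuclear)* if it can
be written as `Kf = Σₙ ⟨f, aₙ⟩ bₙ` with `Σₙ ‖aₙ‖·‖bₙ‖ < ∞`. -/
def IsTraceClassOp {X : Type*} [NormedAddCommGroup X] [InnerProductSpace ℂ X]
    (K : X →L[ℂ] X) : Prop :=
  ∃ a b : ℕ → X, Summable (fun n : ℕ => ‖a n‖ * ‖b n‖) ∧
    ∀ f : X, HasSum (fun n : ℕ => ⟪a n, f⟫_ℂ • b n) (K f)

/-!
Integrating resolvents against `t^{1/2}` expresses `M - M̃` as an integral over `t > 0` of the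
differences `(t + M̃²)⁻¹ - (t + M²)⁻¹`. Since `M̃²` is a rank-one perturbation of `M²`, each of
these is the rank-one operator `D(t)⁻¹ ⟨·, R u⟩ R u`, where `R = (t + M²)⁻¹`, `u = 𝟙` and
`D(t) = 1 - ⟨R u, u⟩`. Writing `u = M v`, a factor `M` splits off on the right, and as `M` has
dense range, a multiple of `I - T` is the integral of `t^{1/2} D(t)⁻¹ ⟨·, R v⟩ R u`. An integral of
rank-one operators `⟨·, a(t)⟩ b(t)` is trace class as soon as `‖a(t)‖ ‖b(t)‖` is integrable: after
balancing the two norms it is a product of two Hilbert-Schmidt operators through `L²(dt)`.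

Integrability at infinity is clear. Near `0`, the negative moments of `ρ` control the growth of
`‖R u‖` and `‖R v‖`, while `D(t) = 1 - ‖v‖² + t ⟨R v, v⟩` stays away from `0` when
`‖v‖² = ∫ s⁻² dρ < 1` and is at least of order `t` when `‖v‖ = 1`.
-/

open InnerProductSpace Set Topology Asymptotics
open scoped InnerProduct

section TraceClass

variable {X ι : Type*} [NormedAddCommGroup X] [InnerProductSpace ℂ X]

theorem IsTraceClassOp.smul {K : X →L[ℂ] X} (hK : IsTraceClassOp K) (c : ℂ) :
    IsTraceClassOp (c • K) := by
  obtain ⟨a, b, hab, hsum⟩ := hK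
  refine ⟨a, fun n => c • b n, (hab.mul_left ‖c‖).congr fun n => ?_, fun f => ?_⟩
  · rw [norm_smul, mul_left_comm]
  · simpa only [smul_comm _ c, smul_apply] using (hsum f).const_smul c

theorem IsTraceClassOp.of_hasSum_countable [Countable ι] {K : X →L[ℂ] X} {a b : ι → X}
    (hab : Summable fun i => ‖a i‖ * ‖b i‖)
    (hsum : ∀ f, HasSum (fun i => ⟪a i, f⟫_ℂ • b i) (K f)) : IsTraceClassOp K := by
  obtain ⟨g, hg⟩ := exists_injective_nat ι
  refine ⟨Function.extend g a 0, Function.extend g b 0, (hg.summable_iff ?_).1 ?_,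
    fun f => (hg.hasSum_iff ?_).1 ?_⟩
  · intro n hn
    simp [Function.extend_apply' _ _ _ hn]
  · simpa only [Function.comp_def, hg.extend_apply] using hab
  · intro n hn
    simp [Function.extend_apply' _ _ _ hn]
  · simpa only [Function.comp_def, hg.extend_apply] using hsum f

theorem IsTraceClassOp.of_hasSum {K : X →L[ℂ] X} {a b : ι → X}
    (hab : Summable fun i => ‖a i‖ * ‖b i‖)
    (hsum : ∀ f, HasSum (fun i => ⟪a i, f⟫_ℂ • b i) (K f)) : IsTraceClassOp K := by
  let s := Function.support fun i => ‖a i‖ * ‖b i‖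
  have : Countable s := hab.countable_support
  refine .of_hasSum_countable (ι := s) (hab.subtype s) fun f =>
    (hasSum_subtype_iff_of_support_subset fun i hi => ?_).2 (hsum f)
  have hi' : ⟪a i, f⟫_ℂ • b i ≠ 0 := hi
  refine mul_ne_zero (norm_ne_zero_iff.2 fun ha => hi' ?_) (norm_ne_zero_iff.2 fun hb => hi' ?_)
  · rw [ha, inner_zero_left, zero_smul]
  · rw [hb, smul_zero]

variable [CompleteSpace X]

theorem IsTraceClassOp.of_hasSum_inner {K : X →L[ℂ] X} {a b : ι → X}
    (hab : Summable fun i => ‖a i‖ * ‖b i‖)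
    (hsum : ∀ f g, HasSum (fun i => ⟪a i, f⟫_ℂ * ⟪g, b i⟫_ℂ) ⟪g, K f⟫_ℂ) :
    IsTraceClassOp K := by
  refine .of_hasSum hab fun f => ?_
  have hf : Summable fun i => ⟪a i, f⟫_ℂ • b i := by
    refine .of_norm_bounded (hab.mul_left ‖f‖) fun i => ?_
    rw [norm_smul, ← mul_assoc, mul_comm ‖f‖]
    gcongr
    exact norm_inner_le_norm _ _
  convert hf.hasSum
  refine ext_inner_left ℂ fun g => (hsum f g).unique ?_
  simpa only [innerSL_apply_apply, inner_smul_right] using (innerSL ℂ g).hasSum hf.hasSum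

theorem IsTraceClassOp.adjoint {K : X →L[ℂ] X} (hK : IsTraceClassOp K) :
    IsTraceClassOp (K†) := by
  obtain ⟨a, b, hab, hsum⟩ := hK
  refine .of_hasSum_inner (hab.congr fun n => mul_comm _ _) fun f g => ?_
  have h := ((innerSL ℂ f).hasSum (hsum g)).star
  simp only [innerSL_apply_apply, inner_smul_right, star_mul, RCLike.star_def,
    inner_conj_symm] at h
  rwa [ContinuousLinearMap.adjoint_inner_right]

end TraceClass

section IntegralOfRankOne

variable {Ω H ι : Type*} {mΩ : MeasurableSpace Ω} {μ : Measure Ω}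
  [NormedAddCommGroup H] [InnerProductSpace ℂ H]

/-- The elementary tensor map `w ↦ (t ↦ e t • w)` from `H` to `L²(μ; H)`, for a fixed
`e ∈ L²(μ)`. Its adjoint plays the role of the `e`-th coefficient of an `H`-valued function. -/
noncomputable def lpTensor (e : Lp ℂ 2 μ) : H →L[ℂ] Lp H 2 μ :=
  LinearMap.mkContinuous
    { toFun := fun w => (ContinuousLinearMap.toSpanSingleton ℂ w).compLp e
      map_add' := fun w w' => by
        rw [ContinuousLinearMap.toSpanSingleton_add, ContinuousLinearMap.add_compLp]
      map_smul' := fun c w => by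
        rw [ContinuousLinearMap.toSpanSingleton_smul, ContinuousLinearMap.smul_compLp,
          RingHom.id_apply] }
    ‖e‖ fun w => by
      simpa [mul_comm] using (ContinuousLinearMap.toSpanSingleton ℂ w).norm_compLp_le e

theorem coeFn_lpTensor (e : Lp ℂ 2 μ) (w : H) : lpTensor e w =ᵐ[μ] fun t => e t • w :=
  ContinuousLinearMap.coeFn_compLp _ e

theorem inner_lpTensor_left (e : Lp ℂ 2 μ) (w : H) (a : Lp H 2 μ) :
    ⟪lpTensor e w, a⟫_ℂ = ⟪e, (innerSL ℂ w).compLp a⟫_ℂ := by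
  rw [L2.inner_def, L2.inner_def]
  refine integral_congr_ae ?_
  filter_upwards [coeFn_lpTensor e w, (innerSL ℂ w).coeFn_compLp a] with t hew hwa
  rw [hew, hwa, inner_smul_left, innerSL_apply_apply, RCLike.inner_apply']

theorem inner_lpTensor_lpTensor (e e' : Lp ℂ 2 μ) (w w' : H) :
    ⟪lpTensor e w, lpTensor e' w'⟫_ℂ = ⟪e, e'⟫_ℂ * ⟪w, w'⟫_ℂ := by
  rw [L2.inner_def, L2.inner_def, ← integral_mul_const]
  refine integral_congr_ae ?_
  filter_upwards [coeFn_lpTensor e w, coeFn_lpTensor e' w'] with t hew hew'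
  rw [hew, hew', inner_smul_left, inner_smul_right, RCLike.inner_apply', mul_assoc]

theorem integrable_rankOne {a b : Ω → H} (ha : AEStronglyMeasurable a μ)
    (hb : AEStronglyMeasurable b μ) (hab : Integrable (fun t => ‖a t‖ * ‖b t‖) μ) :
    Integrable (fun t => rankOne ℂ (b t) (a t)) μ := by
  have hcont : Continuous fun z : H × H => rankOne ℂ z.1 z.2 := by
    simp only [rankOne_def]
    fun_prop
  have hmeas := hcont.comp_aestronglyMeasurable (hb.prodMk ha)
  exact hab.mono hmeas (ae_of_all _ fun t => by simp [mul_comm])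

theorem inner_compLp_innerSL (a b : Lp H 2 μ) (f g : H) :
    ⟪(innerSL ℂ f).compLp a, (innerSL ℂ g).compLp b⟫_ℂ = ∫ t, ⟪a t, f⟫_ℂ * ⟪g, b t⟫_ℂ ∂μ := by
  rw [L2.inner_def]
  refine integral_congr_ae ?_
  filter_upwards [(innerSL ℂ f).coeFn_compLp a, (innerSL ℂ g).coeFn_compLp b] with t hfa hgb
  rw [hfa, hgb, RCLike.inner_apply', innerSL_apply_apply, innerSL_apply_apply, inner_conj_symm]

theorem memLp_two_sqrt_norm_div_smul {a b : Ω → H} (ha : AEStronglyMeasurable a μ)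
    (hb : AEStronglyMeasurable b μ) (hab : Integrable (fun t => ‖a t‖ * ‖b t‖) μ) :
    MemLp (fun t => (√(‖b t‖ / ‖a t‖) : ℂ) • a t) 2 μ := by
  have hmeas : AEStronglyMeasurable (fun t => (√(‖b t‖ / ‖a t‖) : ℂ) • a t) μ := by
    have hdiv : AEMeasurable (fun t => ‖b t‖ / ‖a t‖) μ :=
      hb.norm.aemeasurable.div ha.norm.aemeasurable
    exact (Complex.measurable_ofReal.comp_aemeasurable hdiv.sqrt).aestronglyMeasurable.smul ha
  refine (memLp_two_iff_integrable_sq_norm hmeas).2 (hab.congr (ae_of_all _ fun t => ?_))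
  rcases eq_or_ne (a t) 0 with h | h
  · simp [h]
  · have : ‖a t‖ ≠ 0 := norm_ne_zero_iff.2 h
    beta_reduce
    rw [norm_smul, mul_pow, Complex.norm_real, Real.norm_of_nonneg (Real.sqrt_nonneg _),
      Real.sq_sqrt (by positivity)]
    field_simp

variable [CompleteSpace H]

theorem sum_norm_sq_adjoint_lpTensor_le {e : ι → Lp ℂ 2 μ} (he : Orthonormal ℂ e)
    (a : Lp H 2 μ) (s : Finset ι) : ∑ i ∈ s, ‖((lpTensor (e i))†) a‖ ^ 2 ≤ ‖a‖ ^ 2 := by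
  classical
  set w : ι → H := fun i => ((lpTensor (e i))†) a
  set x : Lp H 2 μ := ∑ i ∈ s, lpTensor (e i) (w i)
  have hxa : ⟪x, a⟫_ℂ = ((∑ i ∈ s, ‖w i‖ ^ 2 : ℝ) : ℂ) := by
    simp only [x, sum_inner, ← ContinuousLinearMap.adjoint_inner_right]
    simp [w, inner_self_eq_norm_sq_to_K]
  have hxx : ⟪x, x⟫_ℂ = ((∑ i ∈ s, ‖w i‖ ^ 2 : ℝ) : ℂ) := by
    simp only [x, sum_inner, inner_sum, inner_lpTensor_lpTensor, orthonormal_iff_ite.1 he,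
      ite_mul, one_mul, zero_mul]
    simp [inner_self_eq_norm_sq_to_K]
  have hx : ‖x‖ ^ 2 = ∑ i ∈ s, ‖w i‖ ^ 2 := by
    rw [← inner_self_eq_norm_sq (𝕜 := ℂ), hxx, RCLike.re_to_complex, Complex.ofReal_re]
  have hle : ‖x‖ ^ 2 ≤ ‖x‖ * ‖a‖ := by
    simpa [hxa, ← hx] using norm_inner_le_norm (𝕜 := ℂ) x a
  rw [← hx]
  gcongr
  nlinarith [norm_nonneg x, norm_nonneg a]

theorem summable_norm_sq_adjoint_lpTensor {e : ι → Lp ℂ 2 μ} (he : Orthonormal ℂ e)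
    (a : Lp H 2 μ) : Summable fun i => ‖((lpTensor (e i))†) a‖ ^ 2 :=
  summable_of_sum_le (fun _ => by positivity) (sum_norm_sq_adjoint_lpTensor_le he a)

theorem inner_integral_rankOne {a b : Ω → H}
    (hint : Integrable (fun t => rankOne ℂ (b t) (a t)) μ) (f g : H) :
    ⟪g, (∫ t, rankOne ℂ (b t) (a t) ∂μ) f⟫_ℂ = ∫ t, ⟪a t, f⟫_ℂ * ⟪g, b t⟫_ℂ ∂μ := by
  rw [ContinuousLinearMap.integral_apply hint, ← integral_inner (hint.apply_continuousLinearMap f)]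
  simp only [rankOne_apply, inner_smul_right]

theorem isTraceClassOp_integral_rankOne_of_lp (a b : Lp H 2 μ) :
    IsTraceClassOp (∫ t, rankOne ℂ (b t) (a t) ∂μ) := by
  obtain ⟨_, e, -⟩ := exists_hilbertBasis ℂ (Lp ℂ 2 μ)
  have hint : Integrable (fun t => rankOne ℂ (b t) (a t)) μ :=
    integrable_rankOne (Lp.aestronglyMeasurable a) (Lp.aestronglyMeasurable b)
      ((Lp.memLp a).norm.integrable_mul (Lp.memLp b).norm)
  refine .of_hasSum_inner (a := fun i => ((lpTensor (e i))†) a)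
    (b := fun i => ((lpTensor (e i))†) b) ?_ fun f g => ?_
  · refine .of_nonneg_of_le (fun _ => by positivity) (fun i => ?_)
      ((summable_norm_sq_adjoint_lpTensor e.orthonormal a).add
        (summable_norm_sq_adjoint_lpTensor e.orthonormal b))
    nlinarith [two_mul_le_add_sq ‖((lpTensor (e i))†) a‖ ‖((lpTensor (e i))†) b‖,
      mul_nonneg (norm_nonneg (((lpTensor (e i))†) a)) (norm_nonneg (((lpTensor (e i))†) b))]
  · have hcoeff (i) : ⟪((lpTensor (e i))†) a, f⟫_ℂ * ⟪g, ((lpTensor (e i))†) b⟫_ℂ =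
        ⟪(innerSL ℂ f).compLp a, e i⟫_ℂ * ⟪e i, (innerSL ℂ g).compLp b⟫_ℂ := by
      rw [ContinuousLinearMap.adjoint_inner_left, ContinuousLinearMap.adjoint_inner_right,
        inner_lpTensor_left, ← inner_conj_symm, inner_lpTensor_left, inner_conj_symm]
    simpa only [hcoeff, inner_integral_rankOne hint, inner_compLp_innerSL] using
      e.hasSum_inner_mul_inner ((innerSL ℂ f).compLp a) ((innerSL ℂ g).compLp b)

theorem isTraceClassOp_integral_rankOne {a b : Ω → H} (ha : AEStronglyMeasurable a μ)
    (hb : AEStronglyMeasurable b μ) (hab : Integrable (fun t => ‖a t‖ * ‖b t‖) μ) :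
    IsTraceClassOp (∫ t, rankOne ℂ (b t) (a t) ∂μ) := by
  -- Rescaling balances the two factors: both norms become `√(‖a t‖ * ‖b t‖)`.
  have ha' := memLp_two_sqrt_norm_div_smul ha hb hab
  have hb' := memLp_two_sqrt_norm_div_smul hb ha (hab.congr (ae_of_all _ fun t => mul_comm _ _))
  convert isTraceClassOp_integral_rankOne_of_lp ha'.toLp hb'.toLp using 1
  refine integral_congr_ae ?_
  filter_upwards [ha'.coeFn_toLp, hb'.coeFn_toLp] with t hat hbt
  rw [hat, hbt]
  rcases eq_or_ne (a t) 0 with h | h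
  · simp [h]
  rcases eq_or_ne (b t) 0 with h' | h'
  · simp [h']
  have hscale : √(‖a t‖ / ‖b t‖) * √(‖b t‖ / ‖a t‖) = 1 := by
    rw [← Real.sqrt_mul (by positivity), div_mul_div_cancel₀ (norm_ne_zero_iff.2 h'),
      div_self (norm_ne_zero_iff.2 h), Real.sqrt_one]
  ext f
  simp only [rankOne_apply, inner_smul_left, smul_smul, Complex.conj_ofReal]
  rw [mul_right_comm, ← Complex.ofReal_mul, mul_comm √(‖b t‖ / _), hscale, Complex.ofReal_one,
    one_mul]

end IntegralOfRankOne

section RealPowers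

variable {A : Type*} [CStarAlgebra A] [PartialOrder A] [StarOrderedRing A] {a : A} {p t : ℝ}

theorem mem_resolventSet_neg_of_pos (ha : 0 ≤ a) (ht : 0 < t) : t ∈ resolventSet ℝ (-a) := by
  by_contra h
  have hspec : -t ∈ spectrum ℝ a := by
    rw [← Set.mem_neg, spectrum.neg_eq]
    exact h
  exact (neg_nonneg.1 (spectrum_nonneg_of_nonneg ha hspec)).not_gt ht

theorem continuousOn_resolvent_neg (ha : 0 ≤ a) :
    ContinuousOn (fun t : ℝ => resolvent (-a) t) (Ioi 0) := fun _ ht =>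
  (spectrum.hasDerivAt_resolvent_const_left
    (mem_resolventSet_neg_of_pos ha ht)).continuousAt.continuousWithinAt

theorem algebraMap_le_resolvent_neg (ha : 0 ≤ a) (ht : 0 < t) :
    algebraMap ℝ A (t + ‖a‖)⁻¹ ≤ resolvent (-a) t := by
  have hpos : IsStrictlyPositive (algebraMap ℝ A t + a) :=
    (isStrictlyPositive_algebraMap ht).add_nonneg ha
  have hle : algebraMap ℝ A t + a ≤ algebraMap ℝ A (t + ‖a‖) := by
    rw [map_add]
    gcongr
    exact ha.isSelfAdjoint.le_algebraMap_norm_self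
  have hsum : 0 < t + ‖a‖ := by positivity
  have hinv : Ring.inverse (algebraMap ℝ A (t + ‖a‖)) * 1 = algebraMap ℝ A (t + ‖a‖)⁻¹ := by
    rw [Ring.inverse_mul_eq_iff_eq_mul _ _ _ (isStrictlyPositive_algebraMap hsum).isUnit,
      ← map_mul, mul_inv_cancel₀ hsum.ne', map_one]
  rw [resolvent, sub_neg_eq_add, ← hinv, mul_one]
  exact CStarAlgebra.ringInverse_le_ringInverse hle hpos

theorem cfc_rpowIntegrand₀₁_eq_sub_resolvent (ha : 0 ≤ a) (hp : p ≠ 1) (ht : 0 < t) :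
    cfc (Real.rpowIntegrand₀₁ p t) a = t ^ (p - 1) • (1 : A) - t ^ p • resolvent (-a) t := by
  have hpos : ∀ x ∈ spectrum ℝ a, t + x ≠ 0 := fun x hx =>
    (add_pos_of_pos_of_nonneg ht (spectrum_nonneg_of_nonneg ha hx)).ne'
  have hinv : ContinuousOn (fun x : ℝ => (t + x)⁻¹) (spectrum ℝ a) :=
    ContinuousOn.inv₀ (by fun_prop) hpos
  have hres : cfc (fun x : ℝ => (t + x)⁻¹) a = resolvent (-a) t := by
    rw [cfc_inv _ a hpos, cfc_const_add t (fun x => x) a, cfc_id' ℝ a, resolvent, sub_neg_eq_add]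
  rw [Real.rpowIntegrand₀₁_eq_sub hp ht, cfc_sub _ _ a continuousOn_const (hinv.const_mul _),
    cfc_const _ a, cfc_const_mul _ _ a hinv, hres, Algebra.algebraMap_eq_smul_one]

theorem norm_rpowIntegrand₀₁_le_of_mem_spectrum (ha : 0 ≤ a) (hp : p ∈ Ioo 0 1) (ht : 0 < t) {x : ℝ}
    (hx : x ∈ spectrum ℝ a) :
    ‖Real.rpowIntegrand₀₁ p t x‖ ≤ Real.rpowIntegrand₀₁ p t (‖a‖ * ‖(1 : A)‖) := by
  have hx0 : 0 ≤ x := spectrum_nonneg_of_nonneg ha hx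
  rw [Real.norm_of_nonneg (Real.rpowIntegrand₀₁_nonneg hp.1 ht.le hx0)]
  exact Real.rpowIntegrand₀₁_monotoneOn hp ht.le hx0 (by positivity : (0 : ℝ) ≤ _)
    ((le_abs_self x).trans (spectrum.norm_le_norm_mul_of_mem hx))

theorem integrableOn_sub_resolvent_and_integral_eq (ha : 0 ≤ a) (hp : p ∈ Ioo 0 1) :
    IntegrableOn (fun t : ℝ => t ^ (p - 1) • (1 : A) - t ^ p • resolvent (-a) t) (Ioi 0) ∧
      ∫ t in Ioi (0 : ℝ), (t ^ (p - 1) • (1 : A) - t ^ p • resolvent (-a) t) =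
        (∫ t in Ioi 0, Real.rpowIntegrand₀₁ p t 1) • a ^ p := by
  have hcfc := fun t (ht : t ∈ Ioi (0 : ℝ)) =>
    cfc_rpowIntegrand₀₁_eq_sub_resolvent ha hp.2.ne ht
  have hcont := Real.continuousOn_rpowIntegrand₀₁_uncurry hp (spectrum ℝ a) fun x hx =>
    spectrum_nonneg_of_nonneg ha hx
  have hbound : ∀ᵐ t ∂volume.restrict (Ioi (0 : ℝ)), ∀ x ∈ spectrum ℝ a,
      ‖Real.rpowIntegrand₀₁ p t x‖ ≤ Real.rpowIntegrand₀₁ p t (‖a‖ * ‖(1 : A)‖) :=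
    (ae_restrict_mem measurableSet_Ioi).mono fun t ht x hx =>
      norm_rpowIntegrand₀₁_le_of_mem_spectrum ha hp ht hx
  have hfin := (Real.integrableOn_rpowIntegrand₀₁_Ioi hp
    (by positivity : 0 ≤ ‖a‖ * ‖(1 : A)‖)).hasFiniteIntegral
  refine ⟨(integrableOn_cfc measurableSet_Ioi _ _ a hcont hbound hfin).congr_fun hcfc
    measurableSet_Ioi, ?_⟩
  rw [← setIntegral_congr_fun measurableSet_Ioi hcfc,
    ← cfc_setIntegral measurableSet_Ioi _ _ a hcont hbound hfin, CFC.rpow_eq_cfc_real ha,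
    ← cfc_smul _ _ a (Real.continuous_rpow_const hp.1.le).continuousOn]
  refine cfc_congr fun x hx => ?_
  rw [Real.integral_rpowIntegrand₀₁_eq_rpow_mul_const hp (spectrum_nonneg_of_nonneg ha hx),
    smul_eq_mul, mul_comm]

theorem integral_smul_resolvent_sub_resolvent {b : A} (ha : 0 ≤ a) (hb : 0 ≤ b)
    (hp : p ∈ Ioo 0 1) :
    ∫ t in Ioi (0 : ℝ), t ^ p • (resolvent (-b) t - resolvent (-a) t) =
      (∫ t in Ioi 0, Real.rpowIntegrand₀₁ p t 1) • (a ^ p - b ^ p) := by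
  obtain ⟨hinta, ha⟩ := integrableOn_sub_resolvent_and_integral_eq ha hp
  obtain ⟨hintb, hb⟩ := integrableOn_sub_resolvent_and_integral_eq hb hp
  rw [smul_sub, ← ha, ← hb, ← integral_sub hinta hintb]
  refine integral_congr_ae (ae_of_all _ fun t => ?_)
  simp only [smul_sub]
  abel

theorem mul_self_rpow_one_half (ha : 0 ≤ a) : (a * a) ^ (1 / 2 : ℝ) = a := by
  rw [← CFC.sqrt_eq_rpow, CFC.sqrt_mul_self a]

end RealPowers

theorem commute_resolvent_left {R A : Type*} [CommSemiring R] [Ring A] [Algebra R A] {a b : A}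
    {r : R} (hr : r ∈ resolventSet R a) (hab : Commute a b) : Commute (resolvent a r) b := by
  rw [spectrum.resolvent_eq hr]
  exact ((Algebra.commute_algebraMap_left r b).sub_left hab).units_inv_left (u := hr.unit)

section RankOnePerturbation

variable {H : Type*} [NormedAddCommGroup H] [InnerProductSpace ℂ H] [CompleteSpace H]
  {A : H →L[ℂ] H} {u : H} {t : ℝ}

/-- The perturbation determinant `1 - ⟨(t - A)⁻¹ u, u⟩` of the rank-one perturbation
`A + ⟨·, u⟩ u` of `A`, at a real spectral parameter `t`. -/
noncomputable def perturbationDet (A : H →L[ℂ] H) (u : H) (t : ℝ) : ℂ :=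
  1 - ⟪u, resolvent A t u⟫_ℂ

theorem isSelfAdjoint_resolvent (hA : IsSelfAdjoint A) (t : ℝ) :
    IsSelfAdjoint (resolvent A t) :=
  ((IsSelfAdjoint.algebraMap _ (.all t)).sub hA).ringInverse

theorem resolvent_add_rankOne_self_sub_resolvent (hA : IsSelfAdjoint A)
    (ht : t ∈ resolventSet ℝ A) (ht' : t ∈ resolventSet ℝ (A + rankOne ℂ u u)) :
    resolvent (A + rankOne ℂ u u) t - resolvent A t =
      rankOne ℂ (resolvent (A + rankOne ℂ u u) t u) (resolvent A t u) := by
  rw [spectrum.resolvent_sub_resolvent ht' ht, add_sub_cancel_left]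
  ext x
  have hsymm : ⟪resolvent A t u, x⟫_ℂ = ⟪u, resolvent A t x⟫_ℂ :=
    (isSelfAdjoint_resolvent hA t).isSymmetric u x
  simp [hsymm]

theorem resolvent_apply_eq_perturbationDet_smul (hA : IsSelfAdjoint A)
    (ht : t ∈ resolventSet ℝ A) (ht' : t ∈ resolventSet ℝ (A + rankOne ℂ u u)) :
    resolvent A t u = perturbationDet A u t • resolvent (A + rankOne ℂ u u) t u := by
  have h := congr($(resolvent_add_rankOne_self_sub_resolvent hA ht ht') u)
  have hsymm : ⟪resolvent A t u, u⟫_ℂ = ⟪u, resolvent A t u⟫_ℂ :=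
    (isSelfAdjoint_resolvent hA t).isSymmetric u u
  rw [sub_apply, rankOne_apply, hsymm] at h
  rw [perturbationDet, sub_smul, one_smul, ← h, sub_sub_cancel]

theorem perturbationDet_ne_zero (hA : IsSelfAdjoint A)
    (ht : t ∈ resolventSet ℝ A) (ht' : t ∈ resolventSet ℝ (A + rankOne ℂ u u)) :
    perturbationDet A u t ≠ 0 := by
  intro h
  have hu : resolvent A t u = 0 := by
    rw [resolvent_apply_eq_perturbationDet_smul hA ht ht', h, zero_smul]
  simp [perturbationDet, hu] at h

theorem resolvent_add_rankOne_self_sub_resolvent_eq_smul (hA : IsSelfAdjoint A)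
    (ht : t ∈ resolventSet ℝ A) (ht' : t ∈ resolventSet ℝ (A + rankOne ℂ u u)) :
    resolvent (A + rankOne ℂ u u) t - resolvent A t =
      (perturbationDet A u t)⁻¹ • rankOne ℂ (resolvent A t u) (resolvent A t u) := by
  rw [resolvent_add_rankOne_self_sub_resolvent hA ht ht']
  nth_rewrite 2 [resolvent_apply_eq_perturbationDet_smul hA ht ht']
  rw [map_smul, smul_apply, inv_smul_smul₀ (perturbationDet_ne_zero hA ht ht')]

theorem tendsto_perturbationDet_atTop (A : H →L[ℂ] H) (u : H) :
    Tendsto (perturbationDet A u) atTop (𝓝 1) := by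
  have hres : Tendsto (fun t : ℝ => resolvent A t) atTop (𝓝 0) :=
    (spectrum.resolvent_tendsto_cobounded A).mono_left IsOrderBornology.atTop_le_cobounded
  have hcont : Continuous fun B : H →L[ℂ] H => (1 : ℂ) - ⟪u, B u⟫_ℂ := by fun_prop
  have h := (hcont.tendsto 0).comp hres
  rwa [zero_apply, inner_zero_right, sub_zero] at h

theorem isBigO_resolvent_apply_atTop (A : H →L[ℂ] H) (x : H) :
    (fun t : ℝ => ‖resolvent A t x‖) =O[atTop] fun t => t ^ (-1 : ℝ) := by
  have hres : (fun t : ℝ => resolvent A t) =O[atTop] fun t => t ^ (-1 : ℝ) := by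
    simpa only [Real.rpow_neg_one] using
      (spectrum.resolvent_isBigO_inv A).mono IsOrderBornology.atTop_le_cobounded
  exact (((ContinuousLinearMap.apply ℂ H x).isBigO_comp _ _).trans hres).norm_left

end RankOnePerturbation

theorem denseRange_of_isSelfAdjoint_of_injective {𝕜 H : Type*} [RCLike 𝕜]
    [NormedAddCommGroup H] [InnerProductSpace 𝕜 H] [CompleteSpace H] {M : H →L[𝕜] H}
    (hM : IsSelfAdjoint M) (hinj : Function.Injective M) : DenseRange M := by
  have horth : M.rangeᗮ = ⊥ := by
    rw [ContinuousLinearMap.orthogonal_range, hM.adjoint_eq]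
    exact LinearMap.ker_eq_bot.2 hinj
  exact Submodule.dense_iff_topologicalClosure_eq_top.2
    (Submodule.topologicalClosure_eq_top_iff.2 horth)

section SquareRootPerturbation

variable {H : Type*} [NormedAddCommGroup H] [InnerProductSpace ℂ H] [CompleteSpace H]
  {A M S T : H →L[ℂ] H} {u v : H} {t : ℝ}

theorem resolvent_neg_mul_self_apply_comm (hM : 0 ≤ M) (ht : 0 < t) (x : H) :
    resolvent (-(M * M)) t (M x) = M (resolvent (-(M * M)) t x) := by
  have ht' := mem_resolventSet_neg_of_pos hM.isSelfAdjoint.mul_self_nonneg ht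
  have hcomm := commute_resolvent_left ht' ((Commute.refl M).mul_left (.refl M)).neg_left
  exact congr($hcomm.eq x)

theorem smul_resolvent_neg_mul_self_add (hM : 0 ≤ M) (ht : 0 < t) (x : H) :
    (t : ℂ) • resolvent (-(M * M)) t x + M (M (resolvent (-(M * M)) t x)) = x := by
  have ht' := mem_resolventSet_neg_of_pos hM.isSelfAdjoint.mul_self_nonneg ht
  simpa [resolvent, Algebra.algebraMap_eq_smul_one] using congr($(Ring.mul_inverse_cancel _ ht') x)

theorem mul_norm_sq_le_re_inner_resolvent_neg (hA : 0 ≤ A) (ht : 0 < t) (x : H) :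
    (t + ‖A‖)⁻¹ * ‖x‖ ^ 2 ≤ (⟪x, resolvent (-A) t x⟫_ℂ).re := by
  have h := ((ContinuousLinearMap.le_def _ _).1
    (algebraMap_le_resolvent_neg hA ht)).re_inner_nonneg_right x
  have hscalar : (⟪x, algebraMap ℝ (H →L[ℂ] H) (t + ‖A‖)⁻¹ x⟫_ℂ).re =
      (t + ‖A‖)⁻¹ * ‖x‖ ^ 2 := by
    rw [Algebra.algebraMap_eq_smul_one, smul_apply, one_apply_eq_self,
      inner_smul_right_eq_smul, Complex.real_smul, Complex.re_ofReal_mul, ← RCLike.re_to_complex,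
      inner_self_eq_norm_sq]
  rw [sub_apply, inner_sub_right, RCLike.re_to_complex, Complex.sub_re, hscalar] at h
  exact sub_nonneg.1 h

theorem perturbationDet_neg_mul_self (hM : 0 ≤ M) (ht : 0 < t) (v : H) :
    perturbationDet (-(M * M)) (M v) t =
      1 - ‖v‖ ^ 2 + t * ⟪v, resolvent (-(M * M)) t v⟫_ℂ := by
  have hsymm : ⟪M v, resolvent (-(M * M)) t (M v)⟫_ℂ =
      ⟪v, M (M (resolvent (-(M * M)) t v))⟫_ℂ := by
    rw [resolvent_neg_mul_self_apply_comm hM ht]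
    exact hM.isSelfAdjoint.isSymmetric v _
  rw [perturbationDet, hsymm, eq_sub_of_add_eq' (smul_resolvent_neg_mul_self_add hM ht v),
    inner_sub_right, inner_self_eq_norm_sq_to_K, inner_smul_right, sub_sub_eq_add_sub,
    add_sub_right_comm]
  rfl

theorem le_norm_perturbationDet_neg_mul_self (hM : 0 ≤ M) (ht : 0 < t) (v : H) :
    1 - ‖v‖ ^ 2 + t * ((t + ‖M * M‖)⁻¹ * ‖v‖ ^ 2) ≤ ‖perturbationDet (-(M * M)) (M v) t‖ := by
  refine le_trans ?_ (Complex.re_le_norm _)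
  rw [perturbationDet_neg_mul_self hM ht v]
  have h := mul_norm_sq_le_re_inner_resolvent_neg hM.isSelfAdjoint.mul_self_nonneg ht v
  simpa [← Complex.ofReal_pow] using mul_le_mul_of_nonneg_left h ht.le

theorem isBigO_inv_perturbationDet_of_norm_lt_one (hM : 0 ≤ M) (hv : ‖v‖ < 1) :
    (fun t => ‖(perturbationDet (-(M * M)) (M v) t)⁻¹‖) =O[𝓝[>] 0] fun t : ℝ => t ^ (0 : ℝ) := by
  have hgap : 0 < 1 - ‖v‖ ^ 2 := by nlinarith [norm_nonneg v]
  refine .of_bound (1 - ‖v‖ ^ 2)⁻¹ (eventually_mem_nhdsWithin.mono fun t (ht : 0 < t) => ?_)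
  rw [norm_norm, norm_inv, Real.rpow_zero, norm_one, mul_one]
  gcongr
  refine le_trans ?_ (le_norm_perturbationDet_neg_mul_self hM ht v)
  exact le_add_of_nonneg_right (by positivity)

theorem isBigO_inv_perturbationDet_of_norm_eq_one (hM : 0 ≤ M) (hv : ‖v‖ = 1) :
    (fun t => ‖(perturbationDet (-(M * M)) (M v) t)⁻¹‖) =O[𝓝[>] 0] fun t : ℝ => t ^ (-1 : ℝ) := by
  have hlt : ∀ᶠ t : ℝ in 𝓝[>] 0, t < 1 := nhdsWithin_le_nhds (eventually_lt_nhds one_pos)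
  refine .of_bound (1 + ‖M * M‖) ((eventually_mem_nhdsWithin.and hlt).mono ?_)
  rintro t ⟨ht : 0 < t, ht1⟩
  have hle := le_norm_perturbationDet_neg_mul_self hM ht v
  rw [hv, one_pow, sub_self, zero_add, mul_one] at hle
  rw [norm_norm, norm_inv, Real.rpow_neg_one, norm_inv, Real.norm_of_nonneg ht.le]
  calc ‖perturbationDet (-(M * M)) (M v) t‖⁻¹ ≤ (t * (t + ‖M * M‖)⁻¹)⁻¹ := by gcongr
    _ = (t + ‖M * M‖) * t⁻¹ := by rw [mul_inv, inv_inv, mul_comm]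
    _ ≤ (1 + ‖M * M‖) * t⁻¹ := by gcongr

theorem resolvent_neg_mul_self_sub_resolvent_neg_mul_self (hM : 0 ≤ M) (hS : 0 ≤ S)
    (hsq : S * S = M * M - rankOne ℂ u u) (ht : 0 < t) :
    resolvent (-(S * S)) t - resolvent (-(M * M)) t =
      (perturbationDet (-(M * M)) u t)⁻¹ •
        rankOne ℂ (resolvent (-(M * M)) t u) (resolvent (-(M * M)) t u) := by
  have hM2 : 0 ≤ M * M := hM.isSelfAdjoint.mul_self_nonneg
  have htS := mem_resolventSet_neg_of_pos hS.isSelfAdjoint.mul_self_nonneg ht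
  rw [hsq, neg_sub', sub_neg_eq_add] at htS ⊢
  exact resolvent_add_rankOne_self_sub_resolvent_eq_smul hM2.isSelfAdjoint.neg
    (mem_resolventSet_neg_of_pos hM2 ht) htS

theorem perturbationDet_neg_mul_self_ne_zero (hM : 0 ≤ M) (hS : 0 ≤ S)
    (hsq : S * S = M * M - rankOne ℂ u u) (ht : 0 < t) :
    perturbationDet (-(M * M)) u t ≠ 0 := by
  have hM2 : 0 ≤ M * M := hM.isSelfAdjoint.mul_self_nonneg
  have htS := mem_resolventSet_neg_of_pos hS.isSelfAdjoint.mul_self_nonneg ht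
  rw [hsq, neg_sub', sub_neg_eq_add] at htS
  exact perturbationDet_ne_zero hM2.isSelfAdjoint.neg (mem_resolventSet_neg_of_pos hM2 ht) htS

/-- The vector `t^{1/2} D(t)⁻¹ (t + M²)⁻¹ u`, where `D` is the perturbation determinant of
`-M² + ⟨·, u⟩ u`: the left factor of the rank-one integrand representing the difference of the
square roots of `M²` and `M² - ⟨·, u⟩ u`. -/
noncomputable def weightedResolvent (M : H →L[ℂ] H) (u : H) (t : ℝ) : H :=
  (t ^ (1 / 2 : ℝ) • (perturbationDet (-(M * M)) u t)⁻¹) • resolvent (-(M * M)) t u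

theorem integral_rankOne_weightedResolvent_eq_smul_sub (hM : 0 ≤ M) (hS : 0 ≤ S)
    (hsq : S * S = M * M - rankOne ℂ u u) :
    ∫ t in Ioi (0 : ℝ), rankOne ℂ (weightedResolvent M u t) (resolvent (-(M * M)) t u) =
      (∫ t in Ioi 0, Real.rpowIntegrand₀₁ (1 / 2) t 1) • (M - S) := by
  have h := integral_smul_resolvent_sub_resolvent hM.isSelfAdjoint.mul_self_nonneg
    hS.isSelfAdjoint.mul_self_nonneg (p := 1 / 2) (by norm_num)
  rw [mul_self_rpow_one_half hM, mul_self_rpow_one_half hS] at h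
  rw [← h]
  refine setIntegral_congr_fun measurableSet_Ioi fun t ht => ?_
  rw [resolvent_neg_mul_self_sub_resolvent_neg_mul_self hM hS hsq ht, weightedResolvent,
    map_smul, smul_apply, smul_assoc]

theorem integral_rankOne_weightedResolvent_eq_smul_one_sub (hM : 0 ≤ M) (hS : 0 ≤ S)
    (hinj : Function.Injective M) (hsq : S * S = M * M - rankOne ℂ (M v) (M v)) (hT : T * M = S)
    (hint : IntegrableOn (fun t : ℝ => rankOne ℂ (weightedResolvent M (M v) t)
      (resolvent (-(M * M)) t v)) (Ioi 0)) :
    ∫ t in Ioi (0 : ℝ), rankOne ℂ (weightedResolvent M (M v) t) (resolvent (-(M * M)) t v) =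
      (∫ t in Ioi 0, Real.rpowIntegrand₀₁ (1 / 2) t 1) • (1 - T) := by
  have hmul : (∫ t in Ioi (0 : ℝ),
      rankOne ℂ (weightedResolvent M (M v) t) (resolvent (-(M * M)) t v)) * M =
      ((∫ t in Ioi 0, Real.rpowIntegrand₀₁ (1 / 2) t 1) • (1 - T)) * M := by
    rw [← integral_mul_const_of_integrable hint, smul_mul_assoc, sub_mul, one_mul, hT,
      ← integral_rankOne_weightedResolvent_eq_smul_sub hM hS hsq]
    refine setIntegral_congr_fun measurableSet_Ioi fun t ht => ?_
    rw [ContinuousLinearMap.mul_def, rankOne_comp, hM.isSelfAdjoint.adjoint_eq,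
      resolvent_neg_mul_self_apply_comm hM ht]
  exact DFunLike.coe_injective <|
    (denseRange_of_isSelfAdjoint_of_injective hM.isSelfAdjoint hinj).equalizer
      (map_continuous _) (map_continuous _) (congrArg DFunLike.coe hmul)

theorem isBigO_inv_perturbationDet_mul_resolvent_atTop (A : H →L[ℂ] H) (u x y : H) :
    (fun t : ℝ => ‖(perturbationDet A u t)⁻¹‖ * ‖resolvent A t x‖ * ‖resolvent A t y‖)
      =O[atTop] fun t => t ^ (-2 : ℝ) := by
  have hdet : (fun t => ‖(perturbationDet A u t)⁻¹‖) =O[atTop] fun _ : ℝ => (1 : ℝ) :=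
    (((tendsto_perturbationDet_atTop A u).inv₀ one_ne_zero).isBigO_one ℝ).norm_left
  refine ((hdet.mul (isBigO_resolvent_apply_atTop A x)).mul
    (isBigO_resolvent_apply_atTop A y)).congr' .rfl ?_
  filter_upwards [eventually_gt_atTop 0] with t ht
  rw [one_mul, ← Real.rpow_add ht]
  norm_num

theorem continuousOn_resolvent_neg_apply (hA : 0 ≤ A) (x : H) :
    ContinuousOn (fun t : ℝ => resolvent (-A) t x) (Ioi 0) :=
  (continuousOn_resolvent_neg hA).clm_apply continuousOn_const

theorem continuousOn_perturbationDet_neg (hA : 0 ≤ A) (u : H) :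
    ContinuousOn (perturbationDet (-A) u) (Ioi 0) :=
  continuousOn_const.sub
    ((innerSL ℂ u).continuous.comp_continuousOn (continuousOn_resolvent_neg_apply hA u))

theorem continuousOn_inv_perturbationDet (hM : 0 ≤ M) (hS : 0 ≤ S)
    (hsq : S * S = M * M - rankOne ℂ u u) :
    ContinuousOn (fun t => (perturbationDet (-(M * M)) u t)⁻¹) (Ioi 0) :=
  (continuousOn_perturbationDet_neg hM.isSelfAdjoint.mul_self_nonneg u).inv₀ fun _ ht =>
    perturbationDet_neg_mul_self_ne_zero hM hS hsq ht

theorem continuousOn_weightedResolvent (hM : 0 ≤ M) (hS : 0 ≤ S)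
    (hsq : S * S = M * M - rankOne ℂ u u) : ContinuousOn (weightedResolvent M u) (Ioi 0) :=
  ((continuousOn_id.rpow_const fun _ (ht : 0 < _) => .inl ht.ne').smul
    (continuousOn_inv_perturbationDet hM hS hsq)).smul
      (continuousOn_resolvent_neg_apply hM.isSelfAdjoint.mul_self_nonneg u)

theorem integrableOn_norm_resolvent_mul_norm_weightedResolvent (hM : 0 ≤ M) (hS : 0 ≤ S)
    (hsq : S * S = M * M - rankOne ℂ u u) {b : ℝ} (hb : b < 3 / 2)
    (hO : (fun t => ‖(perturbationDet (-(M * M)) u t)⁻¹‖ * ‖resolvent (-(M * M)) t u‖ *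
      ‖resolvent (-(M * M)) t v‖) =O[𝓝[>] 0] fun t : ℝ => t ^ (-b)) :
    IntegrableOn (fun t : ℝ => ‖resolvent (-(M * M)) t v‖ * ‖weightedResolvent M u t‖)
      (Ioi 0) := by
  have hres := continuousOn_resolvent_neg_apply hM.isSelfAdjoint.mul_self_nonneg
  have hloc := (((continuousOn_inv_perturbationDet hM hS hsq).norm.mul (hres u).norm).mul
    (hres v).norm).locallyIntegrableOn (μ := volume) measurableSet_Ioi
  have hmellin := mellin_convergent_of_isBigO_scalar (s := 3 / 2) hloc
    (isBigO_inv_perturbationDet_mul_resolvent_atTop _ u u v) (by norm_num) hO hb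
  refine hmellin.congr_fun (fun t (ht : 0 < t) => ?_) measurableSet_Ioi
  have hexp : (3 / 2 - 1 : ℝ) = 1 / 2 := by norm_num
  simp only [Pi.mul_apply]
  rw [weightedResolvent, norm_smul, norm_smul, Real.norm_of_nonneg (by positivity), hexp]
  ring

theorem isTraceClassOp_one_sub_of_isBigO (hM : 0 ≤ M) (hS : 0 ≤ S)
    (hinj : Function.Injective M) (hsq : S * S = M * M - rankOne ℂ (M v) (M v)) (hT : T * M = S)
    {b : ℝ} (hb : b < 3 / 2)
    (hO : (fun t => ‖(perturbationDet (-(M * M)) (M v) t)⁻¹‖ *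
      ‖resolvent (-(M * M)) t (M v)‖ * ‖resolvent (-(M * M)) t v‖)
        =O[𝓝[>] 0] fun t : ℝ => t ^ (-b)) :
    IsTraceClassOp (1 - T) := by
  have hmeas := (continuousOn_resolvent_neg_apply hM.isSelfAdjoint.mul_self_nonneg
    v).aestronglyMeasurable (μ := volume) measurableSet_Ioi
  have hmeas' := (continuousOn_weightedResolvent hM hS hsq).aestronglyMeasurable
    (μ := volume) measurableSet_Ioi
  have hint := integrableOn_norm_resolvent_mul_norm_weightedResolvent hM hS hsq hb hO
  have htrace := isTraceClassOp_integral_rankOne hmeas hmeas' hint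
  rw [integral_rankOne_weightedResolvent_eq_smul_one_sub hM hS hinj hsq hT
    (integrable_rankOne hmeas hmeas' hint)] at htrace
  set c : ℝ := ∫ t in Ioi 0, Real.rpowIntegrand₀₁ (1 / 2) t 1
  have hc : (c : ℂ) ≠ 0 :=
    Complex.ofReal_ne_zero.2 (Real.integral_rpowIntegrand₀₁_one_pos (by norm_num)).ne'
  simpa [← Complex.coe_smul, smul_smul, hc] using htrace.smul (c : ℂ)⁻¹

end SquareRootPerturbation

section MultiplicationOperators

theorem rpow_le_rpow_mul_sq_add {s t α : ℝ} (hs : 0 ≤ s) (ht : 0 < t) (hα : α ∈ Icc 0 2) :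
    s ^ α ≤ t ^ (α / 2 - 1) * (s ^ 2 + t) := by
  have hinterp : s ^ α * t ^ (1 - α / 2) ≤ s ^ 2 + t := by
    calc s ^ α * t ^ (1 - α / 2) = (s ^ 2) ^ (α / 2) * t ^ (1 - α / 2) := by
          rw [← Real.rpow_natCast_mul hs, Nat.cast_two, mul_div_cancel₀ α two_ne_zero]
      _ ≤ (s ^ 2 + t) ^ (α / 2) * (s ^ 2 + t) ^ (1 - α / 2) := by
          gcongr
          · linarith [hα.1]
          · linarith
          · linarith [hα.2]
          · nlinarith
      _ = s ^ 2 + t := by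
          rw [← Real.rpow_add (by positivity), add_sub_cancel, Real.rpow_one]
  calc s ^ α = t ^ (α / 2 - 1) * (s ^ α * t ^ (1 - α / 2)) := by
        rw [mul_left_comm, ← Real.rpow_add ht, sub_add_sub_cancel, sub_self, Real.rpow_zero,
          mul_one]
    _ ≤ t ^ (α / 2 - 1) * (s ^ 2 + t) := by gcongr

variable {Ω : Type*} {mΩ : MeasurableSpace Ω} {μ : Measure Ω} {φ : Ω → ℝ} {α β : ℝ}
  {E : Type*} [NormedAddCommGroup E] [NormedSpace ℝ E]

theorem eLpNorm_two_smul_sq (w : Ω → ℝ) (f : Ω → E) :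
    eLpNorm (fun x => w x • f x) 2 μ ^ 2 = ∫⁻ x, ‖f x‖ₑ ^ 2 * ENNReal.ofReal (w x ^ 2) ∂μ := by
  have h := eLpNorm_nnreal_pow_eq_lintegral (f := fun x => w x • f x) (μ := μ)
    (two_ne_zero (α := NNReal))
  simp only [ENNReal.coe_ofNat, NNReal.coe_ofNat, ENNReal.rpow_ofNat] at h
  rw [h]
  refine lintegral_congr fun x => ?_
  rw [enorm_smul, mul_pow, mul_comm, ← sq_abs, ENNReal.ofReal_pow (abs_nonneg _),
    ← Real.norm_eq_abs, ofReal_norm]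

theorem memLp_two_smul_of_lintegral_lt_top {w : Ω → ℝ} {f : Ω → E} (hw : AEMeasurable w μ)
    (hf : AEStronglyMeasurable f μ)
    (h : ∫⁻ x, ‖f x‖ₑ ^ 2 * ENNReal.ofReal (w x ^ 2) ∂μ < ⊤) :
    MemLp (fun x => w x • f x) 2 μ := by
  refine ⟨hw.aestronglyMeasurable.smul hf, ?_⟩
  rw [← eLpNorm_two_smul_sq] at h
  exact (ENNReal.pow_lt_top_iff.1 h).resolve_right two_ne_zero

theorem memLp_two_rpow_smul_of_le (hφ : AEMeasurable φ μ) (hpos : ∀ᵐ x ∂μ, 0 < φ x)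
    {f : Ω → E} (hf : MemLp f 2 μ) (hα : 0 ≤ α) (hαβ : α ≤ β)
    (hβ : MemLp (fun x => φ x ^ (-β) • f x) 2 μ) :
    MemLp (fun x => φ x ^ (-α) • f x) 2 μ := by
  refine (hf.norm.add hβ.norm).mono'
    ((hφ.pow_const _).aestronglyMeasurable.smul hf.aestronglyMeasurable) ?_
  filter_upwards [hpos] with x hx
  have hle : φ x ^ (-α) ≤ 1 + φ x ^ (-β) := by
    rcases le_total (φ x) 1 with h1 | h1
    · have := Real.rpow_le_rpow_of_exponent_ge hx h1 (neg_le_neg hαβ)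
      linarith
    · have := Real.rpow_le_one_of_one_le_of_nonpos h1 (neg_nonpos.2 hα)
      linarith [Real.rpow_nonneg hx.le (-β)]
  calc ‖φ x ^ (-α) • f x‖ = φ x ^ (-α) * ‖f x‖ := by
        rw [norm_smul, Real.norm_of_nonneg (by positivity)]
    _ ≤ (1 + φ x ^ (-β)) * ‖f x‖ := by gcongr
    _ = ‖f x‖ + ‖φ x ^ (-β) • f x‖ := by
        rw [norm_smul, Real.norm_of_nonneg (by positivity), add_mul, one_mul]

/-- `M` is the operator of multiplication by the real function `φ` on `L²(μ)`. Stating this as a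
property of a bounded `M` avoids any boundedness assumption on `φ`. -/
def IsMulOp (φ : Ω → ℝ) (M : Lp ℂ 2 μ →L[ℂ] Lp ℂ 2 μ) : Prop :=
  ∀ f : Lp ℂ 2 μ, ∀ᵐ x ∂μ, M f x = φ x * f x

namespace IsMulOp

variable {M S T : Lp ℂ 2 μ →L[ℂ] Lp ℂ 2 μ} {f u v : Lp ℂ 2 μ} {t : ℝ}

theorem nonneg (hM : IsMulOp φ M) (hφ : ∀ᵐ x ∂μ, 0 ≤ φ x) : 0 ≤ M := by
  rw [ContinuousLinearMap.nonneg_iff_isPositive, ContinuousLinearMap.isPositive_iff_complex]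
  intro f
  have hinner : ⟪M f, f⟫_ℂ = ((∫ x, φ x * ‖f x‖ ^ 2 ∂μ : ℝ) : ℂ) := by
    rw [L2.inner_def, ← integral_complex_ofReal]
    refine integral_congr_ae ?_
    filter_upwards [hM f] with x hx
    rw [hx, ← smul_eq_mul, inner_smul_left, inner_self_eq_norm_sq_to_K, Complex.conj_ofReal]
    push_cast
    rfl
  rw [hinner]
  refine ⟨rfl, integral_nonneg_of_ae ?_⟩
  filter_upwards [hφ] with x hx using by positivity

theorem injective (hM : IsMulOp φ M) (hφ : ∀ᵐ x ∂μ, φ x ≠ 0) : Function.Injective M := by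
  refine (injective_iff_map_eq_zero M).2 fun f hf => (Lp.eq_zero_iff_ae_eq_zero).2 ?_
  filter_upwards [hM f, hφ, (Lp.eq_zero_iff_ae_eq_zero).1 hf] with x hx hφx hfx
  rw [hfx, Pi.zero_apply, zero_eq_mul] at hx
  exact hx.resolve_left (Complex.ofReal_ne_zero.2 hφx)

theorem eq_mul_resolvent_neg_mul_self_apply (hM : IsMulOp φ M) (hpos : ∀ᵐ x ∂μ, 0 < φ x)
    (ht : 0 < t) (f : Lp ℂ 2 μ) :
    ∀ᵐ x ∂μ, f x = ((φ x ^ 2 + t : ℝ) : ℂ) * resolvent (-(M * M)) t f x := by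
  set g : Lp ℂ 2 μ := resolvent (-(M * M)) t f
  have hg : (t : ℂ) • g + M (M g) = f :=
    smul_resolvent_neg_mul_self_add (hM.nonneg (hpos.mono fun _ => le_of_lt)) ht f
  filter_upwards [hM g, hM (M g), Lp.coeFn_add ((t : ℂ) • g) (M (M g)),
    Lp.coeFn_smul (t : ℂ) g] with x h1 h2 hadd hsmul
  rw [← hg, hadd, Pi.add_apply, hsmul, Pi.smul_apply, h2, h1]
  push_cast
  rw [smul_eq_mul]
  ring

theorem norm_resolvent_neg_mul_self_apply_le (hM : IsMulOp φ M) (hpos : ∀ᵐ x ∂μ, 0 < φ x)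
    (ht : 0 < t) (hα : α ∈ Icc 0 2) (hf : MemLp (fun x => φ x ^ (-α) • f x) 2 μ) :
    ‖resolvent (-(M * M)) t f‖ ≤ t ^ (α / 2 - 1) * ‖hf.toLp‖ := by
  refine Lp.norm_le_mul_norm_of_ae_le_mul ?_
  filter_upwards [hpos, hM.eq_mul_resolvent_neg_mul_self_apply hpos ht f, hf.coeFn_toLp]
    with x hx hres hfx
  have hden : 0 < φ x ^ 2 + t := by positivity
  rw [hfx, hres, norm_smul, norm_mul, Complex.norm_real, Real.norm_of_nonneg hden.le,
    Real.norm_of_nonneg (by positivity), ← mul_assoc, ← mul_assoc]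
  refine le_mul_of_one_le_left (norm_nonneg _) ?_
  calc 1 = φ x ^ α * φ x ^ (-α) := by rw [← Real.rpow_add hx, add_neg_cancel, Real.rpow_zero]
    _ ≤ t ^ (α / 2 - 1) * (φ x ^ 2 + t) * φ x ^ (-α) := by
        gcongr
        exact rpow_le_rpow_mul_sq_add hx.le ht hα
    _ = t ^ (α / 2 - 1) * φ x ^ (-α) * (φ x ^ 2 + t) := mul_right_comm _ _ _

theorem isBigO_norm_resolvent_neg_mul_self_apply (hM : IsMulOp φ M) (hpos : ∀ᵐ x ∂μ, 0 < φ x)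
    (hα : α ∈ Icc 0 2) (hf : MemLp (fun x => φ x ^ (-α) • f x) 2 μ) :
    (fun t => ‖resolvent (-(M * M)) t f‖) =O[𝓝[>] 0] fun t : ℝ => t ^ (α / 2 - 1) := by
  refine .of_bound ‖hf.toLp‖ (eventually_mem_nhdsWithin.mono fun t (ht : 0 < t) => ?_)
  rw [norm_norm, Real.norm_of_nonneg (by positivity), mul_comm]
  exact hM.norm_resolvent_neg_mul_self_apply_le hpos ht hα hf

theorem memLp_rpow_smul_apply_iff (hM : IsMulOp φ M) (hpos : ∀ᵐ x ∂μ, 0 < φ x) :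
    MemLp (fun x => φ x ^ (-(α + 1)) • M f x) 2 μ ↔ MemLp (fun x => φ x ^ (-α) • f x) 2 μ := by
  refine memLp_congr_ae ?_
  filter_upwards [hpos, hM f] with x hx hMx
  rw [hMx, ← Complex.real_smul, smul_smul, ← Real.rpow_add_one hx.ne', neg_add,
    neg_add_cancel_right]

theorem memLp_rpow_smul_of_lintegral_lt_top (hM : IsMulOp φ M) (hφ : AEMeasurable φ μ)
    (hpos : ∀ᵐ x ∂μ, 0 < φ x)
    (h : ∫⁻ x, ‖M f x‖ₑ ^ 2 * ENNReal.ofReal (φ x ^ (-2 - 2 * α)) ∂μ < ⊤) :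
    MemLp (fun x => φ x ^ (-α) • f x) 2 μ := by
  refine (hM.memLp_rpow_smul_apply_iff hpos).1
    (memLp_two_smul_of_lintegral_lt_top (hφ.pow_const _) (Lp.aestronglyMeasurable _) ?_)
  convert h using 1
  refine lintegral_congr_ae (hpos.mono fun x hx => ?_)
  beta_reduce
  rw [← Real.rpow_mul_natCast hx.le]
  ring_nf

theorem exists_apply_eq_and_ofReal_norm_sq_eq (hM : IsMulOp φ M) (hφ : AEMeasurable φ μ)
    (hpos : ∀ᵐ x ∂μ, 0 < φ x)
    (h : ∫⁻ x, ‖u x‖ₑ ^ 2 * ENNReal.ofReal ((φ x)⁻¹ ^ 2) ∂μ < ⊤) :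
    ∃ v, M v = u ∧
      ENNReal.ofReal (‖v‖ ^ 2) = ∫⁻ x, ‖u x‖ₑ ^ 2 * ENNReal.ofReal ((φ x)⁻¹ ^ 2) ∂μ := by
  have hv := memLp_two_smul_of_lintegral_lt_top hφ.inv (Lp.aestronglyMeasurable u) h
  refine ⟨hv.toLp, Lp.ext ?_, ?_⟩
  · filter_upwards [hpos, hM hv.toLp, hv.coeFn_toLp] with x hx hMx hvx
    rw [hMx, hvx, ← Complex.real_smul, Pi.inv_apply, smul_inv_smul₀ hx.ne']
  · rw [ENNReal.ofReal_pow (norm_nonneg _), ofReal_norm, Lp.enorm_toLp, eLpNorm_two_smul_sq]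
    rfl

theorem isTraceClassOp_one_sub_of_isBigO_inv_perturbationDet (hM : IsMulOp φ M)
    (hpos : ∀ᵐ x ∂μ, 0 < φ x) (hS : 0 ≤ S)
    (hsq : S * S = M * M - rankOne ℂ (M v) (M v)) (hT : T * M = S) {γ : ℝ}
    (hα : α ∈ Icc 0 2) (hβ : β ∈ Icc 0 2) (hsum : 1 / 2 < γ + (α + β) / 2)
    (hu : MemLp (fun x => φ x ^ (-α) • M v x) 2 μ) (hv : MemLp (fun x => φ x ^ (-β) • v x) 2 μ)
    (hdet : (fun t => ‖(perturbationDet (-(M * M)) (M v) t)⁻¹‖) =O[𝓝[>] 0] fun t : ℝ => t ^ γ) :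
    IsTraceClassOp (1 - T) := by
  have hO := (hdet.mul (hM.isBigO_norm_resolvent_neg_mul_self_apply hpos hα hu)).mul
    (hM.isBigO_norm_resolvent_neg_mul_self_apply hpos hβ hv)
  refine isTraceClassOp_one_sub_of_isBigO (b := 2 - γ - (α + β) / 2)
    (hM.nonneg (hpos.mono fun _ => le_of_lt)) hS
    (hM.injective (hpos.mono fun _ => ne_of_gt)) hsq hT (by linarith) (hO.congr' .rfl ?_)
  refine eventually_mem_nhdsWithin.mono fun t (ht : 0 < t) => ?_
  beta_reduce
  rw [← Real.rpow_add ht, ← Real.rpow_add ht]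
  ring_nf

theorem isTraceClassOp_one_sub_of_norm_eq_one (hM : IsMulOp φ M) (hφ : AEMeasurable φ μ)
    (hpos : ∀ᵐ x ∂μ, 0 < φ x) (hS : 0 ≤ S)
    (hsq : S * S = M * M - rankOne ℂ (M v) (M v)) (hT : T * M = S) (hnorm : ‖v‖ = 1) (hβ : 1 < β)
    (hv : MemLp (fun x => φ x ^ (-β) • v x) 2 μ) :
    IsTraceClassOp (1 - T) := by
  have hinterp {α : ℝ} (hα : 0 ≤ α) (hαβ : α ≤ β) :=
    memLp_two_rpow_smul_of_le hφ hpos (Lp.memLp v) hα hαβ hv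
  have hmin : 1 < min β 2 := lt_min hβ one_lt_two
  exact hM.isTraceClassOp_one_sub_of_isBigO_inv_perturbationDet hpos hS hsq hT
    (α := 1 + 1) (β := min β 2)
    (by norm_num) ⟨by linarith, min_le_right _ _⟩ (by linarith)
    ((hM.memLp_rpow_smul_apply_iff hpos).2 (hinterp zero_le_one hβ.le))
    (hinterp (by linarith) (min_le_left _ _))
    (isBigO_inv_perturbationDet_of_norm_eq_one (hM.nonneg (hpos.mono fun _ => le_of_lt)) hnorm)

theorem isTraceClassOp_one_sub_of_norm_lt_one (hM : IsMulOp φ M) (hφ : AEMeasurable φ μ)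
    (hpos : ∀ᵐ x ∂μ, 0 < φ x) (hS : 0 ≤ S)
    (hsq : S * S = M * M - rankOne ℂ (M v) (M v)) (hT : T * M = S) (hnorm : ‖v‖ < 1) (hβ : 0 < β)
    (hv : MemLp (fun x => φ x ^ (-β) • v x) 2 μ) :
    IsTraceClassOp (1 - T) := by
  have hmin : 0 < min β 1 := lt_min hβ one_pos
  have hmin1 : min β 1 ≤ 1 := min_le_right _ _
  have hv' := memLp_two_rpow_smul_of_le hφ hpos (Lp.memLp v) hmin.le (min_le_left β 1) hv
  exact hM.isTraceClassOp_one_sub_of_isBigO_inv_perturbationDet hpos hS hsq hT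
    (α := min β 1 + 1) (β := min β 1)
    ⟨by linarith, by linarith⟩ ⟨hmin.le, by linarith⟩ (by linarith)
    ((hM.memLp_rpow_smul_apply_iff hpos).2 hv') hv'
    (isBigO_inv_perturbationDet_of_norm_lt_one (hM.nonneg (hpos.mono fun _ => le_of_lt)) hnorm)

end IsMulOp

end MultiplicationOperators

theorem lintegral_enorm_sq_mul_of_ae_eq_one {Ω : Type*} {mΩ : MeasurableSpace Ω} {μ : Measure Ω}
    {f : Ω → ℂ} (hf : ∀ᵐ x ∂μ, f x = 1) (w : Ω → ℝ≥0∞) :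
    ∫⁻ x, ‖f x‖ₑ ^ 2 * w x ∂μ = ∫⁻ x, w x ∂μ := by
  refine lintegral_congr_ae (hf.mono fun x hx => ?_)
  beta_reduce
  rw [hx, enorm_one, one_pow, one_mul]

theorem one_sub_Sigma0_traceClass_general {Ω : Type*} {mΩ : MeasurableSpace Ω} {μ : Measure Ω}
    {φ : Ω → ℝ} (hφ : AEMeasurable φ μ) (hpos : ∀ᵐ x ∂μ, 0 < φ x)
    {M S T : Lp ℂ 2 μ →L[ℂ] Lp ℂ 2 μ} {u : Lp ℂ 2 μ} (hM : IsMulOp φ M) (hS : S.IsPositive)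
    (hsq : ∀ f, S (S f) = M (M f) - ⟪u, f⟫_ℂ • u) (hT : T.comp M = S) {ε : ℝ} (hε : 0 < ε)
    (hcase :
      ((∫⁻ x, ‖u x‖ₑ ^ 2 * ENNReal.ofReal ((φ x)⁻¹ ^ 2) ∂μ) = 1 ∧
        (∫⁻ x, ‖u x‖ₑ ^ 2 * ENNReal.ofReal (φ x ^ (-(4 : ℝ) - ε)) ∂μ) < ⊤) ∨
      ((∫⁻ x, ‖u x‖ₑ ^ 2 * ENNReal.ofReal ((φ x)⁻¹ ^ 2) ∂μ) < 1 ∧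
        (∫⁻ x, ‖u x‖ₑ ^ 2 * ENNReal.ofReal (φ x ^ (-(2 : ℝ) - ε)) ∂μ) < ⊤)) :
    IsTraceClassOp (1 - T) ∧ IsTraceClassOp (1 - ContinuousLinearMap.adjoint T) := by
  suffices h : IsTraceClassOp (1 - T) by
    refine ⟨h, ?_⟩
    simpa only [map_sub, ContinuousLinearMap.adjoint_one] using h.adjoint
  have hfin : ∫⁻ x, ‖u x‖ₑ ^ 2 * ENNReal.ofReal ((φ x)⁻¹ ^ 2) ∂μ < ⊤ :=
    hcase.elim (fun h => h.1 ▸ ENNReal.one_lt_top) (fun h => h.1.trans ENNReal.one_lt_top)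
  obtain ⟨v, rfl, hv⟩ := hM.exists_apply_eq_and_ofReal_norm_sq_eq hφ hpos hfin
  rw [← ContinuousLinearMap.nonneg_iff_isPositive] at hS
  have hsq' : S * S = M * M - rankOne ℂ (M v) (M v) := ContinuousLinearMap.ext hsq
  rw [← hv, ENNReal.ofReal_eq_one, pow_eq_one_iff_of_nonneg (norm_nonneg v) two_ne_zero,
    ENNReal.ofReal_lt_one, pow_lt_one_iff_of_nonneg (norm_nonneg v) two_ne_zero] at hcase
  rcases hcase with ⟨hnorm, hmoment⟩ | ⟨hnorm, hmoment⟩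
  · have hexp : -(4 : ℝ) - ε = -2 - 2 * (1 + ε / 2) := by ring
    rw [hexp] at hmoment
    exact hM.isTraceClassOp_one_sub_of_norm_eq_one hφ hpos hS hsq' hT hnorm (by linarith)
      (hM.memLp_rpow_smul_of_lintegral_lt_top hφ hpos hmoment)
  · have hexp : -(2 : ℝ) - ε = -2 - 2 * (ε / 2) := by ring
    rw [hexp] at hmoment
    exact hM.isTraceClassOp_one_sub_of_norm_lt_one hφ hpos hS hsq' hT hnorm (by linarith)
      (hM.memLp_rpow_smul_of_lintegral_lt_top hφ hpos hmoment)

/-- **Sufficient moment conditions for `I − Σ₀` to be trace class.** In the model `L²(ρ)`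
with `T` the unique contraction satisfying `T∘M = M̃`: if for some `ε > 0` either
`∫ s⁻² dρ = 1` and `∫ s⁻⁴⁻ᵉ dρ < ∞`, or `∫ s⁻² dρ < 1` and `∫ s⁻²⁻ᵉ dρ < ∞`, then
`I − T` (and hence `I − T*`) is trace class. -/
theorem one_sub_Sigma0_traceClass
    (ρ : Measure ℝ) [IsFiniteMeasure ρ]
    (hcarr : ρ {s : ℝ | s ≤ 0} = 0)
    (hbddsupp : ∃ b : ℝ, ρ {s : ℝ | b < s} = 0)
    (hnorm : ∫⁻ s, ENNReal.ofReal (s⁻¹ ^ 2) ∂ρ ≤ 1)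
    (one : Lp ℂ 2 ρ)
    (hone : ∀ᵐ s ∂ρ, (one : ℝ → ℂ) s = 1)
    (M Mt : Lp ℂ 2 ρ →L[ℂ] Lp ℂ 2 ρ)
    (hM : ∀ f : Lp ℂ 2 ρ, ∀ᵐ s ∂ρ, (M f : ℝ → ℂ) s = (s : ℂ) * (f : ℝ → ℂ) s)
    (hMt_pos : Mt.IsPositive)
    (hMt_sq : ∀ f, Mt (Mt f) = M (M f) - ⟪one, f⟫_ℂ • one)
    (T : Lp ℂ 2 ρ →L[ℂ] Lp ℂ 2 ρ) (hT : T.comp M = Mt)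
    (ε : ℝ) (hε : 0 < ε)
    (hcase :
      ((∫⁻ s, ENNReal.ofReal (s⁻¹ ^ 2) ∂ρ) = 1 ∧
        (∫⁻ s, ENNReal.ofReal (s ^ (-(4 : ℝ) - ε)) ∂ρ) < ⊤) ∨
      ((∫⁻ s, ENNReal.ofReal (s⁻¹ ^ 2) ∂ρ) < 1 ∧
        (∫⁻ s, ENNReal.ofReal (s ^ (-(2 : ℝ) - ε)) ∂ρ) < ⊤)) :
    IsTraceClassOp (1 - T) ∧ IsTraceClassOp (1 - ContinuousLinearMap.adjoint T) := by
  have hpos : ∀ᵐ s ∂ρ, 0 < s := by simpa only [ae_iff, not_lt] using hcarr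
  refine one_sub_Sigma0_traceClass_general aemeasurable_id hpos hM hMt_pos hMt_sq hT hε ?_
  simpa only [lintegral_enorm_sq_mul_of_ae_eq_one hone, id] using hcase
end

section
/- Let ρ, M, M̃ be as in the model context, and assume in addition that the support of ρ is contained in an interval [a, b] with 0 < a ≤ b < ∞ (i.e. supp ρ is separated away from 0). Let T be the unique contraction on L²(ρ) with T∘M = M̃. Then I − T is a trace class operator. -/
open MeasureTheory Filter
open scoped InnerProductSpace ENNReal

/-!
With `D = M - M̃` one has `M * D + D * M̃ = M ^ 2 - M̃ ^ 2`, a Sylvester equation whose right-hand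
side has rank one. Since `M ≥ a > 0` and `M̃ ≥ 0`, shifting by `c = ‖M̃‖` turns it into
`D = R * (M ^ 2 - M̃ ^ 2) + R * D * W` with `R = (M + c)⁻¹` and `W = c - M̃`, for which
`‖R‖ * ‖W‖ ≤ c / (a + c) < 1`. Iterating yields `D = ∑ Rⁿ⁺¹ * (M ^ 2 - M̃ ^ 2) * Wⁿ`, a series that
converges geometrically in trace norm, and `1 - T = D * M⁻¹`.
-/

open scoped InnerProduct Ring Topology
open InnerProductSpace (rankOne)

section NormedRing

variable {A : Type*}

lemma norm_pow_mul_mul_pow_le [SeminormedRing A] (r k w : A) (n : ℕ) :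
    ‖r ^ n * k * w ^ n‖ ≤ (‖r‖ * ‖w‖) ^ n * ‖k‖ := by
  induction n with
  | zero => simp
  | succ n ih =>
    calc ‖r ^ (n + 1) * k * w ^ (n + 1)‖ = ‖r * (r ^ n * k * w ^ n) * w‖ := by
          rw [pow_succ' r, pow_succ w]; simp only [mul_assoc]
      _ ≤ ‖r‖ * ‖r ^ n * k * w ^ n‖ * ‖w‖ := norm_mul₃_le
      _ ≤ ‖r‖ * ((‖r‖ * ‖w‖) ^ n * ‖k‖) * ‖w‖ := by gcongr
      _ = (‖r‖ * ‖w‖) ^ (n + 1) * ‖k‖ := by ring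

lemma eq_sum_range_pow_mul_mul_pow_add [Ring A] {r k w x : A} (hx : x = k + r * x * w) (n : ℕ) :
    x = ∑ i ∈ Finset.range n, r ^ i * k * w ^ i + r ^ n * x * w ^ n := by
  induction n with
  | zero => simp
  | succ n ih =>
    have step : r ^ n * x * w ^ n = r ^ n * k * w ^ n + r ^ (n + 1) * x * w ^ (n + 1) := by
      conv_lhs => rw [hx]
      rw [pow_succ r, pow_succ' w]
      noncomm_ring
    rw [Finset.sum_range_succ, add_assoc, ← step, ← ih]

lemma hasSum_pow_mul_mul_pow [SeminormedRing A] {r k w x : A} (hrw : ‖r‖ * ‖w‖ < 1)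
    (hx : x = k + r * x * w) : HasSum (fun n : ℕ ↦ r ^ n * k * w ^ n) x := by
  have geometric (y : A) : Summable fun n : ℕ ↦ (‖r‖ * ‖w‖) ^ n * ‖y‖ :=
    (summable_geometric_of_lt_one (by positivity) hrw).mul_right _
  have remainder : Tendsto (fun n : ℕ ↦ r ^ n * x * w ^ n) atTop (𝓝 0) :=
    squeeze_zero_norm (norm_pow_mul_mul_pow_le r x w) (geometric x).tendsto_atTop_zero
  have summable_norm : Summable fun n : ℕ ↦ ‖r ^ n * k * w ^ n‖ :=
    .of_nonneg_of_le (fun _ ↦ norm_nonneg _) (norm_pow_mul_mul_pow_le r k w) (geometric k)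
  rw [hasSum_iff_tendsto_nat_of_summable_norm summable_norm]
  simpa only [← eq_sub_of_add_eq (eq_sum_range_pow_mul_mul_pow_add hx _).symm, sub_zero]
    using (tendsto_const_nhds (x := x)).sub remainder

end NormedRing

section CStarAlgebra

variable {A : Type*} [CStarAlgebra A] [PartialOrder A] [StarOrderedRing A] {x : A} {a : ℝ}

lemma isStrictlyPositive_of_algebraMap_le (ha : 0 < a) (hx : algebraMap ℝ A a ≤ x) :
    IsStrictlyPositive x :=
  (isStrictlyPositive_algebraMap ha).of_le hx

lemma norm_ringInverse_le_inv (ha : 0 < a) (hx : algebraMap ℝ A a ≤ x) : ‖x⁻¹ʳ‖ ≤ a⁻¹ := by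
  have hx_pos := isStrictlyPositive_of_algebraMap_le ha hx
  rw [CStarAlgebra.norm_le_iff_le_algebraMap _ (by positivity) hx_pos.ringInverse.nonneg]
  have ha_pos : IsStrictlyPositive (algebraMap ℝ A a) := isStrictlyPositive_algebraMap ha
  calc x⁻¹ʳ ≤ (algebraMap ℝ A a)⁻¹ʳ := CStarAlgebra.ringInverse_le_ringInverse hx ha_pos
    _ = algebraMap ℝ A a⁻¹ := by
        rw [← mul_one (_)⁻¹ʳ, Ring.inverse_mul_eq_iff_eq_mul _ _ _ ha_pos.isUnit, ← map_mul,
          mul_inv_cancel₀ ha.ne', map_one]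

lemma norm_algebraMap_norm_sub_le (hx : 0 ≤ x) : ‖algebraMap ℝ A ‖x‖ - x‖ ≤ ‖x‖ := by
  have hx_le : x ≤ algebraMap ℝ A ‖x‖ := hx.isSelfAdjoint.le_algebraMap_norm_self
  rw [CStarAlgebra.norm_le_iff_le_algebraMap _ (norm_nonneg x) (sub_nonneg.2 hx_le)]
  exact sub_le_self _ hx

end CStarAlgebra

section TraceClass

variable {H : Type*} [NormedAddCommGroup H] [InnerProductSpace ℂ H]

lemma norm_adjoint_pow_apply_mul_norm_pow_apply_le [CompleteSpace H] (R W : H →L[ℂ] H) (u v : H)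
    (n : ℕ) : ‖((W ^ n)†) u‖ * ‖(R ^ n) v‖ ≤ (‖R‖ * ‖W‖) ^ n * (‖u‖ * ‖v‖) := by
  calc ‖((W ^ n)†) u‖ * ‖(R ^ n) v‖ = ‖R ^ n * rankOne ℂ v u * W ^ n‖ := by
        rw [ContinuousLinearMap.mul_def, ContinuousLinearMap.mul_def,
          InnerProductSpace.comp_rankOne, InnerProductSpace.rankOne_comp,
          InnerProductSpace.norm_rankOne, mul_comm]
    _ ≤ (‖R‖ * ‖W‖) ^ n * ‖rankOne ℂ v u‖ := norm_pow_mul_mul_pow_le _ _ _ n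
    _ = (‖R‖ * ‖W‖) ^ n * (‖u‖ * ‖v‖) := by
        rw [InnerProductSpace.norm_rankOne, mul_comm ‖v‖]

lemma isTraceClassOp_of_hasSum {ι : Type*} [Countable ι] {K : H →L[ℂ] H} {u v : ι → H}
    (huv : Summable fun i ↦ ‖u i‖ * ‖v i‖) (hK : ∀ f, HasSum (fun i ↦ ⟪u i, f⟫_ℂ • v i) (K f)) :
    IsTraceClassOp K := by
  obtain ⟨e, he⟩ := exists_injective_nat ι
  refine ⟨Function.extend e u 0, Function.extend e v 0, ?_, fun f ↦ ?_⟩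
  · refine (he.summable_iff fun n hn ↦ ?_).1 (huv.congr fun i ↦ ?_)
    · simp [Function.extend_apply' _ _ _ hn]
    · simp [he.extend_apply]
  · refine (he.hasSum_iff fun n hn ↦ ?_).1 ((hK f).congr_fun ?_)
    · simp [Function.extend_apply' _ _ _ hn]
    · simp [he.extend_apply]

lemma isTraceClassOp_rankOne (u v : H) : IsTraceClassOp (rankOne ℂ v u) :=
  isTraceClassOp_of_hasSum (ι := Unit) (u := fun _ ↦ u) (v := fun _ ↦ v) .of_finite
    fun _ ↦ hasSum_unique _

namespace IsTraceClassOp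

variable {K : H →L[ℂ] H}

lemma mul_left (hK : IsTraceClassOp K) (S : H →L[ℂ] H) : IsTraceClassOp (S * K) := by
  obtain ⟨u, v, huv, hKuv⟩ := hK
  refine ⟨u, fun n ↦ S (v n), ?_, fun f ↦ ?_⟩
  · refine .of_nonneg_of_le (fun n ↦ by positivity) (fun n ↦ ?_) (huv.mul_left ‖S‖)
    calc ‖u n‖ * ‖S (v n)‖ ≤ ‖u n‖ * (‖S‖ * ‖v n‖) := by gcongr; exact S.le_opNorm _
      _ = ‖S‖ * (‖u n‖ * ‖v n‖) := by ring
  · simpa using S.hasSum (hKuv f)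

variable [CompleteSpace H]

lemma mul_right (hK : IsTraceClassOp K) (S : H →L[ℂ] H) : IsTraceClassOp (K * S) := by
  obtain ⟨u, v, huv, hKuv⟩ := hK
  refine ⟨fun n ↦ (S†) (u n), v, ?_, fun f ↦ ?_⟩
  · refine .of_nonneg_of_le (fun n ↦ by positivity) (fun n ↦ ?_) (huv.mul_left ‖S†‖)
    calc ‖(S†) (u n)‖ * ‖v n‖ ≤ ‖S†‖ * ‖u n‖ * ‖v n‖ := by gcongr; exact (S†).le_opNorm _
      _ = ‖S†‖ * (‖u n‖ * ‖v n‖) := by ring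
  · simpa [ContinuousLinearMap.adjoint_inner_left] using hKuv (S f)

lemma of_eq_add_mul_mul (hK : IsTraceClassOp K) {R W X : H →L[ℂ] H} (hRW : ‖R‖ * ‖W‖ < 1)
    (hX : X = K + R * X * W) : IsTraceClassOp X := by
  obtain ⟨u, v, huv, hKuv⟩ := hK
  have summable_norm :
      Summable fun p : ℕ × ℕ ↦ ‖((W ^ p.1)†) (u p.2)‖ * ‖(R ^ p.1) (v p.2)‖ :=
    .of_nonneg_of_le (fun p ↦ by positivity)
      (fun p ↦ norm_adjoint_pow_apply_mul_norm_pow_apply_le R W (u p.2) (v p.2) p.1) <|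
      (summable_geometric_of_lt_one (by positivity) hRW).mul_of_nonneg huv
        (fun n ↦ by positivity) (fun m ↦ by positivity)
  refine isTraceClassOp_of_hasSum summable_norm fun f ↦ ?_
  have summable_apply :
      Summable fun p : ℕ × ℕ ↦ ⟪((W ^ p.1)†) (u p.2), f⟫_ℂ • (R ^ p.1) (v p.2) := by
    refine .of_norm_bounded (summable_norm.mul_right ‖f‖) fun p ↦ ?_
    rw [norm_smul, mul_right_comm]
    gcongr
    exact norm_inner_le_norm _ _
  have hasSum_row (n : ℕ) :
      HasSum (fun m ↦ ⟪((W ^ n)†) (u m), f⟫_ℂ • (R ^ n) (v m)) ((R ^ n * K * W ^ n) f) := by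
    simpa only [ContinuousLinearMap.adjoint_inner_left, map_smul, mul_apply_eq_comp]
      using (R ^ n).hasSum (hKuv ((W ^ n) f))
  have hasSum_rows : HasSum (fun n : ℕ ↦ (R ^ n * K * W ^ n) f) (X f) := by
    have hasSum_op : HasSum (fun n : ℕ ↦ R ^ n * K * W ^ n) X := hasSum_pow_mul_mul_pow hRW hX
    simpa only [ContinuousLinearMap.apply_apply]
      using (ContinuousLinearMap.apply ℂ H f).hasSum hasSum_op
  exact (summable_apply.hasSum.prod_fiberwise hasSum_row).unique hasSum_rows ▸
    summable_apply.hasSum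

lemma of_mul_add_mul {a : ℝ} (ha : 0 < a) {A B X : H →L[ℂ] H}
    (hA : algebraMap ℝ (H →L[ℂ] H) a ≤ A) (hB : 0 ≤ B) (hX : IsTraceClassOp (A * X + X * B)) :
    IsTraceClassOp X := by
  set c : H →L[ℂ] H := algebraMap ℝ (H →L[ℂ] H) ‖B‖
  have ha' : 0 < a + ‖B‖ := by positivity
  have hAc : algebraMap ℝ (H →L[ℂ] H) (a + ‖B‖) ≤ A + c := by
    rw [map_add]; gcongr
  have contraction : ‖(A + c)⁻¹ʳ‖ * ‖c - B‖ < 1 :=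
    calc ‖(A + c)⁻¹ʳ‖ * ‖c - B‖ ≤ (a + ‖B‖)⁻¹ * ‖B‖ := by
          gcongr
          · exact norm_ringInverse_le_inv ha' hAc
          · exact norm_algebraMap_norm_sub_le hB
      _ < 1 := by rw [inv_mul_lt_one₀ ha']; linarith
  refine (hX.mul_left (A + c)⁻¹ʳ).of_eq_add_mul_mul contraction ?_
  have shifted : (A + c) * X = A * X + X * B + X * (c - B) := by
    rw [add_mul, (Algebra.commutes ‖B‖ X : c * X = X * c)]
    noncomm_ring
  rw [mul_assoc, ← mul_add, ← shifted,
    Ring.inverse_mul_cancel_left _ _ (isStrictlyPositive_of_algebraMap_le ha' hAc).isUnit]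

end IsTraceClassOp

end TraceClass

lemma algebraMap_le_of_ae_eq_mul {α : Type*} [MeasurableSpace α] {μ : Measure α} {φ : α → ℝ}
    {a : ℝ} (hφ : ∀ᵐ s ∂μ, a ≤ φ s) {M : Lp ℂ 2 μ →L[ℂ] Lp ℂ 2 μ}
    (hM : ∀ f : Lp ℂ 2 μ, ∀ᵐ s ∂μ, (M f : α → ℂ) s = (φ s : ℂ) * (f : α → ℂ) s) :
    algebraMap ℝ (Lp ℂ 2 μ →L[ℂ] Lp ℂ 2 μ) a ≤ M := by
  rw [ContinuousLinearMap.le_def, ContinuousLinearMap.isPositive_iff_complex]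
  intro f
  set D := M - algebraMap ℝ (Lp ℂ 2 μ →L[ℂ] Lp ℂ 2 μ) a with hD
  have hDf : (D f : α → ℂ) =ᵐ[μ] fun s ↦ ((φ s - a : ℝ) : ℂ) * (f : α → ℂ) s := by
    have hDf_eq : D f = M f - a • f := by simp [hD, Algebra.algebraMap_eq_smul_one]
    filter_upwards [hM f, Lp.coeFn_sub (M f) (a • f), Lp.coeFn_smul a f] with s hMs hsub hsmul
    rw [hDf_eq, hsub, Pi.sub_apply, hMs, hsmul, Pi.smul_apply, Complex.real_smul,
      Complex.ofReal_sub, sub_mul]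
  have inner_eq : ⟪D f, f⟫_ℂ = ((∫ s, (φ s - a) * ‖(f : α → ℂ) s‖ ^ 2 ∂μ : ℝ) : ℂ) := by
    rw [L2.inner_def, ← integral_complex_ofReal]
    refine integral_congr_ae (hDf.mono fun s hs ↦ ?_)
    simp only [hs]
    rw [RCLike.inner_apply, map_mul, Complex.conj_ofReal, mul_left_comm, Complex.mul_conj']
    push_cast
    rfl
  have integral_nonneg : 0 ≤ ∫ s, (φ s - a) * ‖(f : α → ℂ) s‖ ^ 2 ∂μ :=
    integral_nonneg_of_ae (hφ.mono fun s hs ↦ mul_nonneg (sub_nonneg.2 hs) (sq_nonneg _))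
  rw [inner_eq]
  exact ⟨by simp, integral_nonneg⟩

theorem one_sub_Sigma0_traceClass_of_support_away_from_zero_general
    {H : Type*} [NormedAddCommGroup H] [InnerProductSpace ℂ H] [CompleteSpace H]
    {a : ℝ} (ha : 0 < a) {M Mt T : H →L[ℂ] H} (hM : algebraMap ℝ (H →L[ℂ] H) a ≤ M)
    (hMt : 0 ≤ Mt) (hsq : IsTraceClassOp (M * M - Mt * Mt)) (hT : T * M = Mt) :
    IsTraceClassOp (1 - T) := by
  have sylvester : M * (M - Mt) + (M - Mt) * Mt = M * M - Mt * Mt := by noncomm_ring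
  have hD : IsTraceClassOp (M - Mt) := .of_mul_add_mul ha hM hMt (sylvester ▸ hsq)
  have hM_unit : IsUnit M := (isStrictlyPositive_of_algebraMap_le ha hM).isUnit
  have hfactor : 1 - T = (M - Mt) * M⁻¹ʳ := by
    rw [← hT, sub_mul, Ring.mul_inverse_cancel _ hM_unit, Ring.mul_inverse_cancel_right _ _ hM_unit]
  exact hfactor ▸ hD.mul_right M⁻¹ʳ

/-- **If `supp ρ` is separated away from zero then `I − Σ₀` is trace class.** In the model
`L²(ρ)`, if additionally the support of `ρ` is contained in `[a, b]` with `0 < a ≤ b`,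
then the unique contraction `T` with `T∘M = M̃` satisfies `I − T ∈ 𝐒₁`. -/
theorem one_sub_Sigma0_traceClass_of_support_away_from_zero
    (ρ : Measure ℝ) [IsFiniteMeasure ρ]
    (hcarr : ρ {s : ℝ | s ≤ 0} = 0)
    (hbddsupp : ∃ b : ℝ, ρ {s : ℝ | b < s} = 0)
    (hnorm : ∫⁻ s, ENNReal.ofReal (s⁻¹ ^ 2) ∂ρ ≤ 1)
    (a b : ℝ) (ha : 0 < a) (hab : a ≤ b)
    (hsupp : ρ (Set.Icc a b)ᶜ = 0)
    (one : Lp ℂ 2 ρ)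
    (hone : ∀ᵐ s ∂ρ, (one : ℝ → ℂ) s = 1)
    (M Mt : Lp ℂ 2 ρ →L[ℂ] Lp ℂ 2 ρ)
    (hM : ∀ f : Lp ℂ 2 ρ, ∀ᵐ s ∂ρ, (M f : ℝ → ℂ) s = (s : ℂ) * (f : ℝ → ℂ) s)
    (hMt_pos : Mt.IsPositive)
    (hMt_sq : ∀ f, Mt (Mt f) = M (M f) - ⟪one, f⟫_ℂ • one)
    (T : Lp ℂ 2 ρ →L[ℂ] Lp ℂ 2 ρ) (hT : T.comp M = Mt) :
    IsTraceClassOp (1 - T) := by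
  have hM_ge : algebraMap ℝ _ a ≤ M := by
    refine algebraMap_le_of_ae_eq_mul (φ := id) ?_ hM
    filter_upwards [mem_ae_iff.2 hsupp] with s hs using hs.1
  have hsq : M * M - Mt * Mt = rankOne ℂ one one := by
    ext1 f
    simp [hMt_sq]
  exact one_sub_Sigma0_traceClass_of_support_away_from_zero_general ha hM_ge
    (Mt.nonneg_iff_isPositive.2 hMt_pos) (hsq ▸ isTraceClassOp_rankOne one one) hT
end

section
/- Fix an integer N ≥ 1 and let Γ be the Hankel operator on ℓ²(ℕ, ℂ) whose matrix entries are γ_{j+k}, where γ_{N−1} = γ_N = 1 and γ_m = 0 for all other m (so Γ has finite rank and symbol u := Γe₀ = e_{N−1} + e_N). Let H := Γ∘C be the associated anti-linear Hankel operator. Then the N+1 vectors (H²)ᵏ u, k = 0, 1, …, N, are linearly independent. (Consequently u is a cyclic vector for the restriction of H² to the (N+1)-dimensional range of H, i.e. this Hankel operator has simple spectrum in the sense of the paper.) -/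
open scoped ComplexConjugate InnerProductSpace

/-!
Up to reversing the order of the basis, the matrix of `H` on `e₀, …, e_N` is bidiagonal with nonzero
diagonal. Hence `H²` is tridiagonal there with nonzero off-diagonal entries, so `e₀, …, e_N` lie in
the span of the vectors `(H²)ᵏ e₀`, `k ≤ N`. They also lie in the span of their own images under
`H`, hence in the span of the `N + 1` vectors `H (H²)ᵏ e₀ = (H²)ᵏ u`, which are therefore
independent by counting dimensions.
-/

open Set Submodule

theorem mem_span_iterate_of_mem_span_insert {R M : Type*} [Semiring R] [AddCommMonoid M]
    [Module R M] {τ : R →+* R} (T : M →ₛₗ[τ] M) {e : ℕ → M} {N : ℕ}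
    (he : ∀ j < N, e (j + 1) ∈ span R (insert (T (e j)) (e '' Iic j))) {k : ℕ} (hk : k ≤ N) :
    e k ∈ span R ((fun i ↦ T^[i] (e 0)) '' Iic k) := by
  induction k using Nat.strong_induction_on with
  | _ k ih =>
  obtain _ | j := k
  · exact subset_span ⟨0, self_mem_Iic, rfl⟩
  refine span_le.2 (insert_subset ?_ ?_) (he j hk)
  · refine span_mono ?_ (image_span_subset_span T _ ⟨_, ih j j.lt_succ_self (by lia), rfl⟩)
    rintro _ ⟨_, ⟨i, hi, rfl⟩, rfl⟩
    exact ⟨i + 1, Nat.succ_le_succ hi, Function.iterate_succ_apply' T i (e 0)⟩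
  · rintro _ ⟨i, hi, rfl⟩
    have hij : i < j + 1 := Nat.lt_succ_of_le hi
    exact span_mono (image_mono (Iic_subset_Iic.2 hij.le)) (ih i hij (by lia))

theorem linearIndependent_of_mem_span_range {K M ι : Type*} [DivisionRing K] [AddCommGroup M]
    [Module K M] [Finite ι] {v w : ι → M} (hv : LinearIndependent K v)
    (hvw : ∀ i, v i ∈ span K (range w)) : LinearIndependent K w := by
  have := Fintype.ofFinite ι
  rw [linearIndependent_iff_card_le_finrank_span, ← finrank_span_eq_card hv]
  have : FiniteDimensional K (span K (range w)) := .span_of_finite K (finite_range w)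
  exact finrank_mono (span_le.2 (range_subset_iff.2 hvw))

/-- The semilinear map `H` acts on `e 0, …, e N` as a Hankel matrix `γ_{j+k}` whose only nonzero
entries are `γ_{N-1} = a` and `γ_N = b`. The indices `N - 1 - j` are encoded additively, to avoid
truncated subtraction. -/
structure IsTwoTermHankel {R M : Type*} [Semiring R] [AddCommMonoid M] [Module R M]
    {σ : R →+* R} (H : M →ₛₗ[σ] M) (e : ℕ → M) (N : ℕ) (a b : R) : Prop where
  apply_of_add_add_one : ∀ {j k : ℕ}, j + k + 1 = N → H (e j) = a • e k + b • e (k + 1)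
  apply_last : H (e N) = b • e 0

namespace IsTwoTermHankel

theorem apply_mem_span_Iic {R M : Type*} [Semiring R] [AddCommMonoid M] [Module R M]
    {σ : R →+* R} {H : M →ₛₗ[σ] M} {e : ℕ → M} {N : ℕ} {a b : R} (hH : IsTwoTermHankel H e N a b)
    {m j : ℕ} (hmj : m + j = N) : H (e m) ∈ span R (e '' Iic j) := by
  have mem {i : ℕ} (hi : i ≤ j) : e i ∈ span R (e '' Iic j) := subset_span ⟨i, hi, rfl⟩
  obtain _ | i := j
  · obtain rfl : m = N := hmj
    exact hH.apply_last ▸ smul_mem _ b (mem le_rfl)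
  · exact hH.apply_of_add_add_one hmj ▸
      add_mem (smul_mem _ a (mem i.le_succ)) (smul_mem _ b (mem le_rfl))

variable {K M : Type*} [DivisionRing K] [AddCommGroup M] [Module K M] {σ : K →+* K}
  {H : M →ₛₗ[σ] M} {e : ℕ → M} {N : ℕ} {a b : K}

theorem mem_span_insert_apply_apply (hH : IsTwoTermHankel H e N a b) (ha : a ≠ 0) (hb : b ≠ 0)
    {j : ℕ} (hj : j < N) : e (j + 1) ∈ span K (insert (H (H (e j))) (e '' Iic j)) := by
  obtain ⟨k, rfl⟩ := Nat.exists_eq_add_of_lt hj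
  have hHH : H (H (e j)) = (σ a * a) • e j + (σ a * b) • e (j + 1) + σ b • H (e (k + 1)) := by
    rw [hH.apply_of_add_add_one rfl, map_add, map_smulₛₗ, map_smulₛₗ,
      hH.apply_of_add_add_one (j := k) (k := j) (by lia), smul_add, smul_smul, smul_smul]
  have hσab : σ a * b ≠ 0 := mul_ne_zero ((map_ne_zero σ).2 ha) hb
  have hsub : span K (e '' Iic j) ≤ span K (insert (H (H (e j))) (e '' Iic j)) :=
    span_mono (subset_insert _ _)
  rw [← smul_mem_iff _ hσab,
    show (σ a * b) • e (j + 1) = H (H (e j)) - (σ a * a) • e j - σ b • H (e (k + 1)) by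
      rw [hHH]; abel]
  exact sub_mem (sub_mem (subset_span (mem_insert _ _))
    (smul_mem _ _ (hsub (subset_span ⟨j, self_mem_Iic, rfl⟩))))
    (smul_mem _ _ (hsub (hH.apply_mem_span_Iic (by lia))))

theorem mem_span_image_apply (hH : IsTwoTermHankel H e N a b) (hb : b ≠ 0) {k : ℕ} (hk : k ≤ N) :
    e k ∈ span K (H '' (e '' Iic N)) := by
  have mem {i : ℕ} (hi : i ≤ N) : H (e i) ∈ span K (H '' (e '' Iic N)) :=
    subset_span ⟨e i, ⟨i, hi, rfl⟩, rfl⟩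
  induction k with
  | zero =>
    rw [← smul_mem_iff _ hb, ← hH.apply_last]
    exact mem le_rfl
  | succ k ih =>
    obtain ⟨j, rfl⟩ := Nat.exists_eq_add_of_le' hk
    rw [← smul_mem_iff _ hb, ← Submodule.add_mem_iff_right _ (smul_mem _ a (ih (by lia))),
      ← hH.apply_of_add_add_one (j := j) rfl]
    exact mem (by lia)

theorem mem_span_iterate (hH : IsTwoTermHankel H e N a b) (ha : a ≠ 0) (hb : b ≠ 0) {k : ℕ}
    (hk : k ≤ N) :
    e k ∈ span K (range fun i : Fin (N + 1) ↦ (fun x ↦ H (H x))^[(i : ℕ)] (H (e 0))) := by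
  have : RingHomCompTriple σ σ (σ.comp σ) := ⟨rfl⟩
  have he_iterate {j : ℕ} (hj : j ≤ N) :
      e j ∈ span K ((fun i ↦ (fun x ↦ H (H x))^[i] (e 0)) '' Iic N) :=
    span_mono (image_mono (Iic_subset_Iic.2 hj)) <| mem_span_iterate_of_mem_span_insert (H.comp H)
      (fun _ hi ↦ hH.mem_span_insert_apply_apply ha hb hi) hj
  have hH_iterate (i : ℕ) :
      H ((fun x ↦ H (H x))^[i] (e 0)) = (fun x ↦ H (H x))^[i] (H (e 0)) :=
    (Function.Commute.iterate_right (f := H) (g := fun x ↦ H (H x)) (fun _ ↦ rfl) i) (e 0)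
  refine span_le.2 ?_ (hH.mem_span_image_apply hb hk)
  rintro _ ⟨_, ⟨j, hj, rfl⟩, rfl⟩
  refine span_mono ?_ (image_span_subset_span H _ ⟨_, he_iterate hj, rfl⟩)
  rintro _ ⟨_, ⟨i, hi, rfl⟩, rfl⟩
  exact ⟨⟨i, Nat.lt_succ_of_le hi⟩, (hH_iterate i).symm⟩

end IsTwoTermHankel

theorem linearIndependent_of_lp_apply_eq_ite {𝕜 ι : Type*} [NormedCommRing 𝕜] [DecidableEq ι]
    {p : ENNReal} {e : ι → lp (fun _ : ι ↦ 𝕜) p} (he : ∀ n m, e n m = if n = m then 1 else 0) :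
    LinearIndependent 𝕜 e :=
  .of_pairwise_dual_eq_zero_one e (fun i ↦ lp.evalₗ (𝕜 := 𝕜) _ p i)
    (fun i j hij ↦ by simp [he, hij.symm]) (fun i ↦ by simp [he])

theorem isTwoTermHankel_comp_star {𝕜 : Type*} [NormedCommRing 𝕜] [StarRing 𝕜]
    [NormedStarGroup 𝕜] {p : ENNReal} {e : ℕ → lp (fun _ : ℕ ↦ 𝕜) p}
    (he : ∀ n m, e n m = if n = m then 1 else 0)
    {Γ : lp (fun _ : ℕ ↦ 𝕜) p →ₗ[𝕜] lp (fun _ : ℕ ↦ 𝕜) p} {N : ℕ} {a b : 𝕜}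
    (hΓ : ∀ j k, Γ (e j) k = if j + k + 1 = N then a else if j + k = N then b else 0) :
    IsTwoTermHankel (Γ ∘ₛₗ (starLinearEquiv 𝕜).toLinearMap) e N a b := by
  have star_e (j : ℕ) : star (e j) = e j := by
    ext n
    rw [lp.star_apply, he]
    split_ifs <;> simp
  constructor
  · intro j k hjk
    ext n
    change Γ (star (e j)) n = a * e k n + b * e (k + 1) n
    rw [star_e, hΓ, he, he]
    grind
  · ext n
    change Γ (star (e N)) n = b * e 0 n
    rw [star_e, hΓ, he]
    grind

theorem explicit_hankel_simple_spectrum_general {K M : Type*} [DivisionRing K] [AddCommGroup M]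
    [Module K M] {σ : K →+* K} {H : M →ₛₗ[σ] M} {e : ℕ → M} {N : ℕ} {a b : K}
    (hH : IsTwoTermHankel H e N a b) (ha : a ≠ 0) (hb : b ≠ 0)
    (he : LinearIndependent K fun i : Fin (N + 1) ↦ e i) :
    LinearIndependent K fun k : Fin (N + 1) ↦ (fun x ↦ H (H x))^[(k : ℕ)] (H (e 0)) :=
  linearIndependent_of_mem_span_range he fun i ↦ hH.mem_span_iterate ha hb (Nat.le_of_lt_succ i.2)

/-- **An explicit Hankel operator with simple spectrum.** Let `Γ` be the Hankel operator on
`ℓ²(ℕ, ℂ)` with matrix entries `γ_{j+k}` where `γ_{N−1} = γ_N = 1` and all other `γ_m = 0`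
(so its symbol is `u = e_{N−1} + e_N`), and let `H = Γ∘C` be the associated anti-linear
Hankel operator. Then the `N+1` vectors `(H²)ᵏ u`, `k = 0, …, N`, are linearly
independent; consequently `u` is cyclic for the restriction of `H²` to the range of `H`. -/
theorem explicit_hankel_simple_spectrum
    (N : ℕ) (hN : 1 ≤ N)
    (e : ℕ → lp (fun _ : ℕ => ℂ) 2)
    (he : ∀ n m : ℕ, e n m = if n = m then 1 else 0)
    (S Sstar Γ : lp (fun _ : ℕ => ℂ) 2 →L[ℂ] lp (fun _ : ℕ => ℂ) 2)
    (hS0 : ∀ x : lp (fun _ : ℕ => ℂ) 2, S x 0 = 0)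
    (hSsucc : ∀ (x : lp (fun _ : ℕ => ℂ) 2) (n : ℕ), S x (n + 1) = x n)
    (hSstar : ∀ (x : lp (fun _ : ℕ => ℂ) 2) (n : ℕ), Sstar x n = x (n + 1))
    (hHankel : ∀ x : lp (fun _ : ℕ => ℂ) 2, Γ (S x) = Sstar (Γ x))
    (hmat : ∀ j k : ℕ, Γ (e j) k = if j + k + 1 = N ∨ j + k = N then 1 else 0)
    (C : lp (fun _ : ℕ => ℂ) 2 → lp (fun _ : ℕ => ℂ) 2)
    (hC : ∀ (x : lp (fun _ : ℕ => ℂ) 2) (n : ℕ), C x n = conj (x n))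
    (H : lp (fun _ : ℕ => ℂ) 2 → lp (fun _ : ℕ => ℂ) 2)
    (hH : ∀ x, H x = Γ (C x))
    (u : lp (fun _ : ℕ => ℂ) 2) (hu : u = H (e 0)) :
    LinearIndependent ℂ (fun k : Fin (N + 1) => (fun x => H (H x))^[(k : ℕ)] u) := by
  obtain rfl : C = star := funext fun x ↦ lp.ext (funext (hC x))
  obtain rfl : H = Γ.toLinearMap ∘ₛₗ (starLinearEquiv ℂ).toLinearMap := funext hH
  rw [hu]
  exact explicit_hankel_simple_spectrum_general
    (isTwoTermHankel_comp_star he fun j k ↦ (hmat j k).trans (ite_or ..)) one_ne_zero one_ne_zero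
    ((linearIndependent_of_lp_apply_eq_ite he).comp _ Fin.val_injective)
end
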